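/- Let R be the t×n Hankel determinantal ring over a field F of characteristic p > 0, with 2 ≤ t ≤ n, and m_R its homogeneous maximal ideal. Then the F-pure threshold of m_R in R equals 2(t-1)/(n-t+2); moreover, for each q = p^e, ν_e(m_R) = (t-1)·⌊2(q-1)/(n-t+2)⌋. -/

import Mathlib

set_option synthInstance.maxHeartbeats 1000000
set_option maxHeartbeats 1000000

open MvPolynomial Matrix Filter

/-- The `q`-th Frobenius power of an ideal: the ideal generated by `q`-th powers of its
elements. -/
def frobeniusPower {R : Type*} [CommRing R] (q : ℕ) (I : Ideal R) : Ideal R :=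
  Ideal.span ((fun x => x ^ q) '' (I : Set R))

/-!
Put `r = t - 1` and `N = n + r`. A sequence of length `N` has a Hankel matrix of rank at most `r`
generically when it satisfies a linear recurrence `x (j + r) = ∑ i < r, a i * x (j + i)`. Hence the
Hankel determinantal ring `R` is the subring, generated by the first `N` terms of the generic
solution, of the polynomial ring `S` in the coefficients `a i` and the initial values `x i` with
`i < r`. Writing `x j = ∑ k, c k * s k ^ j` embeds `S` into the polynomial ring in the roots `s k`
and the amplitudes `c k`, and `R` becomes the set of all elements of `S` of degree at most `0`,
where the last root has weight `1`, the last amplitude has weight `1 - N` and the other variables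
have weight `0`. The determinant `D` of `(x (i + j))` with `i, j < r` has degree `-(n - t + 2)`, and
every element of `S` of negative degree is divisible by `D`.

Let `q = p ^ e`. By Fedder's criterion, the ideal `I^[q] : I` represents the `q⁻¹`-linear maps
`R → R`. In terms of the trace `Tr` of the free extension of `S` over its subring of polynomials in
the `q`-th powers of the variables, the degree conditions show that, for `k` the integral part of
`2 * (q - 1) / (n - t + 2)`, each of them has the form `z ↦ Tr (D ^ (q - 1 - k) * G * z)` with
`G ∈ S`. Since `D` has degree `r` in the initial values, such a map sends `m ^ (r * k + 1)` into the
elements without constant term. Conversely, for a suitable `b` the choice `G = a 0 ^ b` is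
admissible and `D ^ k * a 0 ^ (q - 1 - b)` lies in `m ^ (r * k)`, and the coefficient of
`(∏ i, a i * x i) ^ (q - 1)` in `(a 0 * D) ^ (q - 1)` is a unit.
-/

namespace Hankel

/-! ### The filtration of a polynomial ring by weighted degree -/

section WeightedDegree

variable {σ τ R : Type*} [CommRing R]

/-- The polynomials of weighted degree at most `j`, the variable `X i` having the integer (possibly
negative) weight `w i`. That a polynomial has degree at least `j` is expressed by its not lying in
`weightedDegreeLE w (j - 1)`. -/
noncomputable def weightedDegreeLE (w : σ → ℤ) (j : ℤ) : Submodule R (MvPolynomial σ R) :=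
  restrictSupport R {m | Finsupp.weight w m ≤ j}

variable {w : σ → ℤ} {i j k : ℤ} {f g : MvPolynomial σ R}

lemma weight_eq_sum [Fintype σ] (w : σ → ℤ) (m : σ →₀ ℕ) :
    Finsupp.weight w m = ∑ i, (m i : ℤ) * w i := by
  simp [Finsupp.weight_apply, Finsupp.sum_fintype]

lemma weight_nonneg (hw : ∀ i, 0 ≤ w i) (m : σ →₀ ℕ) : 0 ≤ Finsupp.weight w m := by
  rw [Finsupp.weight_apply]
  exact Finset.sum_nonneg fun i _ => nsmul_nonneg (hw i) _

lemma mem_weightedDegreeLE :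
    f ∈ weightedDegreeLE w j ↔ ∀ m, coeff m f ≠ 0 → Finsupp.weight w m ≤ j := by
  simp [weightedDegreeLE, mem_restrictSupport_iff, Set.subset_def]

lemma weightedDegreeLE_mono (h : i ≤ j) :
    weightedDegreeLE (R := R) w i ≤ weightedDegreeLE w j :=
  restrictSupport_mono R fun _ hm => le_trans hm h

lemma mul_mem_weightedDegreeLE (hf : f ∈ weightedDegreeLE w i) (hg : g ∈ weightedDegreeLE w j)
    (h : i + j ≤ k) : f * g ∈ weightedDegreeLE w k := by
  classical
  refine mem_weightedDegreeLE.mpr fun m hm => ?_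
  obtain ⟨a, ha, b, hb, rfl⟩ := Finset.mem_add.mp (support_mul f g (mem_support_iff.mpr hm))
  rw [map_add]
  exact (add_le_add (hf ha) (hg hb)).trans h

lemma C_mem_weightedDegreeLE (hj : 0 ≤ j) (c : R) :
    (C c : MvPolynomial σ R) ∈ weightedDegreeLE w j :=
  (monomial_mem_restrictSupport R).mpr (Or.inl (by simpa using hj))

lemma one_mem_weightedDegreeLE (hj : 0 ≤ j) : (1 : MvPolynomial σ R) ∈ weightedDegreeLE w j :=
  C_mem_weightedDegreeLE hj 1

lemma X_mem_weightedDegreeLE {s : σ} (hj : w s ≤ j) :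
    (X s : MvPolynomial σ R) ∈ weightedDegreeLE w j :=
  (monomial_mem_restrictSupport R).mpr (Or.inl (by simpa [Finsupp.weight_single] using hj))

lemma neg_one_pow_mul_mem_weightedDegreeLE_iff (k : ℕ) :
    (-1) ^ k * f ∈ weightedDegreeLE w j ↔ f ∈ weightedDegreeLE w j := by
  rcases neg_one_pow_eq_or (MvPolynomial σ R) k with h | h <;> simp [h]

lemma monomial_mem_weightedDegreeLE (w : σ → ℤ) (m : σ →₀ ℕ) (c : R) :
    monomial m c ∈ weightedDegreeLE w (Finsupp.weight w m) := by
  classical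
  refine mem_weightedDegreeLE.2 fun m' hm' => ?_
  rw [coeff_monomial] at hm'
  obtain rfl : m = m' := by_contra fun h => hm' (if_neg h)
  exact le_rfl

lemma pow_mem_weightedDegreeLE (hf : f ∈ weightedDegreeLE w j) (k : ℕ) :
    f ^ k ∈ weightedDegreeLE w (k * j) := by
  induction k with
  | zero => simpa using one_mem_weightedDegreeLE le_rfl
  | succ k ih =>
    rw [pow_succ]
    exact mul_mem_weightedDegreeLE ih hf (by push_cast; linarith)

lemma prod_mem_weightedDegreeLE {ι : Type*} (s : Finset ι) {f : ι → MvPolynomial σ R} {j : ι → ℤ}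
    (hf : ∀ i ∈ s, f i ∈ weightedDegreeLE w (j i)) :
    ∏ i ∈ s, f i ∈ weightedDegreeLE w (∑ i ∈ s, j i) := by
  classical
  induction s using Finset.induction_on with
  | empty => simpa using one_mem_weightedDegreeLE le_rfl
  | insert a s ha ih =>
    rw [Finset.sum_insert ha, Finset.prod_insert ha]
    exact mul_mem_weightedDegreeLE (hf a (by simp)) (ih fun i hi => hf i (by simp [hi])) le_rfl

lemma det_mem_weightedDegreeLE {r : ℕ} {M : Matrix (Fin r) (Fin r) (MvPolynomial σ R)}
    (hM : ∀ a b, M a b ∈ weightedDegreeLE w j) : M.det ∈ weightedDegreeLE w (r * j) := by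
  rw [Matrix.det_apply]
  refine Submodule.sum_mem _ fun s _ => ?_
  rw [Units.smul_def]
  have := prod_mem_weightedDegreeLE Finset.univ (f := fun i => M (s i) i) fun i _ => hM (s i) i
  exact zsmul_mem (by simpa using this) _

lemma weight_eq_sum_support (w : σ → ℤ) (m : σ →₀ ℕ) :
    Finsupp.weight w m = ∑ i ∈ m.support, (m i : ℤ) * w i := by
  simp [Finsupp.weight_apply, Finsupp.sum]

lemma aeval_mem_weightedDegreeLE {v : τ → ℤ} {g : σ → MvPolynomial τ R}
    (hg : ∀ i, g i ∈ weightedDegreeLE v (w i)) (hf : f ∈ weightedDegreeLE w j) :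
    aeval g f ∈ weightedDegreeLE v j := by
  rw [f.as_sum, map_sum]
  refine Submodule.sum_mem _ fun m hm => ?_
  rw [aeval_monomial, ← Algebra.smul_def]
  refine Submodule.smul_mem _ _ (weightedDegreeLE_mono (hf hm) ?_)
  rw [weight_eq_sum_support]
  exact prod_mem_weightedDegreeLE _ fun i _ => pow_mem_weightedDegreeLE (hg i) _

lemma exists_mem_weightedDegreeLE_natCast (w : σ → ℤ) (f : MvPolynomial σ R) :
    ∃ j : ℕ, f ∈ weightedDegreeLE w j := by
  refine ⟨∑ m ∈ f.support, (Finsupp.weight w m).toNat, mem_weightedDegreeLE.mpr fun m hm => ?_⟩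
  have := Finset.single_le_sum (f := fun m => (Finsupp.weight w m).toNat)
    (fun _ _ => Nat.zero_le _) (mem_support_iff.mpr hm)
  omega

lemma exists_mem_weightedDegreeLE_notMem_pred (w : σ → ℤ) (hf : f ≠ 0) :
    ∃ j : ℤ, f ∈ weightedDegreeLE w j ∧ f ∉ weightedDegreeLE w (j - 1) := by
  obtain ⟨m, hm, hmax⟩ := Finset.exists_max_image f.support (Finsupp.weight w)
    (Finset.nonempty_iff_ne_empty.mpr (support_eq_empty.not.mpr hf))
  refine ⟨Finsupp.weight w m, fun m' h' => hmax m' h', fun h => ?_⟩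
  have := mem_weightedDegreeLE.mp h m (mem_support_iff.mp hm)
  omega

lemma sub_weightedHomogeneousComponent_mem_weightedDegreeLE (hf : f ∈ weightedDegreeLE w j) :
    f - weightedHomogeneousComponent w j f ∈ weightedDegreeLE w (j - 1) := by
  classical
  refine mem_weightedDegreeLE.mpr fun m hm => ?_
  rw [coeff_sub, coeff_weightedHomogeneousComponent] at hm
  split_ifs at hm with h
  · exact absurd (sub_self _) hm
  · have := mem_weightedDegreeLE.mp hf m (by simpa using hm)
    omega

lemma weightedHomogeneousComponent_eq_zero_of_mem_weightedDegreeLE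
    (hf : f ∈ weightedDegreeLE w i) (hij : i < j) : weightedHomogeneousComponent w j f = 0 := by
  refine weightedHomogeneousComponent_eq_zero' _ _ fun m hm h => ?_
  have := hf hm
  simp only [Set.mem_ofPred_eq] at this
  omega

lemma weightedHomogeneousComponent_mul (hf : f ∈ weightedDegreeLE w i)
    (hg : g ∈ weightedDegreeLE w j) : weightedHomogeneousComponent w (i + j) (f * g) =
      weightedHomogeneousComponent w i f * weightedHomogeneousComponent w j g := by
  set f₀ := weightedHomogeneousComponent w i f
  set g₀ := weightedHomogeneousComponent w j g
  have hf₀ : IsWeightedHomogeneous w f₀ i := weightedHomogeneousComponent_isWeightedHomogeneous _ _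
  have hg₀ : IsWeightedHomogeneous w g₀ j := weightedHomogeneousComponent_isWeightedHomogeneous _ _
  have hlow : f * (g - g₀) + (f - f₀) * g₀ ∈ weightedDegreeLE w (i + j - 1) :=
    add_mem
      (mul_mem_weightedDegreeLE hf (sub_weightedHomogeneousComponent_mem_weightedDegreeLE hg)
        (by omega))
      (mul_mem_weightedDegreeLE (sub_weightedHomogeneousComponent_mem_weightedDegreeLE hf)
        (mem_weightedDegreeLE.mpr fun m hm => (hg₀ hm).le) (by omega))
  calc weightedHomogeneousComponent w (i + j) (f * g)
      = weightedHomogeneousComponent w (i + j) (f₀ * g₀) +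
          weightedHomogeneousComponent w (i + j) (f * (g - g₀) + (f - f₀) * g₀) := by
        rw [← map_add]; congr 1; ring
    _ = f₀ * g₀ := by
        rw [weightedHomogeneousComponent_eq_zero_of_mem_weightedDegreeLE hlow (by omega), add_zero,
          (hf₀.mul hg₀).weightedHomogeneousComponent_same]

section IsDomain

variable [IsDomain R]

lemma mul_notMem_weightedDegreeLE (hf : f ∉ weightedDegreeLE w (i - 1))
    (hg : g ∉ weightedDegreeLE w (j - 1)) : f * g ∉ weightedDegreeLE w (i + j - 1) := by
  obtain ⟨i', hfi, hfi'⟩ := exists_mem_weightedDegreeLE_notMem_pred w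
    (f := f) (by rintro rfl; exact hf (zero_mem _))
  obtain ⟨j', hgj, hgj'⟩ := exists_mem_weightedDegreeLE_notMem_pred w
    (f := g) (by rintro rfl; exact hg (zero_mem _))
  have hi : i ≤ i' := by
    by_contra h
    exact hf (weightedDegreeLE_mono (by omega) hfi)
  have hj : j ≤ j' := by
    by_contra h
    exact hg (weightedDegreeLE_mono (by omega) hgj)
  intro h
  have hprod := weightedHomogeneousComponent_mul hfi hgj
  rw [weightedHomogeneousComponent_eq_zero_of_mem_weightedDegreeLE h (by omega)] at hprod
  rcases mul_eq_zero.mp hprod.symm with h0 | h0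
  · exact hfi' (by simpa [h0] using sub_weightedHomogeneousComponent_mem_weightedDegreeLE hfi)
  · exact hgj' (by simpa [h0] using sub_weightedHomogeneousComponent_mem_weightedDegreeLE hgj)

lemma mem_weightedDegreeLE_of_mul_mem (hf : f ∉ weightedDegreeLE w (i - 1))
    (h : f * g ∈ weightedDegreeLE w (i + j)) : g ∈ weightedDegreeLE w j := by
  by_contra hg
  exact mul_notMem_weightedDegreeLE hf (j := j + 1) (by simpa using hg)
    (by convert h using 2; ring)

lemma one_notMem_weightedDegreeLE : (1 : MvPolynomial σ R) ∉ weightedDegreeLE w (0 - 1) := by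
  intro h
  simpa using mem_weightedDegreeLE.mp h 0 (by simp)

lemma pow_notMem_weightedDegreeLE (hf : f ∉ weightedDegreeLE w (i - 1)) (k : ℕ) :
    f ^ k ∉ weightedDegreeLE w (k * i - 1) := by
  induction k with
  | zero => simpa using one_notMem_weightedDegreeLE
  | succ k ih =>
    rw [pow_succ, show ((k + 1 : ℕ) : ℤ) * i - 1 = k * i + i - 1 by push_cast; ring]
    exact mul_notMem_weightedDegreeLE ih hf

lemma prod_notMem_weightedDegreeLE {ι : Type*} (s : Finset ι) {f : ι → MvPolynomial σ R}
    {j : ι → ℤ} (hf : ∀ i ∈ s, f i ∉ weightedDegreeLE w (j i - 1)) :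
    ∏ i ∈ s, f i ∉ weightedDegreeLE w (∑ i ∈ s, j i - 1) := by
  classical
  induction s using Finset.induction_on with
  | empty => simpa using one_notMem_weightedDegreeLE
  | insert a s ha ih =>
    rw [Finset.sum_insert ha, Finset.prod_insert ha]
    exact mul_notMem_weightedDegreeLE (hf a (by simp)) (ih fun i hi => hf i (by simp [hi]))

end IsDomain

section Nontrivial

variable [Nontrivial R]

lemma X_notMem_weightedDegreeLE (s : σ) :
    (X s : MvPolynomial σ R) ∉ weightedDegreeLE w (w s - 1) := by
  intro h
  simpa [Finsupp.weight_single] using mem_weightedDegreeLE.mp h (Finsupp.single s 1) (by simp)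

lemma X_sub_X_notMem_weightedDegreeLE {s t : σ} (hst : s ≠ t) :
    (X s - X t : MvPolynomial σ R) ∉ weightedDegreeLE w (w s - 1) := by
  classical
  intro h
  have hts : ¬Finsupp.single t 1 = Finsupp.single s 1 :=
    (Finsupp.single_left_injective one_ne_zero).ne hst.symm
  have hcoeff : coeff (Finsupp.single s 1) (X s - X t : MvPolynomial σ R) = 1 := by
    rw [coeff_sub, coeff_X_same, coeff_X, if_neg hts, sub_zero]
  simpa [Finsupp.weight_single] using
    mem_weightedDegreeLE.mp h (Finsupp.single s 1) (hcoeff ▸ one_ne_zero)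

end Nontrivial

end WeightedDegree

/-! ### Linear recurrences and Hankel minors -/

section LinearRecurrence

variable {B : Type*} [CommRing B] {r : ℕ}

lemma det_smul_eq_adjugate_mulVec {n : Type*} [Fintype n] [DecidableEq n] (M : Matrix n n B)
    (v : n → B) : M.det • v = M.adjugate *ᵥ (M *ᵥ v) := by
  rw [mulVec_mulVec, adjugate_mul, smul_mulVec, one_mulVec]

/-- The companion matrix of the linear recurrence `x (j + r) = ∑ i, a i * x (j + i)`: it shifts
every window `(x b, …, x (b + r - 1))` of a solution by one step. -/
def companion (a : Fin r → B) : Matrix (Fin r) (Fin r) B :=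
  of fun i j => if (i : ℕ) + 1 < r then (if (j : ℕ) = i + 1 then 1 else 0) else a j

lemma companion_mulVec_apply (a : Fin r → B) {v : ℕ → B} (hv : v r = ∑ i, a i * v i)
    (i : Fin r) : (companion a *ᵥ fun j => v j) i = v (i + 1) := by
  simp only [mulVec, dotProduct, companion, of_apply]
  split_ifs with h
  · rw [Finset.sum_eq_single (⟨i + 1, h⟩ : Fin r)]
    · simp
    · intro j _ hj
      rw [if_neg fun h' => hj (Fin.ext h'), zero_mul]
    · simp
  · rw [← hv]
    congr 1
    omega

lemma companion_mulVec_window {a : Fin r → B} {x : ℕ → B}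
    (hx : (LinearRecurrence.mk r a).IsSolution x) (b : ℕ) (i : Fin r) :
    (companion a *ᵥ fun j => x (j + b)) i = x (i + (b + 1)) := by
  rw [companion_mulVec_apply a (v := fun j => x (j + b))]
  · congr 1
    ring
  · simpa only [add_comm] using hx b

lemma companion_map {B' : Type*} [CommRing B'] (f : B →+* B') (a : Fin r → B) :
    (companion a).map f = companion fun i => f (a i) := by
  ext i j
  simp only [companion, map_apply, of_apply]
  split_ifs <;> simp

lemma charmatrix_companion_mulVec_apply (a : Fin r → B) (v : Fin r → Polynomial B) (i : Fin r) :
    ((companion a).charmatrix *ᵥ v) i =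
      Polynomial.X * v i - (companion (fun i => Polynomial.C (a i)) *ᵥ v) i := by
  rw [charmatrix, RingHom.mapMatrix_apply, companion_map, sub_mulVec, Pi.sub_apply, scalar_apply,
    mulVec_diagonal]

lemma charmatrix_companion_mulVec_pow (a : Fin (r + 1) → B) :
    (companion a).charmatrix *ᵥ (fun i => (Polynomial.X : Polynomial B) ^ (i : ℕ)) =
      Pi.single (Fin.last r) (LinearRecurrence.mk (r + 1) a).charPoly := by
  ext1 i
  rw [charmatrix_companion_mulVec_apply, ← pow_succ']
  by_cases hi : i = Fin.last r
  · subst hi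
    simp [mulVec, dotProduct, companion, LinearRecurrence.charPoly, Polynomial.X_pow_eq_monomial]
  · have h : (i : ℕ) < r := Fin.val_lt_last hi
    rw [Pi.single_eq_of_ne hi, sub_eq_zero, mulVec, dotProduct,
      Finset.sum_eq_single (⟨i + 1, Nat.succ_lt_succ h⟩ : Fin (r + 1))]
    · simp [companion, h]
    · intro j _ hj
      have hj' : (j : ℕ) ≠ i + 1 := fun h' => hj (Fin.ext h')
      simp [companion, h, hj']
    · simp

lemma charpoly_companion (a : Fin (r + 1) → B) :
    (companion a).charpoly = (LinearRecurrence.mk (r + 1) a).charPoly := by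
  have hminor : ((companion a).charmatrix.submatrix (Fin.last r).succAbove
      (Fin.succAbove 0)).det = (-1) ^ r := by
    rw [det_of_isLowerTriangular, Finset.prod_eq_pow_card (b := (-1 : Polynomial B))]
    · simp
    · intro i _
      simp [companion, Fin.ext_iff]
    · intro i j hij
      have hij' : (i : ℕ) < j := (show i < j from hij)
      have h₁ : (i : ℕ) ≠ j + 1 := by omega
      have h₂ : (j : ℕ) ≠ i := by omega
      simp [companion, Fin.ext_iff, h₁, h₂]
  have h := congrFun (det_smul_eq_adjugate_mulVec (companion a).charmatrix
    fun i => (Polynomial.X : Polynomial B) ^ (i : ℕ)) 0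
  rw [charmatrix_companion_mulVec_pow, mulVec_single, Pi.smul_apply, Pi.smul_apply, col_apply,
    adjugate_fin_succ_eq_det_submatrix, hminor] at h
  simpa [charpoly, ← mul_pow] using h

lemma coeff_charPoly (a : Fin r → B) (i : Fin r) :
    (LinearRecurrence.mk r a).charPoly.coeff i = -a i := by
  have hi : r ≠ i := i.2.ne'
  simp [LinearRecurrence.charPoly, Polynomial.coeff_monomial, hi, Fin.val_inj]

lemma det_companion (a : Fin (r + 1) → B) : (companion a).det = (-1) ^ r * a 0 := by
  rw [det_eq_sign_charpoly_coeff, charpoly_companion]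
  have hcoeff : (LinearRecurrence.mk (r + 1) a).charPoly.coeff 0 = -a 0 := by
    simpa using coeff_charPoly a 0
  rw [hcoeff, Fintype.card_fin]
  ring

/-- The maximal minor of the infinite Hankel matrix `(x (i + j))` with rows `0, …, r - 1` and
columns `b 0, …, b (r - 1)`. -/
def seqMinor (x : ℕ → B) (b : Fin r → ℕ) : B :=
  (of fun i j : Fin r => x (i + b j)).det

/-- The minor of the infinite Hankel matrix `(x (i + j))` with rows `0, …, r - 1` and the
consecutive columns `m, …, m + r - 1`. -/
def hankelDet (r : ℕ) (x : ℕ → B) (m : ℕ) : B :=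
  seqMinor x fun j : Fin r => j + m

lemma map_seqMinor {B' : Type*} [CommRing B'] (f : B →+* B') (x : ℕ → B) (b : Fin r → ℕ) :
    f (seqMinor x b) = seqMinor (fun j => f (x j)) b := by
  rw [seqMinor, RingHom.map_det]
  rfl

lemma seqMinor_add_one {a : Fin r → B} {x : ℕ → B} (hx : (LinearRecurrence.mk r a).IsSolution x)
    (b : Fin r → ℕ) : seqMinor x (fun j => b j + 1) = (companion a).det * seqMinor x b := by
  rw [seqMinor, seqMinor, ← det_mul]
  congr 1
  ext i j
  exact (companion_mulVec_window hx (b j) i).symm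

lemma hankelDet_eq {a : Fin (r + 1) → B} {x : ℕ → B}
    (hx : (LinearRecurrence.mk (r + 1) a).IsSolution x) (m : ℕ) :
    hankelDet (r + 1) x m = ((-1) ^ r * a 0) ^ m * hankelDet (r + 1) x 0 := by
  induction m with
  | zero => simp
  | succ m ih =>
    rw [pow_succ', mul_assoc, ← ih, ← det_companion]
    exact seqMinor_add_one hx _

lemma seqMinor_eq_zero {a : Fin r → B} {x : ℕ → B} (hx : (LinearRecurrence.mk r a).IsSolution x)
    (b : Fin (r + 1) → ℕ) : seqMinor x b = 0 := by
  rw [seqMinor, ← det_transpose]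
  set M := (of fun i j : Fin (r + 1) => x (i + b j))ᵀ with hM
  have hker : M *ᵥ (Fin.snoc a (-1) : Fin (r + 1) → B) = 0 := by
    ext j
    simpa [mulVec, dotProduct, Fin.sum_univ_castSucc, hM, add_comm, mul_comm,
      neg_add_eq_zero] using hx (b j)
  simpa [hker] using congrFun (det_smul_eq_adjugate_mulVec M (Fin.snoc a (-1))) (Fin.last r)

end LinearRecurrence

section MinorSpan

variable {A B : Type*} [CommRing A] [CommRing B] [Algebra A B] {r : ℕ}

/-- The span of the maximal minors of the infinite Hankel matrix `(x (i + j))` with `r` rows and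
columns of index at most `m`. -/
def minorSpan (A : Type*) [CommRing A] [Algebra A B] (r : ℕ) (x : ℕ → B) (m : ℕ) :
    Submodule A B :=
  Submodule.span A {y | ∃ b : Fin r → ℕ, (∀ j, b j ≤ m) ∧ y = seqMinor x b}

lemma coeff_det_mem_of_piecewise_det_mem {n : Type*} [Fintype n] [DecidableEq n]
    {y z : Matrix n n B} {V : Submodule A B}
    (hV : ∀ s : Finset n, (of fun i j => if j ∈ s then y i j else z i j).det ∈ V) (l : ℕ) :
    ((of fun i j => Polynomial.X * Polynomial.C (y i j) - Polynomial.C (z i j)).det).coeff l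
      ∈ V := by
  have hexpand : (of fun i j => Polynomial.X * Polynomial.C (y i j) - Polynomial.C (z i j)).det
      = ∑ s : Finset n, Polynomial.X ^ s.card * (-1) ^ sᶜ.card *
        Polynomial.C (of fun i j => if j ∈ s then y i j else z i j).det := by
    rw [← det_transpose]
    refine ((detRowAlternating (R := Polynomial B) (n := n)).toMultilinearMap.map_add_univ
      (fun j i => Polynomial.X * Polynomial.C (y i j))
      (fun j i => -Polynomial.C (z i j))).trans (Finset.sum_congr rfl fun s _ => ?_)
    have hprod : (Polynomial.X : Polynomial B) ^ s.card * (-1) ^ sᶜ.card =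
        ∏ j, if j ∈ s then Polynomial.X else -1 := by
      simp [Finset.prod_ite, Finset.filter_not, Finset.compl_eq_univ_sdiff]
    rw [hprod, RingHom.map_det, ← det_transpose, ← det_mul_column]
    change det _ = det _
    congr 1
    ext1 i j
    simp only [of_apply, Finset.piecewise, RingHom.mapMatrix_apply]
    split_ifs <;> simp [*]
  rw [hexpand, Polynomial.finsetSum_coeff]
  refine V.sum_mem fun s _ => ?_
  have hs : (if l = s.card then (of fun i j => if j ∈ s then y i j else z i j).det else 0) ∈ V := by
    split_ifs
    exacts [hV s, V.zero_mem]
  rcases neg_one_pow_eq_or (Polynomial B) sᶜ.card with h | h <;> simpa [h] using hs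

lemma charPoly_mul_seqMinor {a : Fin (r + 1) → B} {x : ℕ → B}
    (hx : (LinearRecurrence.mk (r + 1) a).IsSolution x) (b : Fin (r + 1) → ℕ) :
    (LinearRecurrence.mk (r + 1) a).charPoly * Polynomial.C (seqMinor x b) =
      (of fun i j : Fin (r + 1) => Polynomial.X * Polynomial.C (x (i + b j)) -
        Polynomial.C (x (i + (b j + 1)))).det := by
  rw [← charpoly_companion, charpoly, seqMinor, RingHom.map_det, ← det_mul]
  congr 1
  ext1 i j
  have hxC : (LinearRecurrence.mk (r + 1) fun i => Polynomial.C (a i)).IsSolution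
      fun j => Polynomial.C (x j) := fun j => by simp [hx j]
  simp only [of_apply, ← companion_mulVec_window hxC (b j) i]
  exact charmatrix_companion_mulVec_apply a (fun i => Polynomial.C (x (i + b j))) i

lemma mul_mem_minorSpan {a : Fin (r + 1) → B} {x : ℕ → B}
    (hx : (LinearRecurrence.mk (r + 1) a).IsSolution x) (m : ℕ) (l : Fin (r + 1)) {y : B}
    (hy : y ∈ minorSpan A (r + 1) x m) : a l * y ∈ minorSpan A (r + 1) x (m + 1) := by
  induction hy using Submodule.span_induction with
  | zero => simp
  | add u v _ _ hu hv =>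
    rw [mul_add]
    exact Submodule.add_mem _ hu hv
  | smul c u _ hu =>
    rw [mul_smul_comm]
    exact Submodule.smul_mem _ _ hu
  | mem u hu =>
    obtain ⟨b, hb, rfl⟩ := hu
    have hmem := coeff_det_mem_of_piecewise_det_mem (A := A) (V := minorSpan A (r + 1) x (m + 1))
      (y := of fun i j : Fin (r + 1) => x (i + b j)) (z := of fun i j => x (i + (b j + 1)))
      (fun s => Submodule.subset_span ⟨fun j => if j ∈ s then b j else b j + 1, fun j => ?_, ?_⟩) l
    · rw [← neg_mem_iff, ← neg_mul, ← coeff_charPoly, ← Polynomial.coeff_mul_C,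
        charPoly_mul_seqMinor hx]
      exact hmem
    · have := hb j
      dsimp only
      split_ifs <;> omega
    · rw [seqMinor]
      congr 1
      ext i j
      simp only [of_apply]
      split_ifs <;> rfl

lemma hankelDet_zero_mem_minorSpan (x : ℕ → B) {m : ℕ} (hm : r ≤ m + 1) :
    hankelDet r x 0 ∈ minorSpan A r x m :=
  Submodule.subset_span ⟨_, fun j => by have := j.2; omega, rfl⟩

lemma minorSpan_mono (r : ℕ) (x : ℕ → B) {m m' : ℕ} (h : m ≤ m') :
    minorSpan A r x m ≤ minorSpan A r x m' :=
  Submodule.span_mono fun _ ⟨b, hb, hy⟩ => ⟨b, fun j => (hb j).trans h, hy⟩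

end MinorSpan

/-! ### The parametrization of recurrent sequences by roots and amplitudes -/

section RootCoeff

variable {B : Type*} [CommRing B] {r : ℕ}

/-- The coefficients of the linear recurrence of order `r` whose characteristic polynomial has
the roots `s`. -/
noncomputable def rootCoeff (s : Fin r → B) (i : Fin r) : B :=
  -(∏ k, (Polynomial.X - Polynomial.C (s k))).coeff i

lemma charPoly_rootCoeff (s : Fin r → B) :
    (LinearRecurrence.mk r (rootCoeff s)).charPoly =
      ∏ k, (Polynomial.X - Polynomial.C (s k)) := by
  nontriviality B
  have hmonic : (∏ k, (Polynomial.X - Polynomial.C (s k))).Monic :=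
    Polynomial.monic_prod_of_monic _ _ fun _ _ => Polynomial.monic_X_sub_C _
  rw [hmonic.as_sum, Polynomial.natDegree_prod_of_monic _ _ fun _ _ => Polynomial.monic_X_sub_C _,
    LinearRecurrence.charPoly, Finset.sum_range]
  simp [rootCoeff, Polynomial.X_pow_eq_monomial,
    Fin.sum_univ_eq_sum_range (fun i => Polynomial.monomial i _)]

lemma isSolution_rootCoeff (s u : Fin r → B) :
    (LinearRecurrence.mk r (rootCoeff s)).IsSolution fun j => ∑ k, u k * s k ^ j := by
  set E := LinearRecurrence.mk r (rootCoeff s)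
  have hgeom (k : Fin r) : (fun j => s k ^ j) ∈ E.solSpace := by
    refine (E.geom_sol_iff_root_charPoly (s k)).2 ?_
    rw [charPoly_rootCoeff, Polynomial.IsRoot, Polynomial.eval_prod]
    exact Finset.prod_eq_zero (Finset.mem_univ k) (by simp)
  have hsum : ∑ k, u k • (fun j => s k ^ j) ∈ E.solSpace :=
    Submodule.sum_mem _ fun k _ => Submodule.smul_mem _ _ (hgeom k)
  convert (E.is_sol_iff_mem_solSpace _).2 hsum using 1
  ext j
  simp

lemma pow_sub_sum_rootCoeff (s : Fin r → B) (z : B) :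
    z ^ r - ∑ i, rootCoeff s i * z ^ (i : ℕ) = ∏ k, (z - s k) := by
  have h := congrArg (Polynomial.eval z) (charPoly_rootCoeff s)
  simpa [LinearRecurrence.charPoly, Polynomial.eval_finsetSum, Polynomial.eval_prod] using h

lemma map_rootCoeff {B' : Type*} [CommRing B'] (f : B →+* B') (s : Fin r → B) (i : Fin r) :
    f (rootCoeff s i) = rootCoeff (fun k => f (s k)) i := by
  rw [rootCoeff, map_neg, ← Polynomial.coeff_map, Polynomial.map_prod]
  simp [rootCoeff]

lemma rootCoeff_comp_perm (s : Fin r → B) (σ : Equiv.Perm (Fin r)) (i : Fin r) :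
    rootCoeff (fun k => s (σ k)) i = rootCoeff s i := by
  rw [rootCoeff, rootCoeff,
    Equiv.prod_comp σ fun k => Polynomial.X - Polynomial.C (s k)]

lemma rootCoeff_zero (s : Fin (r + 1) → B) : rootCoeff s 0 = (-1) ^ r * ∏ k, s k := by
  simp [rootCoeff, Polynomial.coeff_zero_eq_eval_zero, Polynomial.eval_prod, Finset.prod_neg,
    pow_succ]

lemma hankelDet_zero_of_roots (s u : Fin r → B) :
    hankelDet r (fun j => ∑ k, u k * s k ^ j) 0 =
      (∏ k, u k) * (∏ i, ∏ j ∈ Finset.Ioi i, (s j - s i)) ^ 2 := by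
  have hfactor : (of fun i j : Fin r => ∑ k, u k * s k ^ ((i : ℕ) + (j + 0))) =
      (vandermonde s)ᵀ * diagonal u * vandermonde s := by
    ext i j
    simp only [mul_apply (N := vandermonde s), mul_diagonal, transpose_apply, vandermonde_apply,
      of_apply, add_zero]
    exact Finset.sum_congr rfl fun k _ => by ring
  rw [hankelDet, seqMinor, hfactor, det_mul, det_mul, det_transpose, det_diagonal,
    det_vandermonde]
  ring

end RootCoeff

section Injectivity

lemma injective_aeval_of_isAlgebraic {K σ : Type*} [CommRing K] [IsDomain K] [Finite σ]
    {g : σ → MvPolynomial σ K}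
    (hg : ∀ i, IsAlgebraic (Algebra.adjoin K (Set.range g)) (X i : MvPolynomial σ K)) :
    Function.Injective (aeval (R := K) g) := by
  have : Algebra.IsAlgebraic (Algebra.adjoin K (Set.range g)) (MvPolynomial σ K) := by
    refine ⟨fun f => ?_⟩
    induction f using MvPolynomial.induction_on with
    | C c => exact isAlgebraic_algebraMap (algebraMap K (Algebra.adjoin K (Set.range g)) c)
    | add f f' hf hf' => exact hf.add hf'
    | mul_X f i hf => exact hf.mul (hg i)
  exact (Algebra.IsAlgebraic.isTranscendenceBasis_of_lift_le_trdeg_of_finite K g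
    (by simp [MvPolynomial.trdeg_of_isDomain])).1

variable {A B : Type*} [CommRing A] [CommRing B] [Algebra A B] {r : ℕ}

lemma isIntegral_root {s : Fin r → B} (hs : ∀ i, rootCoeff s i ∈ (algebraMap A B).range)
    (k : Fin r) : IsIntegral A (s k) := by
  choose a ha using hs
  refine ⟨(LinearRecurrence.mk r a).charPoly, LinearRecurrence.charPoly_monic _, ?_⟩
  have h := pow_sub_sum_rootCoeff s (s k)
  rw [Finset.prod_eq_zero (Finset.mem_univ k) (sub_self _)] at h
  simpa [LinearRecurrence.charPoly, Polynomial.eval₂_finsetSum, ha] using h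

lemma isAlgebraic_amplitude [IsDomain A] [IsDomain B] {s u : Fin r → B}
    (hinj : Function.Injective s) (hs : ∀ k, IsAlgebraic A (s k))
    (hx : ∀ j : Fin r, IsAlgebraic A (∑ k, u k * s k ^ (j : ℕ))) (k : Fin r) :
    IsAlgebraic A (u k) := by
  set S := Subalgebra.algebraicClosure A B
  set V : Matrix (Fin r) (Fin r) S := (vandermonde fun k => ⟨s k, hs k⟩)ᵀ with hV
  have hmap : V.map S.val = (vandermonde s)ᵀ := by
    ext i j
    simp [hV]
  have hdet : S.val V.det = (vandermonde s).det := by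
    rw [AlgHom.map_det, AlgHom.mapMatrix_apply, hmap, det_transpose]
  have hsystem : (vandermonde s)ᵀ *ᵥ u = fun j : Fin r => ∑ k, u k * s k ^ (j : ℕ) := by
    ext j
    simp [mulVec, dotProduct, mul_comm]
  have hcramer := congrFun (det_smul_eq_adjugate_mulVec (vandermonde s)ᵀ u) k
  rw [hsystem, ← hmap, ← AlgHom.mapMatrix_apply, ← AlgHom.map_adjugate, ← AlgHom.map_det,
    Pi.smul_apply, smul_eq_mul] at hcramer
  refine IsAlgebraic.of_mul (y := S.val V.det) ?_ V.det.2 ?_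
  · rw [hdet]
    exact mem_nonZeroDivisors_of_ne_zero (det_vandermonde_ne_zero_iff.2 hinj)
  · rw [hcramer]
    change ∑ j, S.val (V.adjugate k j) * _ ∈ S
    exact S.sum_mem fun j _ => S.mul_mem (V.adjugate k j).2 (hx j)

end Injectivity

section RecurrenceRing

/-- The coordinate ring of the space of sequences satisfying a linear recurrence of order `r`:
the variables `Sum.inl i` are the coefficients of the recurrence and the variables `Sum.inr j` are
the initial values of the sequence. -/
abbrev RecurrenceRing (K : Type*) [CommRing K] (r : ℕ) := MvPolynomial (Fin r ⊕ Fin r) K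

variable (K : Type*) [CommRing K] (r : ℕ)

/-- The coefficients of the generic linear recurrence of order `r`. -/
noncomputable def coeffVar (i : Fin r) : RecurrenceRing K r := X (Sum.inl i)

/-- The generic sequence satisfying a linear recurrence of order `r`. -/
noncomputable def genSeq : ℕ → RecurrenceRing K r :=
  LinearRecurrence.mkSol ⟨r, coeffVar K r⟩ fun i => X (Sum.inr i)

lemma genSeq_isSolution : (LinearRecurrence.mk r (coeffVar K r)).IsSolution (genSeq K r) :=
  LinearRecurrence.is_sol_mkSol _ _

lemma genSeq_of_lt (i : Fin r) : genSeq K r i = X (Sum.inr i) :=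
  LinearRecurrence.mkSol_eq_init ⟨r, coeffVar K r⟩ (fun i => X (Sum.inr i)) i

variable {K r} in
lemma genSeq_mem {A : Type*} [SetLike A (RecurrenceRing K r)]
    [AddSubmonoidClass A (RecurrenceRing K r)] {S : A} (hX : ∀ i, X (Sum.inr i) ∈ S)
    (hmul : ∀ i, ∀ x ∈ S, coeffVar K r i * x ∈ S) (j : ℕ) : genSeq K r j ∈ S := by
  induction j using Nat.strong_induction_on with
  | _ j ih =>
    by_cases h : j < r
    · exact genSeq_of_lt K r ⟨j, h⟩ ▸ hX _
    · obtain ⟨k, rfl⟩ := Nat.exists_eq_add_of_le' (not_lt.mp h)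
      rw [genSeq_isSolution K r k]
      exact sum_mem fun i _ => hmul i _ (ih _ (Nat.add_lt_add_left i.2 k))

variable {K r} in
lemma map_genSeq {B : Type*} [CommRing B] (f : RecurrenceRing K r →+* B) {y : ℕ → B}
    (hy : (LinearRecurrence.mk r fun i => f (coeffVar K r i)).IsSolution y)
    (hinit : ∀ i : Fin r, f (X (Sum.inr i)) = y i) (j : ℕ) : f (genSeq K r j) = y j := by
  set E := LinearRecurrence.mk r fun i => f (coeffVar K r i)
  have hf : E.IsSolution fun j => f (genSeq K r j) := fun j => by
    simp [E, genSeq_isSolution K r j]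
  have hsol := E.eq_mk_of_is_sol_of_eq_init (init := fun i => f (X (Sum.inr i))) hf
    (fun i => by rw [← genSeq_of_lt])
  rw [show y = E.mkSol _ from E.eq_mk_of_is_sol_of_eq_init' hy fun i => (hinit i).symm]
  exact hsol j

/-- The substitution expressing the coefficients of the recurrence through the roots of its
characteristic polynomial, now the variables `Sum.inl k`, and the sequence as the combination of
the powers of these roots with the amplitudes `Sum.inr k`. -/
noncomputable def rootParam : RecurrenceRing K r →ₐ[K] RecurrenceRing K r :=
  aeval (Sum.elim (rootCoeff fun k => X (Sum.inl k))
    fun j : Fin r => ∑ k, X (Sum.inr k) * X (Sum.inl k) ^ (j : ℕ))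

lemma rootParam_coeffVar (i : Fin r) :
    rootParam K r (coeffVar K r i) = rootCoeff (fun k => X (Sum.inl k)) i := by
  simp [rootParam, coeffVar]

lemma rootParam_genSeq (j : ℕ) :
    rootParam K r (genSeq K r j) = ∑ k, X (Sum.inr k) * X (Sum.inl k) ^ j := by
  refine map_genSeq (rootParam K r).toRingHom
    (y := fun j => ∑ k, X (Sum.inr k) * X (Sum.inl k) ^ j) ?_ (fun i => ?_) j
  · have hcoeff : (fun i => (rootParam K r).toRingHom (coeffVar K r i)) =
        rootCoeff fun k => X (Sum.inl k) := funext (rootParam_coeffVar K r)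
    rw [hcoeff]
    exact isSolution_rootCoeff _ _
  · simp [rootParam]

lemma rootParam_hankelDet :
    rootParam K r (hankelDet r (genSeq K r) 0) = (∏ k, X (Sum.inr k)) *
      (∏ i : Fin r, ∏ j ∈ Finset.Ioi i, (X (Sum.inl j) - X (Sum.inl i))) ^ 2 := by
  rw [← hankelDet_zero_of_roots, hankelDet, hankelDet, ← AlgHom.coe_toRingHom, map_seqMinor]
  exact congrArg (fun y => seqMinor y _) (funext (rootParam_genSeq K r))

lemma rootParam_injective [IsDomain K] : Function.Injective (rootParam K r) := by
  set g : Fin r ⊕ Fin r → RecurrenceRing K r := Sum.elim (rootCoeff fun k => X (Sum.inl k))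
    fun j : Fin r => ∑ k, X (Sum.inr k) * X (Sum.inl k) ^ (j : ℕ)
  have hmem (i) : g i ∈ (algebraMap (Algebra.adjoin K (Set.range g)) (RecurrenceRing K r)).range :=
    ⟨⟨g i, Algebra.subset_adjoin ⟨i, rfl⟩⟩, rfl⟩
  have hroot (k : Fin r) : IsAlgebraic (Algebra.adjoin K (Set.range g))
      (X (Sum.inl k) : RecurrenceRing K r) :=
    (isIntegral_root (s := fun k => X (Sum.inl k)) (fun i => hmem (Sum.inl i)) k).isAlgebraic
  refine injective_aeval_of_isAlgebraic (Sum.rec hroot ?_)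
  refine isAlgebraic_amplitude (s := fun k => X (Sum.inl k)) (fun k l h => ?_) hroot fun j => ?_
  · exact Sum.inl_injective (X_injective h)
  · obtain ⟨y, hy⟩ := hmem (Sum.inr j)
    exact (hy ▸ isAlgebraic_algebraMap y : IsAlgebraic _ (g (Sum.inr j)))

end RecurrenceRing

/-! ### Weights of the roots and of the amplitudes -/

section RootWeight

variable {K : Type*} [CommRing K] {r N : ℕ} {w : Fin r ⊕ Fin r → ℤ} {i j k : ℤ}
  {f g : RecurrenceRing K r}

/-- The elements of the recurrence ring whose expression in the roots and amplitudes has weighted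
degree at most `j`. -/
noncomputable def rootDegreeLE (w : Fin r ⊕ Fin r → ℤ) (j : ℤ) :
    Submodule K (RecurrenceRing K r) :=
  (weightedDegreeLE w j).comap (rootParam K r).toLinearMap

lemma mem_rootDegreeLE : f ∈ rootDegreeLE w j ↔ rootParam K r f ∈ weightedDegreeLE w j :=
  Iff.rfl

lemma rootDegreeLE_mono (h : i ≤ j) : rootDegreeLE (K := K) w i ≤ rootDegreeLE w j :=
  Submodule.comap_mono (weightedDegreeLE_mono h)

lemma mul_mem_rootDegreeLE (hf : f ∈ rootDegreeLE w i) (hg : g ∈ rootDegreeLE w j)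
    (h : i + j ≤ k) : f * g ∈ rootDegreeLE w k := by
  rw [mem_rootDegreeLE, map_mul]
  exact mul_mem_weightedDegreeLE hf hg h

lemma pow_mem_rootDegreeLE (hf : f ∈ rootDegreeLE w j) (n : ℕ) :
    f ^ n ∈ rootDegreeLE w (n * j) := by
  rw [mem_rootDegreeLE, map_pow]
  exact pow_mem_weightedDegreeLE hf n

/-- The weight measuring the order of growth in the last root. The last amplitude has weight
`1 - N`, so that the first `N` terms of the generic sequence have degree at most `0`. -/
def lastRootWeight (r N : ℕ) : Fin r ⊕ Fin r → ℤ :=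
  Sum.elim (fun i => if (i : ℕ) + 1 = r then 1 else 0)
    fun i => if (i : ℕ) + 1 = r then 1 - (N : ℤ) else 0

/-- The weight counting the degree in the amplitudes. -/
def ampWeight (r : ℕ) : Fin r ⊕ Fin r → ℤ := Sum.elim 0 1

lemma sum_ite_eq_last (r : ℕ) (c : ℤ) :
    (∑ k : Fin (r + 1), if (k : ℕ) + 1 = r + 1 then c else 0) = c := by
  simp [Fin.sum_univ_castSucc, (Fin.is_lt _).ne]

lemma sum_lastRootWeight_Ioi (r N : ℕ) :
    ∑ i : Fin (r + 1), ∑ j ∈ Finset.Ioi i, lastRootWeight (r + 1) N (Sum.inl j) = r := by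
  have hinner (i : Fin (r + 1)) :
      ∑ j ∈ Finset.Ioi i, lastRootWeight (r + 1) N (Sum.inl j) =
        if i = Fin.last r then 0 else 1 := by
    have hlast (j : Fin (r + 1)) :
        lastRootWeight (r + 1) N (Sum.inl j) = if j = Fin.last r then 1 else 0 := by
      simp [lastRootWeight, Fin.ext_iff]
    simp [hlast, Fin.lt_last_iff_ne_last]
  simp [hinner, Fin.sum_univ_castSucc, Fin.castSucc_ne_last]

lemma coeff_prod_X_sub_C_mem_weightedDegreeLE (hw : ∀ k, 0 ≤ w (Sum.inl k)) (T : Finset (Fin r))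
    (n : ℕ) : (∏ k ∈ T, (Polynomial.X - Polynomial.C
      (X (Sum.inl k) : RecurrenceRing K r))).coeff n ∈
        weightedDegreeLE w (∑ k ∈ T, w (Sum.inl k)) := by
  induction T using Finset.induction_on generalizing n with
  | empty =>
    simp only [Finset.sum_empty, Finset.prod_empty, Polynomial.coeff_one]
    split_ifs
    · exact one_mem_weightedDegreeLE le_rfl
    · exact zero_mem _
  | insert a T ha ih =>
    rw [Finset.sum_insert ha, Finset.prod_insert ha, sub_mul, Polynomial.coeff_sub,
      Polynomial.coeff_C_mul]
    refine sub_mem ?_ (mul_mem_weightedDegreeLE (X_mem_weightedDegreeLE le_rfl) (ih n) le_rfl)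
    cases n with
    | zero => simp
    | succ n =>
      rw [Polynomial.coeff_X_mul]
      exact weightedDegreeLE_mono (by linarith [hw a]) (ih n)

lemma coeffVar_mem_rootDegreeLE (hw : ∀ k, 0 ≤ w (Sum.inl k)) (i : Fin r) :
    coeffVar K r i ∈ rootDegreeLE w (∑ k, w (Sum.inl k)) := by
  rw [mem_rootDegreeLE, rootParam_coeffVar]
  exact neg_mem (coeff_prod_X_sub_C_mem_weightedDegreeLE hw _ i)

lemma coeffVar_mem_lastRootWeight (i : Fin r) :
    coeffVar K r i ∈ rootDegreeLE (lastRootWeight r N) 1 := by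
  obtain _ | r := r
  · exact i.elim0
  · have hw (k : Fin (r + 1)) : 0 ≤ lastRootWeight (r + 1) N (Sum.inl k) := by
      simp only [lastRootWeight, Sum.elim_inl]
      split_ifs <;> simp
    simpa only [lastRootWeight, Sum.elim_inl, sum_ite_eq_last]
      using coeffVar_mem_rootDegreeLE (K := K) hw i

lemma coeffVar_mem_ampWeight (i : Fin r) : coeffVar K r i ∈ rootDegreeLE (ampWeight r) 0 := by
  simpa [ampWeight] using
    coeffVar_mem_rootDegreeLE (K := K) (w := ampWeight r) (fun _ => by simp [ampWeight]) i

lemma genSeq_mem_lastRootWeight {n : ℕ} (hn : n < N) :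
    genSeq K r n ∈ rootDegreeLE (lastRootWeight r N) 0 := by
  rw [mem_rootDegreeLE, rootParam_genSeq]
  refine Submodule.sum_mem _ fun k _ => mul_mem_weightedDegreeLE (X_mem_weightedDegreeLE le_rfl)
    (pow_mem_weightedDegreeLE (X_mem_weightedDegreeLE le_rfl) n) ?_
  simp only [lastRootWeight, Sum.elim_inl, Sum.elim_inr]
  split_ifs <;> omega

lemma genSeq_mem_ampWeight (n : ℕ) : genSeq K r n ∈ rootDegreeLE (ampWeight r) 1 := by
  rw [mem_rootDegreeLE, rootParam_genSeq]
  refine Submodule.sum_mem _ fun k _ => mul_mem_weightedDegreeLE (X_mem_weightedDegreeLE le_rfl)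
    (pow_mem_weightedDegreeLE (X_mem_weightedDegreeLE le_rfl) n) ?_
  simp [ampWeight]

lemma hankelDet_mem_rootDegreeLE
    (hw : ∀ i j : Fin r, i ≤ j → w (Sum.inl i) ≤ w (Sum.inl j)) :
    hankelDet r (genSeq K r) 0 ∈ rootDegreeLE w
      (∑ k, w (Sum.inr k) + 2 * ∑ i : Fin r, ∑ j ∈ Finset.Ioi i, w (Sum.inl j)) := by
  rw [mem_rootDegreeLE, rootParam_hankelDet]
  refine mul_mem_weightedDegreeLE
    (prod_mem_weightedDegreeLE _ fun i _ => X_mem_weightedDegreeLE le_rfl)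
    (pow_mem_weightedDegreeLE (prod_mem_weightedDegreeLE _ fun i _ =>
      prod_mem_weightedDegreeLE _ fun j hj => ?_) 2) le_rfl
  exact sub_mem (X_mem_weightedDegreeLE le_rfl)
    (X_mem_weightedDegreeLE (hw _ _ (Finset.mem_Ioi.mp hj).le))

lemma hankelDet_mem_lastRootWeight (r h : ℕ) :
    hankelDet (r + 1) (genSeq K (r + 1)) 0 ∈
      rootDegreeLE (lastRootWeight (r + 1) (2 * (r + 1) + h)) (-(h + 1)) := by
  refine rootDegreeLE_mono (le_of_eq ?_) (hankelDet_mem_rootDegreeLE fun i j hij => ?_)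
  · rw [sum_lastRootWeight_Ioi]
    simp only [lastRootWeight, Sum.elim_inr, sum_ite_eq_last]
    push_cast
    ring
  · simp only [lastRootWeight, Sum.elim_inl]
    have := j.2
    have : (i : ℕ) ≤ j := hij
    split_ifs <;> omega

section Domain

variable [IsDomain K]

lemma mul_notMem_rootDegreeLE (hf : f ∉ rootDegreeLE w (i - 1))
    (hg : g ∉ rootDegreeLE w (j - 1)) : f * g ∉ rootDegreeLE w (i + j - 1) := by
  rw [mem_rootDegreeLE, map_mul]
  exact mul_notMem_weightedDegreeLE hf hg

lemma pow_notMem_rootDegreeLE (hf : f ∉ rootDegreeLE w (i - 1)) (n : ℕ) :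
    f ^ n ∉ rootDegreeLE w (n * i - 1) := by
  rw [mem_rootDegreeLE, map_pow]
  exact pow_notMem_weightedDegreeLE hf n

lemma mem_rootDegreeLE_of_mul_mem (hf : f ∉ rootDegreeLE w (i - 1))
    (h : f * g ∈ rootDegreeLE w (i + j)) : g ∈ rootDegreeLE w j := by
  rw [mem_rootDegreeLE, map_mul] at h
  exact mem_weightedDegreeLE_of_mul_mem hf h

lemma exists_mem_rootDegreeLE_notMem_pred (w : Fin r ⊕ Fin r → ℤ) (hf : f ≠ 0) :
    ∃ j : ℤ, f ∈ rootDegreeLE w j ∧ f ∉ rootDegreeLE w (j - 1) :=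
  exists_mem_weightedDegreeLE_notMem_pred w
    ((map_ne_zero_iff _ (rootParam_injective K r)).mpr hf)

lemma coeffVar_zero_notMem_rootDegreeLE (w : Fin (r + 1) ⊕ Fin (r + 1) → ℤ) :
    coeffVar K (r + 1) 0 ∉ rootDegreeLE w (∑ k, w (Sum.inl k) - 1) := by
  rw [mem_rootDegreeLE, rootParam_coeffVar, rootCoeff_zero,
    neg_one_pow_mul_mem_weightedDegreeLE_iff]
  exact prod_notMem_weightedDegreeLE _ fun i _ => X_notMem_weightedDegreeLE _

lemma coeffVar_zero_notMem_lastRootWeight :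
    coeffVar K (r + 1) 0 ∉ rootDegreeLE (lastRootWeight (r + 1) N) (1 - 1) := by
  simpa only [lastRootWeight, Sum.elim_inl, sum_ite_eq_last]
    using coeffVar_zero_notMem_rootDegreeLE (K := K) (lastRootWeight (r + 1) N)

lemma coeffVar_zero_notMem_ampWeight :
    coeffVar K (r + 1) 0 ∉ rootDegreeLE (ampWeight (r + 1)) (0 - 1) := by
  simpa [ampWeight] using coeffVar_zero_notMem_rootDegreeLE (K := K) (ampWeight (r + 1))

lemma hankelDet_notMem_rootDegreeLE (w : Fin r ⊕ Fin r → ℤ) :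
    hankelDet r (genSeq K r) 0 ∉ rootDegreeLE w
      (∑ k, w (Sum.inr k) + 2 * (∑ i : Fin r, ∑ j ∈ Finset.Ioi i, w (Sum.inl j)) - 1) := by
  rw [mem_rootDegreeLE, rootParam_hankelDet]
  refine mul_notMem_weightedDegreeLE
    (prod_notMem_weightedDegreeLE _ fun i _ => X_notMem_weightedDegreeLE _)
    (pow_notMem_weightedDegreeLE (prod_notMem_weightedDegreeLE _ fun i _ =>
      prod_notMem_weightedDegreeLE _ fun j hj => X_sub_X_notMem_weightedDegreeLE ?_) 2)
  simpa using (Finset.mem_Ioi.mp hj).ne'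

lemma hankelDet_notMem_lastRootWeight (r h : ℕ) :
    hankelDet (r + 1) (genSeq K (r + 1)) 0 ∉
      rootDegreeLE (lastRootWeight (r + 1) (2 * (r + 1) + h)) (-(h + 1) - 1) := by
  refine fun hmem => hankelDet_notMem_rootDegreeLE _ (rootDegreeLE_mono (le_of_eq ?_) hmem)
  rw [sum_lastRootWeight_Ioi]
  simp only [lastRootWeight, Sum.elim_inr, sum_ite_eq_last]
  push_cast
  ring

lemma hankelDet_notMem_ampWeight (r : ℕ) :
    hankelDet r (genSeq K r) 0 ∉ rootDegreeLE (ampWeight r) (r - 1) := by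
  simpa [ampWeight] using hankelDet_notMem_rootDegreeLE (K := K) (ampWeight r)

lemma hankelDet_ne_zero (r : ℕ) : hankelDet r (genSeq K r) 0 ≠ 0 := fun h =>
  hankelDet_notMem_ampWeight (K := K) r (h ▸ zero_mem _)

end Domain

end RootWeight

/-! ### Divisibility by the first Hankel minor -/

lemma dvd_of_eval₂_eq_zero {A L ι : Type*} [CommRing A] [CommRing L] [IsDomain L] [Fintype ι]
    {c : A →+* L} (hc : Function.Injective c) {b : ι → L} (hb : Function.Injective b)
    {P f : Polynomial A} (hdeg : P.natDegree ≤ Fintype.card ι)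
    (hlead : IsUnit (P.coeff (Fintype.card ι))) (hP : ∀ k, P.eval₂ c (b k) = 0)
    (hf : ∀ k, f.eval₂ c (b k) = 0) : P ∣ f := by
  have := c.domain_nontrivial
  obtain ⟨u, hu⟩ := hlead
  have hmonic : (Polynomial.C (↑u⁻¹ : A) * P).Monic :=
    Polynomial.monic_of_natDegree_le_of_coeff_eq_one (Fintype.card ι)
      ((Polynomial.natDegree_C_mul_le _ _).trans hdeg) (by simp [← hu])
  refine (dvd_mul_left P _).trans ((Polynomial.modByMonic_eq_zero_iff_dvd hmonic).1 ?_)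
  set ρ := f %ₘ (Polynomial.C (↑u⁻¹ : A) * P) with hρ
  have hroot (k : ι) : (ρ.map c).eval (b k) = 0 := by
    rw [Polynomial.eval_map, hρ, Polynomial.modByMonic_eq_sub_mul_div]
    simp [Polynomial.eval₂_mul, hf, hP]
  refine (Polynomial.map_eq_zero_iff hc).1
    (Polynomial.eq_zero_of_degree_lt_of_eval_index_eq_zero Finset.univ hb.injOn ?_
      fun k _ => hroot k)
  refine (Polynomial.degree_map_le.trans_lt (Polynomial.degree_modByMonic_lt f hmonic)).trans_le ?_
  exact Polynomial.degree_le_of_natDegree_le ((Polynomial.natDegree_C_mul_le _ _).trans hdeg)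

lemma isUnit_hankelDet_of_impulse {B : Type*} [CommRing B] {r : ℕ} {x : ℕ → B}
    (hx : ∀ j < r, x j = 0) (hr : x r = 1) : IsUnit (hankelDet (r + 1) x 0) := by
  have hperm := det_permute' (Fin.revPerm : Equiv.Perm (Fin (r + 1)))
    (of fun i j : Fin (r + 1) => x (i + (j + 0)))
  rw [det_of_isLowerTriangular, Finset.prod_eq_one] at hperm
  · exact IsUnit.of_mul_eq_one_right _ hperm.symm
  · intro i _
    have hi : (i : ℕ) + (r - i) = r := by omega
    simp [hi, hr]
  · intro i j hij
    have : (i : ℕ) < j := hij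
    exact hx _ (by simp only [id, Fin.revPerm_apply, Fin.val_rev]; omega)

section LastInit

variable (K : Type*) [CommRing K] (r : ℕ)

/-- The recurrence ring of order `r + 1` as a polynomial ring in the last initial value. -/
noncomputable def lastInitEquiv :
    RecurrenceRing K (r + 1) ≃ₐ[K] Polynomial (MvPolynomial (Fin (r + 1) ⊕ Fin r) K) :=
  AlgEquiv.ofAlgHom
    (aeval (Sum.elim (fun i => Polynomial.C (X (Sum.inl i)))
      (Fin.snoc (α := fun _ => Polynomial (MvPolynomial (Fin (r + 1) ⊕ Fin r) K))
        (fun j => Polynomial.C (X (Sum.inr j))) Polynomial.X)))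
    (Polynomial.aevalTower (rename (Sum.map id Fin.castSucc)) (X (Sum.inr (Fin.last r))))
    (by ext i : 2 <;> [skip; simp]; cases i <;> simp)
    (by
      ext i : 1
      rcases i with i | i
      · simp
      · cases i using Fin.lastCases <;> simp)

lemma lastInitEquiv_genSeq : ∃ x y : ℕ → MvPolynomial (Fin (r + 1) ⊕ Fin r) K,
    (∀ j < r, x j = 0) ∧ x r = 1 ∧ ∀ j, lastInitEquiv K r (genSeq K (r + 1) j) =
      Polynomial.X * Polynomial.C (x j) + Polynomial.C (y j) := by
  set E : LinearRecurrence (MvPolynomial (Fin (r + 1) ⊕ Fin r) K) := ⟨r + 1, fun i => X (Sum.inl i)⟩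
  set x := E.mkSol (Pi.single (Fin.last r) 1)
  set y := E.mkSol (Fin.snoc (α := fun _ => MvPolynomial (Fin (r + 1) ⊕ Fin r) K)
    (fun j => X (Sum.inr j)) 0)
  have hx (i : Fin (r + 1)) : x i = Pi.single (M := fun _ => MvPolynomial _ K) (Fin.last r) 1 i :=
    E.mkSol_eq_init _ i
  have hy (i : Fin (r + 1)) : y i = Fin.snoc (α := fun _ => MvPolynomial (Fin (r + 1) ⊕ Fin r) K)
      (fun j => X (Sum.inr j)) 0 i := E.mkSol_eq_init _ i
  refine ⟨x, y, fun j hj => ?_, ?_, map_genSeq (lastInitEquiv K r).toRingHom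
    (y := fun j => Polynomial.X * Polynomial.C (x j) + Polynomial.C (y j))
    (fun j => ?_) fun i => ?_⟩
  · simpa [Pi.single_apply, Fin.ext_iff, hj.ne] using hx ⟨j, by omega⟩
  · simpa using hx (Fin.last r)
  · have hxj : x (j + (r + 1)) = ∑ i : Fin (r + 1), X (Sum.inl i) * x (j + i) :=
      E.is_sol_mkSol _ j
    have hyj : y (j + (r + 1)) = ∑ i : Fin (r + 1), X (Sum.inl i) * y (j + i) :=
      E.is_sol_mkSol _ j
    have hcoeff (i : Fin (r + 1)) : (lastInitEquiv K r).toRingHom (coeffVar K (r + 1) i) =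
        Polynomial.C (X (Sum.inl i)) := by
      simp [lastInitEquiv, coeffVar]
    simp only [hxj, hyj, hcoeff, map_sum, map_mul, Finset.mul_sum, ← Finset.sum_add_distrib]
    exact Finset.sum_congr rfl fun i _ => by ring
  · rw [hx, hy]
    cases i using Fin.lastCases <;> simp [lastInitEquiv, Fin.castSucc_ne_last]

lemma natDegree_lastInitEquiv_hankelDet_le :
    (lastInitEquiv K r (hankelDet (r + 1) (genSeq K (r + 1)) 0)).natDegree ≤ r + 1 ∧
      IsUnit ((lastInitEquiv K r (hankelDet (r + 1) (genSeq K (r + 1)) 0)).coeff (r + 1)) := by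
  obtain ⟨x, y, hx, hr, hxy⟩ := lastInitEquiv_genSeq K r
  have hdet : lastInitEquiv K r (hankelDet (r + 1) (genSeq K (r + 1)) 0) =
      det ((Polynomial.X : Polynomial (MvPolynomial (Fin (r + 1) ⊕ Fin r) K)) •
        (of fun i j : Fin (r + 1) => x (i + (j + 0))).map Polynomial.C +
        (of fun i j : Fin (r + 1) => y (i + (j + 0))).map Polynomial.C) := by
    refine (map_seqMinor (lastInitEquiv K r).toRingHom _ _).trans ?_
    rw [seqMinor]
    congr 1
    ext1 i j
    simpa using hxy _
  rw [hdet]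
  constructor
  · simpa using Polynomial.natDegree_det_X_add_C_le
      (of fun i j : Fin (r + 1) => x (i + (j + 0))) (of fun i j : Fin (r + 1) => y (i + (j + 0)))
  · have hcoeff := Polynomial.coeff_det_X_add_C_card
      (of fun i j : Fin (r + 1) => x (i + (j + 0))) (of fun i j : Fin (r + 1) => y (i + (j + 0)))
    rw [Fintype.card_fin] at hcoeff
    rw [hcoeff]
    exact isUnit_hankelDet_of_impulse hx hr

lemma map_lastInitEquiv {L : Type*} [CommRing L] [Algebra K L]
    (c : MvPolynomial (Fin (r + 1) ⊕ Fin r) K →ₐ[K] L) (b : L) (w : RecurrenceRing K (r + 1)) :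
    (lastInitEquiv K r w).eval₂ c.toRingHom b =
      aeval (Sum.elim (fun i => c (X (Sum.inl i)))
        (Fin.snoc (α := fun _ => L) (fun j => c (X (Sum.inr j))) b)) w := by
  suffices h : (Polynomial.aevalTower c b).comp
      (lastInitEquiv K r : RecurrenceRing K (r + 1) →ₐ[K] _) = aeval _ from
    DFunLike.congr_fun h w
  ext i
  rcases i with i | i
  · simp [lastInitEquiv]
  · cases i using Fin.lastCases <;> simp [lastInitEquiv]

end LastInit

lemma aeval_sumElim_rootCoeff {K L ι τ : Type*} [CommRing K] [CommRing L] [Algebra K L] {r : ℕ}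
    (g : ι → L) (h : τ → L) (s : Fin r → ι) (i : Fin r) :
    aeval (Sum.elim g h) (rootCoeff (fun k => (X (Sum.inl (s k)) : MvPolynomial (ι ⊕ τ) K)) i) =
      rootCoeff (fun k => g (s k)) i := by
  refine (map_rootCoeff (aeval (R := K) (Sum.elim g h)).toRingHom _ i).trans ?_
  simp

section VanishingAmplitude

variable (K : Type*) [CommRing K] (r : ℕ) (k : Fin (r + 1))

/-- The term `x r` of the sequence with initial values `x 0, …, x (r - 1)` whose roots are the
variables other than the `k`-th one. -/
noncomputable def initExtension : MvPolynomial (Fin (r + 1) ⊕ Fin r) K :=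
  ∑ l : Fin r, rootCoeff (fun i => X (Sum.inl (k.succAbove i))) l * X (Sum.inr l)

/-- The generic recurrence of order `r + 1` with roots `X k` and with vanishing `k`-th amplitude,
parametrized by the roots and the first `r` initial values. -/
noncomputable def vanishingAmplitude :
    RecurrenceRing K (r + 1) →ₐ[K] MvPolynomial (Fin (r + 1) ⊕ Fin r) K :=
  aeval (Sum.elim (rootCoeff fun k => X (Sum.inl k))
    (Fin.snoc (α := fun _ => MvPolynomial (Fin (r + 1) ⊕ Fin r) K)
      (fun j => X (Sum.inr j)) (initExtension K r k)))

/-- The passage from the first `r` initial values to the amplitudes other than the `k`-th one. -/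
noncomputable def otherAmplitudes :
    MvPolynomial (Fin (r + 1) ⊕ Fin r) K →ₐ[K] MvPolynomial (Fin (r + 1) ⊕ Fin r) K :=
  aeval (Sum.elim (fun i => X (Sum.inl i)) fun j : Fin r =>
    ∑ i, X (Sum.inr i) * X (Sum.inl (k.succAbove i)) ^ (j : ℕ))

lemma otherAmplitudes_initExtension : otherAmplitudes K r k (initExtension K r k) =
    ∑ i, X (Sum.inr i) * X (Sum.inl (k.succAbove i)) ^ r := by
  have hsol := isSolution_rootCoeff
    (fun i => (X (Sum.inl (k.succAbove i)) : MvPolynomial (Fin (r + 1) ⊕ Fin r) K))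
    (fun i => X (Sum.inr i)) 0
  simp only [zero_add] at hsol
  rw [hsol, initExtension, map_sum]
  refine Finset.sum_congr rfl fun l _ => ?_
  rw [map_mul, otherAmplitudes, aeval_sumElim_rootCoeff]
  simp

/-- The specialization of the `k`-th amplitude to zero. -/
noncomputable def killAmplitude :
    RecurrenceRing K (r + 1) →ₐ[K] MvPolynomial (Fin (r + 1) ⊕ Fin r) K :=
  aeval (Sum.elim (fun i => X (Sum.inl i))
    (k.insertNth (α := fun _ => MvPolynomial (Fin (r + 1) ⊕ Fin r) K) 0 fun i => X (Sum.inr i)))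

lemma otherAmplitudes_comp_vanishingAmplitude :
    (otherAmplitudes K r k).comp (vanishingAmplitude K r k) =
      (killAmplitude K r k).comp (rootParam K (r + 1)) := by
  ext i : 1
  rcases i with i | i
  · have hvan : vanishingAmplitude K r k (X (Sum.inl i)) =
        rootCoeff (fun k => X (Sum.inl k)) i := by simp [vanishingAmplitude]
    rw [AlgHom.comp_apply, AlgHom.comp_apply, hvan, otherAmplitudes, killAmplitude,
      ← coeffVar, rootParam_coeffVar, aeval_sumElim_rootCoeff _ _ fun k => k,
      aeval_sumElim_rootCoeff _ _ fun k => k]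
  · have hkill : killAmplitude K r k (rootParam K (r + 1) (X (Sum.inr i))) =
        ∑ l, X (Sum.inr l) * X (Sum.inl (k.succAbove l)) ^ (i : ℕ) := by
      simp [killAmplitude, rootParam, Fin.sum_univ_succAbove _ k]
    refine Eq.trans ?_ hkill.symm
    cases i using Fin.lastCases with
    | last => simpa [vanishingAmplitude] using otherAmplitudes_initExtension K r k
    | cast i => simp [vanishingAmplitude, otherAmplitudes]

section

variable [IsDomain K]

lemma otherAmplitudes_injective : Function.Injective (otherAmplitudes K r k) := by
  refine injective_aeval_of_isAlgebraic fun i => ?_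
  set g : Fin (r + 1) ⊕ Fin r → MvPolynomial (Fin (r + 1) ⊕ Fin r) K :=
    Sum.elim (fun i => X (Sum.inl i)) fun j : Fin r =>
      ∑ i, X (Sum.inr i) * X (Sum.inl (k.succAbove i)) ^ (j : ℕ)
  have hmem (i) : IsAlgebraic (Algebra.adjoin K (Set.range g)) (g i) :=
    isAlgebraic_algebraMap (⟨g i, Algebra.subset_adjoin ⟨i, rfl⟩⟩ : Algebra.adjoin K (Set.range g))
  rcases i with i | i
  · exact hmem (Sum.inl i)
  · exact isAlgebraic_amplitude (s := fun i => X (Sum.inl (k.succAbove i)))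
      (u := fun i => X (Sum.inr i))
      (fun i j hij => k.succAbove_right_injective (Sum.inl_injective (X_injective hij)))
      (fun i => hmem (Sum.inl (k.succAbove i))) (fun j => hmem (Sum.inr j)) i

lemma initExtension_injective : Function.Injective (initExtension K r) := by
  intro k m hkm
  by_contra hne
  set f := aeval (R := K) (Sum.elim (fun i => X (Sum.inl i)) fun l : Fin r =>
    (X (Sum.inl k) ^ (l : ℕ) : MvPolynomial (Fin (r + 1) ⊕ Fin r) K))
  have hval (m : Fin (r + 1)) : f (initExtension K r m) =
      X (Sum.inl k) ^ r - ∏ i, (X (Sum.inl k) - X (Sum.inl (m.succAbove i))) := by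
    rw [← pow_sub_sum_rootCoeff, sub_sub_cancel, initExtension, map_sum]
    refine Finset.sum_congr rfl fun l _ => ?_
    rw [map_mul, aeval_sumElim_rootCoeff]
    simp [f]
  have hzero : ∏ i : Fin r, (X (Sum.inl k) - X (Sum.inl (m.succAbove i))) =
      (0 : MvPolynomial (Fin (r + 1) ⊕ Fin r) K) := by
    obtain ⟨i, hi⟩ := Fin.exists_succAbove_eq hne
    exact Finset.prod_eq_zero (Finset.mem_univ i) (by rw [hi, sub_self])
  have heq := congrArg f hkm
  rw [hval, hval, hzero, sub_right_inj, Finset.prod_eq_zero_iff] at heq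
  obtain ⟨i, _, hi⟩ := heq
  exact Fin.succAbove_ne k i (Sum.inl_injective (X_injective (sub_eq_zero.1 hi))).symm

end

lemma aeval_eq_zero_of_forall_support {K L σ : Type*} [CommRing K] [CommRing L] [Algebra K L]
    {g : σ → L} {i : σ} (hg : g i = 0) {f : MvPolynomial σ K} (hf : ∀ m ∈ f.support, m i ≠ 0) :
    aeval g f = 0 := by
  rw [aeval_def, eval₂_eq]
  refine Finset.sum_eq_zero fun m hm => ?_
  rw [Finset.prod_eq_zero (Finsupp.mem_support_iff.2 (hf m hm)) (by rw [hg, zero_pow (hf m hm)]),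
    mul_zero]

lemma rename_rootParam (σ : Equiv.Perm (Fin r)) (w : RecurrenceRing K r) :
    rename (Sum.map σ σ) (rootParam K r w) = rootParam K r w := by
  suffices h : (rename (Sum.map σ σ)).comp (rootParam K r) = rootParam K r from
    DFunLike.congr_fun h w
  ext i : 1
  rcases i with i | i
  · rw [AlgHom.comp_apply, ← coeffVar, rootParam_coeffVar, ← AlgHom.coe_toRingHom, map_rootCoeff]
    simpa using rootCoeff_comp_perm (fun k => X (Sum.inl k)) σ i
  · simpa [rootParam] using
      Equiv.sum_comp σ fun k => (X (Sum.inr k) * X (Sum.inl k) ^ (i : ℕ) : RecurrenceRing K r)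

variable {K r} in
lemma apply_inr_last_ne_zero_of_weight_neg {N : ℕ} {m : Fin (r + 1) ⊕ Fin (r + 1) →₀ ℕ}
    (hm : Finsupp.weight (lastRootWeight (r + 1) N) m < 0) : m (Sum.inr (Fin.last r)) ≠ 0 := by
  contrapose! hm
  rw [weight_eq_sum]
  refine Finset.sum_nonneg fun i _ => ?_
  rcases i with i | i
  · simp only [lastRootWeight, Sum.elim_inl]
    split_ifs <;> simp
  · cases i using Fin.lastCases with
    | last => simp [hm]
    | cast i => simp [lastRootWeight, i.2.ne]

variable {K r} in
lemma killAmplitude_rootParam_eq_zero {N : ℕ} {w : RecurrenceRing K (r + 1)}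
    (hw : w ∈ rootDegreeLE (lastRootWeight (r + 1) N) (-1)) :
    killAmplitude K r k (rootParam K (r + 1) w) = 0 := by
  rw [← rename_rootParam K (r + 1) (Equiv.swap k (Fin.last r)), killAmplitude, aeval_rename]
  exact aeval_eq_zero_of_forall_support (i := Sum.inr (Fin.last r)) (by simp) fun m hm =>
    apply_inr_last_ne_zero_of_weight_neg ((hw hm).trans_lt (by norm_num))

variable {K r}

lemma vanishingAmplitude_eq_zero [IsDomain K] {N : ℕ} {w : RecurrenceRing K (r + 1)}
    (hw : w ∈ rootDegreeLE (lastRootWeight (r + 1) N) (-1)) : vanishingAmplitude K r k w = 0 := by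
  refine otherAmplitudes_injective K r k ?_
  rw [map_zero, ← killAmplitude_rootParam_eq_zero k hw]
  exact DFunLike.congr_fun (otherAmplitudes_comp_vanishingAmplitude K r k) w

-- As a polynomial in the last initial value, the Hankel minor is monic up to a unit of degree
-- `r + 1`, and its `r + 1` roots are the values for which one of the amplitudes vanishes.
lemma hankelDet_dvd [IsDomain K] {N : ℕ} {w : RecurrenceRing K (r + 1)}
    (hw : w ∈ rootDegreeLE (lastRootWeight (r + 1) N) (-1)) :
    hankelDet (r + 1) (genSeq K (r + 1)) 0 ∣ w := by
  set g : Fin (r + 1) ⊕ Fin r → MvPolynomial (Fin (r + 1) ⊕ Fin r) K :=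
    Sum.elim (rootCoeff fun k => X (Sum.inl k)) fun j => X (Sum.inr j)
  have hmem (j) : g j ∈ Algebra.adjoin K (Set.range g) := Algebra.subset_adjoin ⟨j, rfl⟩
  have hinj : Function.Injective (aeval (R := K) g) := by
    refine injective_aeval_of_isAlgebraic (Sum.rec (fun i => ?_) fun i => ?_)
    · exact (isIntegral_root (A := Algebra.adjoin K (Set.range g))
        (s := fun k => X (Sum.inl k)) (fun j => ⟨⟨_, hmem (Sum.inl j)⟩, rfl⟩) i).isAlgebraic
    · exact isAlgebraic_algebraMap
        (⟨_, hmem (Sum.inr i)⟩ : Algebra.adjoin K (Set.range g))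
  have heval (k : Fin (r + 1)) (v : RecurrenceRing K (r + 1)) :
      (lastInitEquiv K r v).eval₂ (aeval (R := K) g).toRingHom (initExtension K r k) =
        vanishingAmplitude K r k v := by
    rw [map_lastInitEquiv, vanishingAmplitude]
    simp [g]
  have hdet := hankelDet_mem_lastRootWeight (K := K) r 0
  obtain ⟨hdeg, hlead⟩ := natDegree_lastInitEquiv_hankelDet_le K r
  rw [← map_dvd_iff (lastInitEquiv K r)]
  refine dvd_of_eval₂_eq_zero hinj (initExtension_injective K r) (by simpa using hdeg)
    (by simpa using hlead) (fun k => ?_) fun k => ?_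
  · exact (heval k _).trans (vanishingAmplitude_eq_zero k hdet)
  · exact (heval k _).trans (vanishingAmplitude_eq_zero k hw)

end VanishingAmplitude

/-! ### Generation by the first terms of the sequence -/

section FirstCoeff

variable (K : Type*) [CommRing K] (r : ℕ)

/-- The reduction modulo the coefficient `a 0`: a recurrence of order `r + 1` with `a 0 = 0` is a
recurrence of order `r` for the sequence shifted by one step, whose term of index `0` is left
arbitrary and becomes the polynomial variable. -/
noncomputable def modFirstCoeff : RecurrenceRing K (r + 1) →ₐ[K] Polynomial (RecurrenceRing K r) :=
  aeval (Sum.elim (Fin.cons 0 fun i => Polynomial.C (X (Sum.inl i)))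
    (Fin.cons Polynomial.X fun i => Polynomial.C (X (Sum.inr i))))

lemma modFirstCoeff_coeffVar_zero : modFirstCoeff K r (coeffVar K (r + 1) 0) = 0 := by
  simp [modFirstCoeff, coeffVar]

lemma modFirstCoeff_coeffVar_succ (i : Fin r) :
    modFirstCoeff K r (coeffVar K (r + 1) i.succ) = Polynomial.C (coeffVar K r i) := by
  simp [modFirstCoeff, coeffVar]

lemma modFirstCoeff_genSeq_zero : modFirstCoeff K r (genSeq K (r + 1) 0) = Polynomial.X := by
  have h := genSeq_of_lt K (r + 1) 0
  rw [Fin.val_zero] at h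
  simp [h, modFirstCoeff]

lemma modFirstCoeff_genSeq_succ (j : ℕ) :
    modFirstCoeff K r (genSeq K (r + 1) (j + 1)) = Polynomial.C (genSeq K r j) := by
  refine map_genSeq (modFirstCoeff K r).toRingHom
    (y := fun j => Nat.casesOn (motive := fun _ => Polynomial (RecurrenceRing K r)) j
      Polynomial.X fun j => Polynomial.C (genSeq K r j)) (fun j => ?_) (fun i => ?_) (j + 1)
  · have hsol := congrArg Polynomial.C (genSeq_isSolution K r j)
    simp only [map_sum, map_mul] at hsol
    change _ = ∑ i : Fin (r + 1), modFirstCoeff K r (coeffVar K (r + 1) i) * _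
    rw [Fin.sum_univ_succ, modFirstCoeff_coeffVar_zero, zero_mul, zero_add]
    simp only [modFirstCoeff_coeffVar_succ]
    exact hsol
  · cases i using Fin.cases <;> simp [modFirstCoeff, genSeq_of_lt]

variable {K r} in
lemma coeffVar_zero_dvd {f : RecurrenceRing K (r + 1)} (hf : modFirstCoeff K r f = 0) :
    coeffVar K (r + 1) 0 ∣ f := by
  set J := Ideal.span {coeffVar K (r + 1) 0}
  set lift : Polynomial (RecurrenceRing K r) →ₐ[K] RecurrenceRing K (r + 1) :=
    Polynomial.aevalTower (rename (Sum.map Fin.succ Fin.succ)) (X (Sum.inr 0)) with hlift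
  have hcomp : (Ideal.Quotient.mkₐ K J).comp (lift.comp (modFirstCoeff K r)) =
      Ideal.Quotient.mkₐ K J := by
    ext i : 1
    rcases i with i | i
    · cases i using Fin.cases with
      | zero =>
        have hzero : Ideal.Quotient.mkₐ K J (X (Sum.inl 0)) = 0 :=
          Ideal.Quotient.eq_zero_iff_mem.2 (Ideal.subset_span rfl)
        rw [hzero]
        simp [modFirstCoeff]
      | succ i => simp [modFirstCoeff, hlift]
    · cases i using Fin.cases <;> simp [modFirstCoeff, hlift]
  have h := DFunLike.congr_fun hcomp f
  rw [AlgHom.comp_apply, AlgHom.comp_apply, hf, map_zero, map_zero] at h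
  exact Ideal.mem_span_singleton.1 (Ideal.Quotient.eq_zero_iff_mem.1 h.symm)

/-- The roots and amplitudes of the shift of a sequence with first root zero, in terms of those
of the sequence; the polynomial variable goes to the amplitude of the zero root. -/
noncomputable def shiftAmplitudes :
    Polynomial (RecurrenceRing K r) →ₐ[K] RecurrenceRing K (r + 1) :=
  Polynomial.aevalTower (aeval (Sum.elim (fun i => X (Sum.inl i.succ))
    fun j => X (Sum.inr j.succ) * X (Sum.inl j.succ))) (X (Sum.inr 0))

/-- The specialization of the first root to zero, the first amplitude being replaced by the
difference of the term of index `0` and the other amplitudes. -/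
noncomputable def killFirstRoot : RecurrenceRing K (r + 1) →ₐ[K] RecurrenceRing K (r + 1) :=
  aeval (Sum.elim (Fin.cons 0 fun i => X (Sum.inl i.succ))
    (Fin.cons (X (Sum.inr 0) - ∑ i : Fin r, X (Sum.inr i.succ)) fun i => X (Sum.inr i.succ)))

lemma rootCoeff_cons_zero {B : Type*} [CommRing B] (s : Fin r → B) :
    rootCoeff (Fin.cons 0 s : Fin (r + 1) → B) = Fin.cons 0 (rootCoeff s) := by
  ext i
  cases i using Fin.cases <;>
    simp [rootCoeff, Fin.prod_univ_succ, Polynomial.coeff_X_mul]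

lemma shiftAmplitudes_map_modFirstCoeff (f : RecurrenceRing K (r + 1)) :
    shiftAmplitudes K r ((modFirstCoeff K r f).map (rootParam K r).toRingHom) =
      killFirstRoot K r (rootParam K (r + 1) f) := by
  suffices h : (shiftAmplitudes K r).comp
      ((Polynomial.mapAlgHom (rootParam K r)).comp (modFirstCoeff K r)) =
      (killFirstRoot K r).comp (rootParam K (r + 1)) from DFunLike.congr_fun h f
  ext i : 1
  rcases i with i | i
  · simp only [AlgHom.comp_apply]
    rw [← coeffVar, rootParam_coeffVar, killFirstRoot, aeval_sumElim_rootCoeff _ _ fun k => k,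
      rootCoeff_cons_zero]
    cases i using Fin.cases with
    | zero => simp [modFirstCoeff_coeffVar_zero]
    | succ i =>
      rw [modFirstCoeff_coeffVar_succ, Polynomial.coe_mapAlgHom, Polynomial.map_C,
        shiftAmplitudes, Polynomial.aevalTower_C]
      exact (congrArg _ (rootParam_coeffVar K r i)).trans
        (aeval_sumElim_rootCoeff _ _ (fun k => k) i)
  · cases i using Fin.cases with
    | zero => simp [modFirstCoeff, shiftAmplitudes, killFirstRoot, rootParam, Fin.sum_univ_succ]
    | succ i =>
      simp [modFirstCoeff, shiftAmplitudes, killFirstRoot, rootParam, Fin.sum_univ_succ, pow_succ']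
      simp only [mul_assoc]

/-- The exponent of the image under `shiftAmplitudes` of the monomial with exponents `m` and
`i`. -/
noncomputable def shiftExponent (m : Fin r ⊕ Fin r →₀ ℕ) (i : ℕ) :
    Fin (r + 1) ⊕ Fin (r + 1) →₀ ℕ :=
  Finsupp.equivFunOnFinite.symm (Sum.elim (Fin.cons 0 fun k => m (Sum.inl k) + m (Sum.inr k))
    (Fin.cons i fun k => m (Sum.inr k)))

lemma shiftExponent_inj {m m' : Fin r ⊕ Fin r →₀ ℕ} {i i' : ℕ} :
    shiftExponent r m i = shiftExponent r m' i' ↔ m = m' ∧ i = i' := by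
  refine ⟨fun h => ?_, by rintro ⟨rfl, rfl⟩; rfl⟩
  have happ := DFunLike.congr_fun h
  have hinr (k : Fin r) : m (Sum.inr k) = m' (Sum.inr k) := by
    simpa [shiftExponent] using happ (Sum.inr k.succ)
  refine ⟨Finsupp.ext (Sum.rec (fun k => ?_) hinr), by
    simpa [shiftExponent] using happ (Sum.inr 0)⟩
  simpa [shiftExponent, hinr] using happ (Sum.inl k.succ)

lemma shiftAmplitudes_monomial (i : ℕ) (m : Fin r ⊕ Fin r →₀ ℕ) (c : K) :
    shiftAmplitudes K r (Polynomial.monomial i (monomial m c)) =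
      monomial (shiftExponent r m i) c := by
  rw [← Polynomial.C_mul_X_pow_eq_monomial, shiftAmplitudes, map_mul, map_pow,
    Polynomial.aevalTower_X, Polynomial.aevalTower_C, aeval_monomial, monomial_eq,
    Finsupp.prod_fintype _ _ fun _ => pow_zero _, Finsupp.prod_fintype _ _ fun _ => pow_zero _,
    Fintype.prod_sum_type, Fintype.prod_sum_type, Fin.prod_univ_succ, Fin.prod_univ_succ]
  simp only [shiftExponent, Sum.elim_inl, Sum.elim_inr, Finsupp.equivFunOnFinite_symm_apply_apply,
    Fin.cons_zero, Fin.cons_succ, pow_zero, one_mul, algebraMap_eq, mul_pow, pow_add,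
    Finset.prod_mul_distrib]
  ring

lemma coeff_shiftAmplitudes (f : Polynomial (RecurrenceRing K r)) (m : Fin r ⊕ Fin r →₀ ℕ)
    (i : ℕ) : coeff (shiftExponent r m i) (shiftAmplitudes K r f) = coeff m (f.coeff i) := by
  classical
  induction f using Polynomial.induction_on' with
  | add p q hp hq => simp only [map_add, coeff_add, hp, hq, Polynomial.coeff_add]
  | monomial n a =>
    induction a using MvPolynomial.induction_on' with
    | add p q hp hq =>
      rw [map_add, map_add, coeff_add, hp, hq, ← coeff_add, ← Polynomial.coeff_add]
    | monomial u c =>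
      rw [shiftAmplitudes_monomial, coeff_monomial, Polynomial.coeff_monomial]
      simp only [shiftExponent_inj]
      by_cases hn : n = i <;> simp [hn, coeff_monomial]

variable {K r}

lemma killFirstRoot_mem_weightedDegreeLE {w : Fin (r + 1) ⊕ Fin (r + 1) → ℤ}
    (hw : ∀ i : Fin r, w (Sum.inr i.succ) ≤ w (Sum.inr 0)) {j : ℤ} {f : RecurrenceRing K (r + 1)}
    (hf : f ∈ weightedDegreeLE w j) : killFirstRoot K r f ∈ weightedDegreeLE w j := by
  refine aeval_mem_weightedDegreeLE (fun i => ?_) hf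
  rcases i with i | i
  · cases i using Fin.cases with
    | zero => exact zero_mem _
    | succ i => exact X_mem_weightedDegreeLE le_rfl
  · cases i using Fin.cases with
    | zero =>
      exact sub_mem (X_mem_weightedDegreeLE le_rfl)
        (Submodule.sum_mem _ fun i _ => X_mem_weightedDegreeLE (hw i))
    | succ i => exact X_mem_weightedDegreeLE le_rfl

lemma coeff_modFirstCoeff_mem_rootDegreeLE {w : Fin (r + 1) ⊕ Fin (r + 1) → ℤ}
    (hw : ∀ i : Fin r, w (Sum.inr i.succ) ≤ w (Sum.inr 0)) {j : ℤ} {f : RecurrenceRing K (r + 1)}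
    (hf : f ∈ rootDegreeLE w j) (i : ℕ) :
    (modFirstCoeff K r f).coeff i ∈ rootDegreeLE (Sum.elim (fun k => w (Sum.inl k.succ))
      fun k => w (Sum.inr k.succ) + w (Sum.inl k.succ)) (j - i * w (Sum.inr 0)) := by
  refine mem_weightedDegreeLE.2 fun m hm => ?_
  have hcoeff : coeff (shiftExponent r m i) (killFirstRoot K r (rootParam K (r + 1) f)) ≠ 0 := by
    rwa [← shiftAmplitudes_map_modFirstCoeff, coeff_shiftAmplitudes, Polynomial.coeff_map]
  have hweight := mem_weightedDegreeLE.1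
    (killFirstRoot_mem_weightedDegreeLE hw (mem_rootDegreeLE.1 hf)) _ hcoeff
  simp only [weight_eq_sum, Fintype.sum_sum_type, Fin.sum_univ_succ (n := r), shiftExponent,
    Finsupp.equivFunOnFinite_symm_apply_apply, Sum.elim_inl, Sum.elim_inr, Fin.cons_zero,
    Fin.cons_succ, Nat.cast_add, add_mul, mul_add, Finset.sum_add_distrib] at hweight ⊢
  push_cast at hweight
  linarith

lemma coeff_modFirstCoeff_mem_ampWeight {d : ℤ} {f : RecurrenceRing K (r + 1)}
    (hf : f ∈ rootDegreeLE (ampWeight (r + 1)) d) (i : ℕ) :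
    (modFirstCoeff K r f).coeff i ∈ rootDegreeLE (ampWeight r) (d - i) := by
  have hweight : Sum.elim (fun k : Fin r => ampWeight (r + 1) (Sum.inl k.succ))
      (fun k => ampWeight (r + 1) (Sum.inr k.succ) + ampWeight (r + 1) (Sum.inl k.succ)) =
      ampWeight r := funext (Sum.rec (by simp [ampWeight]) (by simp [ampWeight]))
  have h := coeff_modFirstCoeff_mem_rootDegreeLE (by simp [ampWeight]) hf i
  rw [hweight] at h
  simpa [ampWeight] using h

lemma coeff_modFirstCoeff_mem_lastRootWeight {N j : ℕ} {f : RecurrenceRing K (r + 1)}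
    (hf : f ∈ rootDegreeLE (lastRootWeight (r + 1) (N + 1)) j) (i : ℕ) :
    (modFirstCoeff K r f).coeff i ∈ rootDegreeLE (lastRootWeight r N) j := by
  obtain _ | r := r
  · exact mem_weightedDegreeLE.2 fun m _ => by simp [weight_eq_sum]
  · have hweight : Sum.elim (fun k => lastRootWeight (r + 2) (N + 1) (Sum.inl k.succ))
        (fun k => lastRootWeight (r + 2) (N + 1) (Sum.inr k.succ) +
          lastRootWeight (r + 2) (N + 1) (Sum.inl k.succ)) = lastRootWeight (r + 1) N := by
      refine funext (Sum.rec (by simp [lastRootWeight]) fun k => ?_)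
      simp only [lastRootWeight, Sum.elim_inl, Sum.elim_inr, Fin.val_succ, add_left_inj]
      split_ifs
      · push_cast
        ring
      · exact add_zero 0
    have h := coeff_modFirstCoeff_mem_rootDegreeLE (fun i => ?_) hf i
    · rw [hweight] at h
      simpa [lastRootWeight] using h
    · simp only [lastRootWeight, Sum.elim_inr, Fin.val_succ, Fin.val_zero]
      split_ifs <;> push_cast <;> omega

end FirstCoeff

section Generation

variable (K : Type*) [CommRing K] (r N : ℕ)

/-- The elements of degree at most `j` for the weight of the last root, and at most `d` in the
amplitudes. -/
noncomputable def bidegreeLE (j d : ℤ) : Submodule K (RecurrenceRing K r) :=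
  rootDegreeLE (lastRootWeight r N) j ⊓ rootDegreeLE (ampWeight r) d

/-- The span of `1` and of the coefficients of the recurrence. -/
noncomputable def coeffSpan : Submodule K (RecurrenceRing K r) :=
  Submodule.span K (insert 1 (Set.range (coeffVar K r)))

/-- The span of `1` and of the first `N` terms of the generic sequence. -/
noncomputable def termSpan : Submodule K (RecurrenceRing K r) :=
  Submodule.span K (insert 1 (genSeq K r '' {j | j < N}))

variable {K r N}

lemma coeffVar_mem_coeffSpan (i : Fin r) : coeffVar K r i ∈ coeffSpan K r :=
  Submodule.subset_span (Set.mem_insert_of_mem _ ⟨i, rfl⟩)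

lemma genSeq_mem_termSpan {j : ℕ} (hj : j < N) : genSeq K r j ∈ termSpan K r N :=
  Submodule.subset_span (Set.mem_insert_of_mem _ ⟨j, hj, rfl⟩)

lemma one_le_coeffSpan : 1 ≤ coeffSpan K r :=
  Submodule.one_le.2 (Submodule.subset_span (Set.mem_insert _ _))

lemma one_le_termSpan : 1 ≤ termSpan K r N :=
  Submodule.one_le.2 (Submodule.subset_span (Set.mem_insert _ _))

lemma pow_mul_pow_le_rootDegreeLE {w : Fin r ⊕ Fin r → ℤ} {S T : Submodule K (RecurrenceRing K r)}
    {i k : ℤ} (hS : S ≤ rootDegreeLE w i) (hT : T ≤ rootDegreeLE w k) (j d : ℕ) :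
    S ^ j * T ^ d ≤ rootDegreeLE w (j * i + d * k) := by
  have hpow {S : Submodule K (RecurrenceRing K r)} {i : ℤ} (hS : S ≤ rootDegreeLE w i) (n : ℕ) :
      S ^ n ≤ rootDegreeLE w (n * i) := by
    induction n with
    | zero =>
      rw [pow_zero, Submodule.one_le, mem_rootDegreeLE, map_one]
      exact one_mem_weightedDegreeLE (by simp)
    | succ n ih =>
      rw [pow_succ, Submodule.mul_le]
      exact fun f hf g hg => mul_mem_rootDegreeLE (ih hf) (hS hg) (by push_cast; linarith)
  exact Submodule.mul_le.2 fun f hf g hg =>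
    mul_mem_rootDegreeLE (hpow hS j hf) (hpow hT d hg) le_rfl

lemma coeffSpan_pow_mul_termSpan_pow_le (j d : ℕ) :
    coeffSpan K r ^ j * termSpan K r N ^ d ≤ bidegreeLE K r N j d := by
  have hone (w : Fin r ⊕ Fin r → ℤ) {i : ℤ} (hi : 0 ≤ i) : 1 ∈ rootDegreeLE (K := K) w i := by
    rw [mem_rootDegreeLE, map_one]
    exact one_mem_weightedDegreeLE hi
  have hcoeff (w : Fin r ⊕ Fin r → ℤ) {i : ℤ} (hi : 0 ≤ i)
      (h : ∀ k, coeffVar K r k ∈ rootDegreeLE w i) : coeffSpan K r ≤ rootDegreeLE w i := by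
    refine Submodule.span_le.2 (Set.insert_subset (hone w hi) ?_)
    rintro _ ⟨k, rfl⟩
    exact h k
  have hterm (w : Fin r ⊕ Fin r → ℤ) {i : ℤ} (hi : 0 ≤ i)
      (h : ∀ k < N, genSeq K r k ∈ rootDegreeLE w i) : termSpan K r N ≤ rootDegreeLE w i := by
    refine Submodule.span_le.2 (Set.insert_subset (hone w hi) ?_)
    rintro _ ⟨k, hk, rfl⟩
    exact h k hk
  refine le_inf ?_ ?_
  · simpa using pow_mul_pow_le_rootDegreeLE (hcoeff _ zero_le_one coeffVar_mem_lastRootWeight)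
      (hterm _ le_rfl fun k hk => genSeq_mem_lastRootWeight hk) j d
  · simpa using pow_mul_pow_le_rootDegreeLE (hcoeff _ le_rfl coeffVar_mem_ampWeight)
      (hterm _ zero_le_one fun k _ => genSeq_mem_ampWeight k) j d

lemma hankelDet_mul_mem_minorSpan (k : ℕ) {y : RecurrenceRing K (r + 1)}
    (hy : y ∈ coeffSpan K (r + 1) ^ k) :
    hankelDet (r + 1) (genSeq K (r + 1)) 0 * y ∈
      minorSpan K (r + 1) (genSeq K (r + 1)) (r + k) := by
  induction k generalizing y with
  | zero =>
    obtain ⟨c, rfl⟩ := Submodule.mem_one.1 ((pow_zero (coeffSpan K (r + 1))).le hy)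
    rw [mul_comm, ← Algebra.smul_def]
    exact Submodule.smul_mem _ _ (hankelDet_zero_mem_minorSpan _ (by omega))
  | succ k ih =>
    rw [pow_succ'] at hy
    refine Submodule.mul_induction_on hy (fun u hu v hv => ?_) fun u v hu hv => ?_
    · refine Submodule.span_induction (p := fun u _ => hankelDet _ _ _ * (u * v) ∈ _) ?_ ?_ ?_ ?_ hu
      · rintro _ (rfl | ⟨i, rfl⟩)
        · rw [one_mul]
          exact minorSpan_mono _ _ (by omega) (ih hv)
        · rw [mul_left_comm]
          exact mul_mem_minorSpan (genSeq_isSolution K (r + 1)) _ i (ih hv)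
      · simp
      · exact fun a b _ _ ha hb => by simpa only [add_mul, mul_add] using add_mem ha hb
      · exact fun c a _ ha => by
          simpa only [smul_mul_assoc, mul_smul_comm] using Submodule.smul_mem _ c ha
    · rw [mul_add]
      exact add_mem hu hv

lemma minorSpan_le_termSpan_pow {m : ℕ} (hN : r + m ≤ N) :
    minorSpan K r (genSeq K r) m ≤ termSpan K r N ^ r := by
  refine Submodule.span_le.2 ?_
  rintro _ ⟨b, hb, rfl⟩
  rw [seqMinor, SetLike.mem_coe, det_apply]
  refine Submodule.sum_mem _ fun σ _ => ?_
  rw [Units.smul_def]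
  refine zsmul_mem (Submodule.pow_subset_pow _ (Set.mem_pow.2 ⟨fun i =>
    ⟨genSeq K r (σ i + b i), genSeq_mem_termSpan ?_⟩, List.prod_ofFn⟩)) _
  have := hb i
  omega

lemma hankelDet_mul_mem_termSpan_pow {h d : ℕ} {v : RecurrenceRing K (r + 1)}
    (hv : v ∈ coeffSpan K (r + 1) ^ (h + 1) * termSpan K (r + 1) (2 * (r + 1) + h) ^ d) :
    hankelDet (r + 1) (genSeq K (r + 1)) 0 * v ∈
      termSpan K (r + 1) (2 * (r + 1) + h) ^ (r + 1 + d) := by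
  refine Submodule.mul_induction_on hv (fun f hf g hg => ?_) fun f g hf hg => ?_
  · rw [← mul_assoc, pow_add]
    exact Submodule.mul_mem_mul
      (minorSpan_le_termSpan_pow (by omega) (hankelDet_mul_mem_minorSpan _ hf)) hg
  · rw [mul_add (hankelDet _ _ _)]
    exact add_mem hf hg

lemma exists_modFirstCoeff_eq {j d : ℕ} {f : Polynomial (RecurrenceRing K r)}
    (hf : ∀ i ≤ d, f.coeff i ∈ coeffSpan K r ^ j * termSpan K r N ^ (d - i))
    (hdeg : ∀ i, d < i → f.coeff i = 0) :
    ∃ y ∈ coeffSpan K (r + 1) ^ j * termSpan K (r + 1) (N + 1) ^ d, modFirstCoeff K r y = f := by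
  set C := (Polynomial.CAlgHom (R := K) (A := RecurrenceRing K r)).toLinearMap
  set ρ := (modFirstCoeff K r).toLinearMap
  have hcoeff : (coeffSpan K r).map C ≤ (coeffSpan K (r + 1)).map ρ := by
    rw [coeffSpan, Submodule.map_span, Submodule.span_le]
    rintro _ ⟨_, rfl | ⟨i, rfl⟩, rfl⟩
    · exact ⟨1, Submodule.one_le.1 one_le_coeffSpan, by simp [ρ, C]⟩
    · exact ⟨_, coeffVar_mem_coeffSpan i.succ, modFirstCoeff_coeffVar_succ K r i⟩
  have hterm : (termSpan K r N).map C ≤ (termSpan K (r + 1) (N + 1)).map ρ := by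
    rw [termSpan, Submodule.map_span, Submodule.span_le]
    rintro _ ⟨_, rfl | ⟨i, hi, rfl⟩, rfl⟩
    · exact ⟨1, Submodule.one_le.1 one_le_termSpan, by simp [ρ, C]⟩
    · exact ⟨_, genSeq_mem_termSpan (Nat.succ_lt_succ hi), modFirstCoeff_genSeq_succ K r i⟩
  have hX : Polynomial.X ∈ (termSpan K (r + 1) (N + 1)).map ρ :=
    ⟨_, genSeq_mem_termSpan N.succ_pos, modFirstCoeff_genSeq_zero K r⟩
  suffices f ∈ (coeffSpan K (r + 1) ^ j * termSpan K (r + 1) (N + 1) ^ d).map ρ from this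
  rw [f.as_sum_range_C_mul_X_pow]
  refine Submodule.sum_mem _ fun i _ => ?_
  rcases le_or_gt i d with hi | hi
  · have hCf : Polynomial.C (f.coeff i) ∈
        (coeffSpan K r ^ j * termSpan K r N ^ (d - i)).map C := ⟨_, hf i hi, rfl⟩
    rw [Submodule.map_mul, Submodule.map_pow, Submodule.map_pow] at hCf ⊢
    have hmul := Submodule.mul_mem_mul
      (mul_le_mul' (pow_le_pow_left' hcoeff j) (pow_le_pow_left' hterm (d - i)) hCf)
      (Submodule.pow_mem_pow _ hX i)
    rwa [mul_assoc, ← pow_add, Nat.sub_add_cancel hi] at hmul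
  · simp [hdeg i hi]

variable [IsDomain K]

lemma eq_zero_of_mem_ampWeight_neg {d : ℤ} (hd : d < 0) {f : RecurrenceRing K r}
    (hf : f ∈ rootDegreeLE (ampWeight r) d) : f = 0 := by
  refine rootParam_injective K r ((MvPolynomial.eq_zero_iff.2 fun m => ?_).trans (map_zero _).symm)
  by_contra hm
  have hle := mem_weightedDegreeLE.1 (mem_rootDegreeLE.1 hf) m hm
  have hnonneg : 0 ≤ Finsupp.weight (ampWeight r) m :=
    weight_nonneg (Sum.rec (by simp [ampWeight]) (by simp [ampWeight])) m
  omega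

lemma exists_eq_add_coeffVar_zero_mul
    (hgen : ∀ j d : ℕ, bidegreeLE K r N j d ≤ coeffSpan K r ^ j * termSpan K r N ^ d) {j d : ℕ}
    {M : ℕ} (hM : M = N + 1) {f : RecurrenceRing K (r + 1)}
    (hf : f ∈ bidegreeLE K (r + 1) M j d) :
    ∃ y ∈ coeffSpan K (r + 1) ^ j * termSpan K (r + 1) M ^ d,
      ∃ v ∈ bidegreeLE K (r + 1) M (j - 1) d, f = y + coeffVar K (r + 1) 0 * v := by
  subst hM
  obtain ⟨y, hy, hyf⟩ := exists_modFirstCoeff_eq (N := N) (j := j) (d := d)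
    (f := modFirstCoeff K r f)
    (fun i hi => hgen _ _ ⟨coeff_modFirstCoeff_mem_lastRootWeight hf.1 i,
      Nat.cast_sub (R := ℤ) hi ▸ coeff_modFirstCoeff_mem_ampWeight hf.2 i⟩)
    fun i hi => eq_zero_of_mem_ampWeight_neg (by omega) (coeff_modFirstCoeff_mem_ampWeight hf.2 i)
  obtain ⟨v, hv⟩ := coeffVar_zero_dvd (f := f - y) (by rw [map_sub, hyf, sub_self])
  have hmem : coeffVar K (r + 1) 0 * v ∈ bidegreeLE K (r + 1) (N + 1) j d :=
    hv ▸ sub_mem hf (coeffSpan_pow_mul_termSpan_pow_le j d hy)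
  have hlast : v ∈ rootDegreeLE (lastRootWeight (r + 1) (N + 1)) (j - 1) :=
    mem_rootDegreeLE_of_mul_mem coeffVar_zero_notMem_lastRootWeight
      (rootDegreeLE_mono (by omega) hmem.1)
  have hamp : v ∈ rootDegreeLE (ampWeight (r + 1)) d :=
    mem_rootDegreeLE_of_mul_mem coeffVar_zero_notMem_ampWeight
      (rootDegreeLE_mono (by omega) hmem.2)
  exact ⟨y, hy, v, ⟨hlast, hamp⟩, by rw [← hv]; ring⟩

lemma exists_eq_hankelDet_mul {h : ℕ} {d : ℤ} {f : RecurrenceRing K (r + 1)}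
    (hf : f ∈ bidegreeLE K (r + 1) (2 * (r + 1) + h) (-1) d) :
    ∃ g ∈ bidegreeLE K (r + 1) (2 * (r + 1) + h) h (d - (r + 1 : ℕ)),
      f = hankelDet (r + 1) (genSeq K (r + 1)) 0 * g := by
  obtain ⟨g, rfl⟩ := hankelDet_dvd hf.1
  refine ⟨g, ⟨?_, ?_⟩, rfl⟩
  · exact mem_rootDegreeLE_of_mul_mem (hankelDet_notMem_lastRootWeight r h)
      (rootDegreeLE_mono (by omega) hf.1)
  · exact mem_rootDegreeLE_of_mul_mem (hankelDet_notMem_ampWeight (r + 1))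
      (rootDegreeLE_mono (by omega) hf.2)

variable (K)

lemma bidegreeLE_le (r h j d : ℕ) : bidegreeLE K r (2 * r + h) j d ≤
    coeffSpan K r ^ j * termSpan K r (2 * r + h) ^ d := by
  induction r generalizing h j d with
  | zero =>
    have hone : 1 ≤ coeffSpan K 0 ^ j * termSpan K 0 (2 * 0 + h) ^ d :=
      one_le_mul (one_le_pow_of_one_le' one_le_coeffSpan j)
        (one_le_pow_of_one_le' one_le_termSpan d)
    exact fun f _ => hone (Submodule.mem_one.2 ⟨_, (eq_C_of_isEmpty f).symm⟩)
  | succ r ihr =>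
    induction d using Nat.strong_induction_on generalizing j with
    | _ d ihd =>
    induction j with
    | zero =>
      intro f hf
      obtain ⟨y, hy, v, hv, rfl⟩ := exists_eq_add_coeffVar_zero_mul (ihr (h + 1)) (by omega) hf
      refine add_mem hy ?_
      obtain ⟨g, hg, rfl⟩ := exists_eq_hankelDet_mul (by
        simpa only [Nat.cast_zero, zero_sub] using hv)
      rcases le_or_gt (r + 1) d with hd | hd
      · have hmem := Submodule.mul_mem_mul (coeffVar_mem_coeffSpan 0)
          (ihd (d - (r + 1)) (by omega) h (by simpa only [Nat.cast_sub hd] using hg))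
        rw [← mul_assoc, ← pow_succ'] at hmem
        have hterm := hankelDet_mul_mem_termSpan_pow hmem
        rw [Nat.add_sub_cancel' hd, mul_left_comm] at hterm
        rwa [pow_zero, one_mul]
      · rw [eq_zero_of_mem_ampWeight_neg (by omega) hg.2, mul_zero, mul_zero]
        exact zero_mem _
    | succ j ihj =>
      intro f hf
      obtain ⟨y, hy, v, hv, rfl⟩ := exists_eq_add_coeffVar_zero_mul (ihr (h + 1)) (by omega) hf
      refine add_mem hy ?_
      rw [pow_succ', mul_assoc]
      exact Submodule.mul_mem_mul (coeffVar_mem_coeffSpan 0) (ihj (by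
        simpa only [Nat.cast_succ, add_sub_cancel_right] using hv))

theorem mem_adjoin_genSeq {r h : ℕ} {f : RecurrenceRing K r}
    (hf : f ∈ rootDegreeLE (lastRootWeight r (2 * r + h)) 0) :
    f ∈ Algebra.adjoin K (genSeq K r '' {j | j < 2 * r + h}) := by
  obtain ⟨d, hd⟩ := exists_mem_weightedDegreeLE_natCast (ampWeight r) (rootParam K r f)
  have hmem := bidegreeLE_le K r h 0 d ⟨hf, mem_rootDegreeLE.2 hd⟩
  have hle : termSpan K r (2 * r + h) ≤
      Subalgebra.toSubmodule (Algebra.adjoin K (genSeq K r '' {j | j < 2 * r + h})) :=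
    Submodule.span_le.2 (Set.insert_subset (Subalgebra.one_mem _) Algebra.subset_adjoin)
  rw [pow_zero, one_mul] at hmem
  exact Submodule.pow_induction_on_left _ (C := (· ∈ Algebra.adjoin K _))
    (Subalgebra.algebraMap_mem _) (fun _ _ => add_mem) (fun m hm _ hx => mul_mem (hle hm) hx) hmem

end Generation

/-! ### The Hankel ideal as the kernel of the parametrization -/

section LeadingTerm

variable {r : ℕ}

/-- An increasing sequence without two consecutive integers. -/
def IsTwoSeparated (c : Fin r → ℕ) : Prop := ∀ i j, i < j → c i + 2 ≤ c j

/-- The union of the pairs `{c k, c k + 1}`. -/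
def pairUnion (c : Fin r → ℕ) : Set ℕ := {j | ∃ k, j = c k ∨ j = c k + 1}

lemma IsTwoSeparated.cons {c : Fin r → ℕ} (hc : IsTwoSeparated c) {a : ℕ}
    (ha : ∀ i, a + 2 ≤ c i) : IsTwoSeparated (Fin.cons a c : Fin (r + 1) → ℕ) := by
  intro i j hij
  induction j using Fin.cases with
  | zero => exact absurd hij (Fin.not_lt_zero i)
  | succ j =>
    induction i using Fin.cases with
    | zero => exact ha j
    | succ i => exact hc i j (Fin.succ_lt_succ_iff.1 hij)

lemma IsTwoSeparated.eq_of_pair {c : Fin r → ℕ} (hc : IsTwoSeparated c) {j : ℕ} {a b : Fin r}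
    (ha : j = c a ∨ j = c a + 1) (hb : j = c b ∨ j = c b + 1) : a = b := by
  rcases lt_trichotomy a b with hab | hab | hab
  · have := hc _ _ hab
    omega
  · exact hab
  · have := hc _ _ hab
    omega

/- A greedy choice, from the smallest element upwards, gives one of the two alternatives. -/
lemma exists_subset_pairUnion_or_exists_mem (r b : ℕ) (T : Finset ℕ) (hT : ∀ x ∈ T, b ≤ x) :
    (∃ c : Fin r → ℕ, IsTwoSeparated c ∧ (∀ i, b ≤ c i) ∧ (T : Set ℕ) ⊆ pairUnion c) ∨
      ∃ e : Fin (r + 1) → ℕ, IsTwoSeparated e ∧ ∀ i, e i ∈ T := by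
  induction r generalizing b T with
  | zero =>
    obtain rfl | ⟨x, hx⟩ := T.eq_empty_or_nonempty
    · exact Or.inl ⟨Fin.elim0, fun i => i.elim0, fun i => i.elim0, by simp⟩
    · exact Or.inr ⟨fun _ => x, fun i j hij => by omega, fun _ => hx⟩
  | succ r ih =>
    obtain rfl | hne := T.eq_empty_or_nonempty
    · refine Or.inl ⟨fun i => b + 2 * i, fun i j hij => ?_, fun i => Nat.le_add_right _ _, by simp⟩
      have : (i : ℕ) < j := hij
      lia
    · have hmin := hT _ (T.min'_mem hne)
      rcases ih (T.min' hne + 2) (T.filter (T.min' hne + 2 ≤ ·))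
        fun x hx => (Finset.mem_filter.1 hx).2 with ⟨c, hc, hle, hcover⟩ | ⟨e, he, hmem⟩
      · refine Or.inl ⟨Fin.cons (T.min' hne) c, hc.cons hle, ?_, fun x hx => ?_⟩
        · exact Fin.cases hmin fun i => le_trans (by omega) (hle i)
        · by_cases hx2 : T.min' hne + 2 ≤ x
          · obtain ⟨k, hk⟩ := hcover (Finset.mem_filter.2 ⟨hx, hx2⟩)
            exact ⟨k.succ, hk⟩
          · have := T.min'_le x hx
            exact ⟨0, by simp only [Fin.cons_zero]; omega⟩
      · exact Or.inr ⟨Fin.cons (T.min' hne) e,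
          he.cons fun i => (Finset.mem_filter.1 (hmem i)).2,
          Fin.cases (T.min'_mem hne) fun i => (Finset.mem_filter.1 (hmem i)).1⟩

variable {σ τ K : Type*} [CommRing K]

lemma aeval_monomial_sub_aeval_mem_weightedDegreeLE {w : σ → ℤ} {v : τ → ℤ}
    {g g' : σ → MvPolynomial τ K} (hg : ∀ i, g i ∈ weightedDegreeLE v (w i))
    (hg' : ∀ i, g' i ∈ weightedDegreeLE v (w i))
    (hsub : ∀ i, g i - g' i ∈ weightedDegreeLE v (w i - 1)) (m : σ →₀ ℕ) (c : K) :
    aeval g (monomial m c) - aeval g' (monomial m c) ∈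
      weightedDegreeLE v (Finsupp.weight w m - 1) := by
  have hmono {g : σ → MvPolynomial τ K} (hg : ∀ i, g i ∈ weightedDegreeLE v (w i)) (m : σ →₀ ℕ)
      (c : K) : aeval g (monomial m c) ∈ weightedDegreeLE v (Finsupp.weight w m) :=
    aeval_mem_weightedDegreeLE hg (monomial_mem_weightedDegreeLE w m c)
  induction m using Finsupp.induction_linear generalizing c with
  | zero => simp
  | add m m' hm hm' =>
    rw [← mul_one c, ← monomial_mul, map_mul, map_mul, map_add]
    have hsplit := add_mem
      (mul_mem_weightedDegreeLE (hmono hg m c) (hm' 1) (add_sub_assoc _ _ _).ge)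
      (mul_mem_weightedDegreeLE (hm c) (hmono hg' m' 1) (sub_add_eq_add_sub _ _ _).le)
    convert hsplit using 1
    ring
  | single i n =>
    have hpow : g i ^ n - g' i ^ n ∈ weightedDegreeLE v (n * w i - 1) := by
      induction n with
      | zero => simp
      | succ n ih =>
        have hsplit := add_mem
          (mul_mem_weightedDegreeLE (pow_mem_weightedDegreeLE (hg i) n) (hsub i) le_rfl)
          (mul_mem_weightedDegreeLE ih (hg' i) (k := n * w i + (w i - 1)) (by linarith))
        convert hsplit using 1
        · congr 1
          push_cast
          ring
        · ring
    have hmul := mul_mem_weightedDegreeLE (C_mem_weightedDegreeLE le_rfl c) hpow (zero_add _).le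
    simpa only [aeval_monomial, algebraMap_eq, Finsupp.prod_single_index, pow_zero, ← mul_sub,
      Finsupp.weight_single, nsmul_eq_mul] using hmul

lemma aeval_sub_aeval_mem_weightedDegreeLE {w : σ → ℤ} {v : τ → ℤ}
    {g g' : σ → MvPolynomial τ K} (hg : ∀ i, g i ∈ weightedDegreeLE v (w i))
    (hg' : ∀ i, g' i ∈ weightedDegreeLE v (w i))
    (hsub : ∀ i, g i - g' i ∈ weightedDegreeLE v (w i - 1)) {k : ℤ} {f : MvPolynomial σ K}
    (hf : f ∈ weightedDegreeLE w k) : aeval g f - aeval g' f ∈ weightedDegreeLE v (k - 1) := by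
  rw [f.as_sum, map_sum, map_sum, ← Finset.sum_sub_distrib]
  exact Submodule.sum_mem _ fun m hm => weightedDegreeLE_mono
    (sub_le_sub_right (mem_weightedDegreeLE.1 hf m (mem_support_iff.1 hm)) 1)
    (aeval_monomial_sub_aeval_mem_weightedDegreeLE hg hg' hsub m _)

/-- The weight for which `X (inr k) * X (inl k) ^ j` has weight
`j ^ 2 - (j - c k) * (j - c k - 1)`: this is at most `j ^ 2`, with equality exactly for `j = c k`
and `j = c k + 1`. -/
def pairWeight (c : Fin r → ℕ) : Fin r ⊕ Fin r → ℤ :=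
  Sum.elim (fun k => 2 * c k + 1) fun k => -(c k * (c k + 1))

/-- The part of `∑ k, X (inr k) * X (inl k) ^ j` of top weight for `pairWeight c`. -/
noncomputable def leadingTerm (K : Type*) [CommRing K] (c : Fin r → ℕ) (j : ℕ) :
    MvPolynomial (Fin r ⊕ Fin r) K :=
  ∑ k with (j = c k ∨ j = c k + 1), X (Sum.inr k) * X (Sum.inl k) ^ j

/-- The exponent of the image of the monomial with exponent `u` under `leadingTerm`. -/
noncomputable def leadingExponent (c : Fin r → ℕ) (u : ℕ →₀ ℕ) : Fin r ⊕ Fin r →₀ ℕ :=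
  Finsupp.equivFunOnFinite.symm (Sum.elim
    (fun k => c k * u (c k) + (c k + 1) * u (c k + 1)) fun k => u (c k) + u (c k + 1))

lemma leadingExponent_zero (c : Fin r → ℕ) : leadingExponent c 0 = 0 := by
  ext (k | k) <;> simp [leadingExponent]

lemma leadingExponent_add (c : Fin r → ℕ) (u v : ℕ →₀ ℕ) :
    leadingExponent c (u + v) = leadingExponent c u + leadingExponent c v := by
  ext (k | k) <;> simp [leadingExponent] <;> ring

lemma leadingExponent_single {c : Fin r → ℕ} (hc : IsTwoSeparated c) {j : ℕ} {k : Fin r}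
    (hk : j = c k ∨ j = c k + 1) (n : ℕ) : leadingExponent c (Finsupp.single j n) =
      n • (Finsupp.single (Sum.inr k) 1 + Finsupp.single (Sum.inl k) j) := by
  classical
  have hne {l : Fin r} (hl : k ≠ l) : j ≠ c l ∧ j ≠ c l + 1 :=
    not_or.1 fun h => hl (hc.eq_of_pair hk h)
  ext (l | l) <;> obtain rfl | hl := eq_or_ne k l
  · rcases hk with rfl | rfl <;> simp [leadingExponent, mul_comm n, add_mul]
  · simp [leadingExponent, hne hl, hl]
  · rcases hk with rfl | rfl <;> simp [leadingExponent]
  · simp [leadingExponent, hne hl, hl]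

lemma leadingExponent_injOn {c : Fin r → ℕ} {u v : ℕ →₀ ℕ} (hu : (u.support : Set ℕ) ⊆ pairUnion c)
    (hv : (v.support : Set ℕ) ⊆ pairUnion c) (h : leadingExponent c u = leadingExponent c v) :
    u = v := by
  have hpair (k : Fin r) : u (c k) = v (c k) ∧ u (c k + 1) = v (c k + 1) := by
    have hinl : c k * u (c k) + (c k + 1) * u (c k + 1) = c k * v (c k) + (c k + 1) * v (c k + 1) :=
      DFunLike.congr_fun h (Sum.inl k)
    have hinr : u (c k) + u (c k + 1) = v (c k) + v (c k + 1) := DFunLike.congr_fun h (Sum.inr k)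
    have hsucc : u (c k + 1) = v (c k + 1) := by
      zify at hinl hinr ⊢
      linear_combination hinl - (c k : ℤ) * hinr
    omega
  have heq {j : ℕ} (hj : j ∈ pairUnion c) : u j = v j := by
    obtain ⟨k, rfl | rfl⟩ := hj
    exacts [(hpair k).1, (hpair k).2]
  ext j
  by_cases hju : j ∈ u.support
  · exact heq (hu hju)
  · by_cases hjv : j ∈ v.support
    · exact heq (hv hjv)
    · rw [Finsupp.notMem_support_iff.1 hju, Finsupp.notMem_support_iff.1 hjv]

lemma leadingTerm_eq {c : Fin r → ℕ} (hc : IsTwoSeparated c) {j : ℕ} {k : Fin r}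
    (hk : j = c k ∨ j = c k + 1) : leadingTerm K c j = X (Sum.inr k) * X (Sum.inl k) ^ j := by
  have hfilter : Finset.univ.filter (fun l => j = c l ∨ j = c l + 1) = {k} := by
    ext l
    simpa using ⟨fun hl => hc.eq_of_pair hl hk, fun hl => hl ▸ hk⟩
  rw [leadingTerm, hfilter, Finset.sum_singleton]

lemma leadingTerm_eq_zero {c : Fin r → ℕ} {j : ℕ} (hj : j ∉ pairUnion c) :
    leadingTerm K c j = 0 := by
  rw [leadingTerm, Finset.filter_false_of_mem fun k _ hk => hj ⟨k, hk⟩, Finset.sum_empty]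

lemma support_subset_of_support_add_subset {S : Set σ} {u v : σ →₀ ℕ}
    (h : ((u + v).support : Set σ) ⊆ S) : (u.support : Set σ) ⊆ S ∧ (v.support : Set σ) ⊆ S := by
  constructor <;> refine fun j hj => h (Finset.mem_coe.2 (Finsupp.mem_support_iff.2 fun h0 => ?_))
  · exact Finsupp.mem_support_iff.1 hj (add_eq_zero.1 h0).1
  · exact Finsupp.mem_support_iff.1 hj (add_eq_zero.1 h0).2

lemma aeval_leadingTerm_monomial {c : Fin r → ℕ} (hc : IsTwoSeparated c) {u : ℕ →₀ ℕ}
    (hu : (u.support : Set ℕ) ⊆ pairUnion c) (a : K) :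
    aeval (leadingTerm K c) (monomial u a) = monomial (leadingExponent c u) a := by
  induction u using Finsupp.induction_linear generalizing a with
  | zero => simp [leadingExponent_zero, algebraMap_eq]
  | add u v ihu ihv =>
    obtain ⟨hu, hv⟩ := support_subset_of_support_add_subset hu
    rw [← mul_one a, ← monomial_mul, map_mul, ihu hu, ihv hv, monomial_mul, leadingExponent_add]
  | single j n =>
    obtain rfl | hn := eq_or_ne n 0
    · simp [leadingExponent_zero, algebraMap_eq]
    · obtain ⟨k, hk⟩ : j ∈ pairUnion c := hu (by simp [hn])
      rw [leadingExponent_single hc hk, ← mul_one a, ← C_mul_monomial, ← C_mul_monomial,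
        ← X_pow_eq_monomial, map_mul, map_pow, aeval_X, aeval_C, leadingTerm_eq hc hk,
        X_pow_eq_monomial, X, monomial_mul, monomial_pow, one_mul, one_pow, algebraMap_eq]

lemma aeval_leadingTerm_monomial_eq_zero {c : Fin r → ℕ} {u : ℕ →₀ ℕ}
    (hu : ¬ (u.support : Set ℕ) ⊆ pairUnion c) (a : K) :
    aeval (leadingTerm K c) (monomial u a) = 0 := by
  obtain ⟨j, hj, hjc⟩ := Set.not_subset.1 hu
  rw [aeval_monomial, Finsupp.prod, Finset.prod_eq_zero hj, mul_zero]
  rw [leadingTerm_eq_zero hjc, zero_pow (Finsupp.mem_support_iff.1 hj)]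

lemma coeff_aeval_leadingTerm {c : Fin r → ℕ} (hc : IsTwoSeparated c) {m : ℕ →₀ ℕ}
    (hm : (m.support : Set ℕ) ⊆ pairUnion c) (f : MvPolynomial ℕ K) :
    coeff (leadingExponent c m) (aeval (leadingTerm K c) f) = coeff m f := by
  classical
  induction f using MvPolynomial.induction_on' with
  | add p q hp hq => rw [map_add, coeff_add, coeff_add, hp, hq]
  | monomial u a =>
    by_cases hu : (u.support : Set ℕ) ⊆ pairUnion c
    · rw [aeval_leadingTerm_monomial hc hu, coeff_monomial, coeff_monomial]
      exact if_congr ⟨leadingExponent_injOn hu hm, congrArg _⟩ rfl rfl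
    · rw [aeval_leadingTerm_monomial_eq_zero hu, coeff_zero, coeff_monomial, if_neg]
      rintro rfl
      exact hu hm

lemma weight_leadingExponent {c : Fin r → ℕ} (hc : IsTwoSeparated c) {m : ℕ →₀ ℕ}
    (hm : (m.support : Set ℕ) ⊆ pairUnion c) :
    Finsupp.weight (pairWeight c) (leadingExponent c m) =
      Finsupp.weight (fun j : ℕ => (j : ℤ) ^ 2) m := by
  induction m using Finsupp.induction_linear with
  | zero => simp [leadingExponent_zero]
  | add u v ihu ihv =>
    obtain ⟨hu, hv⟩ := support_subset_of_support_add_subset hm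
    rw [leadingExponent_add, map_add, map_add, ihu hu, ihv hv]
  | single j n =>
    obtain rfl | hn := eq_or_ne n 0
    · simp [leadingExponent_zero]
    · obtain ⟨k, hk⟩ : j ∈ pairUnion c := hm (by simp [hn])
      have hzero : ((j : ℤ) - c k) * (j - c k - 1) = 0 := by
        rw [mul_eq_zero]
        omega
      simp only [leadingExponent_single hc hk, map_nsmul, map_add, Finsupp.weight_single,
        pairWeight, Sum.elim_inl, Sum.elim_inr, nsmul_eq_mul, Nat.cast_one]
      linear_combination -(n : ℤ) * hzero

lemma X_mul_X_pow_mem_weightedDegreeLE (c : Fin r → ℕ) (k : Fin r) (j : ℕ) :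
    (X (Sum.inr k) * X (Sum.inl k) ^ j : MvPolynomial (Fin r ⊕ Fin r) K) ∈
      weightedDegreeLE (pairWeight c) ((j : ℤ) ^ 2 - (j - c k) * (j - c k - 1)) := by
  refine mul_mem_weightedDegreeLE (X_mem_weightedDegreeLE le_rfl)
    (pow_mem_weightedDegreeLE (X_mem_weightedDegreeLE le_rfl) j) (le_of_eq ?_)
  simp only [pairWeight, Sum.elim_inl, Sum.elim_inr]
  ring

lemma leadingTerm_mem_weightedDegreeLE (c : Fin r → ℕ) (s : Finset (Fin r)) (j : ℕ) :
    (∑ k ∈ s, X (Sum.inr k) * X (Sum.inl k) ^ j : MvPolynomial (Fin r ⊕ Fin r) K) ∈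
      weightedDegreeLE (pairWeight c) ((j : ℤ) ^ 2) :=
  Submodule.sum_mem _ fun k _ => weightedDegreeLE_mono
    (by nlinarith [Int.le_self_sq ((j : ℤ) - c k)]) (X_mul_X_pow_mem_weightedDegreeLE c k j)

lemma rootParam_genSeq_sub_leadingTerm_mem_weightedDegreeLE (c : Fin r → ℕ) (j : ℕ) :
    rootParam K r (genSeq K r j) - leadingTerm K c j ∈
      weightedDegreeLE (pairWeight c) ((j : ℤ) ^ 2 - 1) := by
  rw [rootParam_genSeq, leadingTerm,
    ← Finset.sum_filter_add_sum_filter_not Finset.univ fun k => j = c k ∨ j = c k + 1,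
    add_sub_cancel_left]
  refine Submodule.sum_mem _ fun k hk => weightedDegreeLE_mono ?_
    (X_mul_X_pow_mem_weightedDegreeLE c k j)
  have hk := not_or.1 (Finset.mem_filter.1 hk).2
  have hpos : 0 < ((j : ℤ) - c k) * (j - c k - 1) := by
    rcases lt_or_gt_of_ne hk.1 with h | h
    · exact mul_pos_of_neg_of_neg (by omega) (by omega)
    · exact mul_pos (by omega) (by omega)
  linarith

/- Otherwise the image of `f` under the parametrization has, in weight `k`, the nonzero
coefficient `coeff m f` at `leadingExponent c m`. -/
lemma not_subset_pairUnion {c : Fin r → ℕ} (hc : IsTwoSeparated c) {f : MvPolynomial ℕ K}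
    (hf : aeval (genSeq K r) f = 0) {m : ℕ →₀ ℕ} (hm : coeff m f ≠ 0)
    (hfm : f ∈ weightedDegreeLE (fun j : ℕ => (j : ℤ) ^ 2)
      (Finsupp.weight (fun j : ℕ => (j : ℤ) ^ 2) m)) :
    ¬ (m.support : Set ℕ) ⊆ pairUnion c := by
  intro hcover
  have hzero : aeval (fun j => rootParam K r (genSeq K r j)) f = 0 := by
    rw [← comp_aeval_apply, hf, map_zero]
  have hdiff := aeval_sub_aeval_mem_weightedDegreeLE (v := pairWeight c)
    (fun j => (rootParam_genSeq K r j).symm ▸ leadingTerm_mem_weightedDegreeLE c Finset.univ j)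
    (fun j => leadingTerm_mem_weightedDegreeLE c _ j)
    (rootParam_genSeq_sub_leadingTerm_mem_weightedDegreeLE (K := K) c) hfm
  rw [hzero, zero_sub, neg_mem_iff, mem_weightedDegreeLE] at hdiff
  have hle := hdiff (leadingExponent c m) (by rwa [← coeff_aeval_leadingTerm hc hcover f] at hm)
  rw [weight_leadingExponent hc hcover] at hle
  omega

end LeadingTerm

section Kernel

variable (K : Type*) [CommRing K]

/-- The `j`-th variable, extended by zero to all `j : ℕ`. -/
noncomputable def paddedVar (N j : ℕ) : MvPolynomial (Fin N) K :=
  if h : j < N then X ⟨j, h⟩ else 0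

/-- The parametrization of the Hankel determinantal variety: the variables are sent to the first
`N` terms of the generic linear recurrence of order `r`. -/
noncomputable def genSeqMap (r N : ℕ) : MvPolynomial (Fin N) K →ₐ[K] RecurrenceRing K r :=
  aeval fun j : Fin N => genSeq K r j

/-- The ideal of the `(r + 1) × (r + 1)` minors of the `(r + 1) × n` Hankel matrix in `N`
variables; it is meant to be used with `N = n + r`. -/
noncomputable def hankelIdeal (r n N : ℕ) : Ideal (MvPolynomial (Fin N) K) :=
  Ideal.span (Set.range fun g : Fin (r + 1) → Fin n =>
    seqMinor (paddedVar K N) fun b => (g b : ℕ))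

/-- The weight giving the `j`-th variable the weight `j ^ 2`. The strict convexity of the square
makes the diagonal term the leading term of a Hankel minor. -/
def squareWeight (N : ℕ) (j : Fin N) : ℤ := (j : ℤ) ^ 2

variable {K} {r n N : ℕ}

lemma genSeqMap_paddedVar {j : ℕ} (hj : j < N) :
    genSeqMap K r N (paddedVar K N j) = genSeq K r j := by
  simp [genSeqMap, paddedVar, hj]

lemma genSeqMap_seqMinor {s : ℕ} {b : Fin s → ℕ} (hb : ∀ i k : Fin s, i + b k < N) :
    genSeqMap K r N (seqMinor (paddedVar K N) b) = seqMinor (genSeq K r) b := by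
  refine (map_seqMinor (genSeqMap K r N).toRingHom _ _).trans (congrArg det ?_)
  ext1 i k
  exact genSeqMap_paddedVar (hb i k)

lemma hankelIdeal_le_ker (hN : N = n + r) :
    hankelIdeal K r n N ≤ RingHom.ker (genSeqMap K r N) := by
  rw [hankelIdeal, Ideal.span_le]
  rintro _ ⟨g, rfl⟩
  rw [SetLike.mem_coe, RingHom.mem_ker, genSeqMap_seqMinor fun i k => by omega]
  exact seqMinor_eq_zero (genSeq_isSolution K r) _

lemma paddedVar_mem_weightedDegreeLE (N j : ℕ) :
    paddedVar K N j ∈ weightedDegreeLE (squareWeight N) ((j : ℤ) ^ 2) := by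
  unfold paddedVar
  split_ifs
  · exact X_mem_weightedDegreeLE le_rfl
  · exact zero_mem _

lemma IsTwoSeparated.le {e : Fin r → ℕ} (he : IsTwoSeparated e) (i : Fin r) : (i : ℕ) ≤ e i := by
  obtain ⟨i, hi⟩ := i
  induction i with
  | zero => exact Nat.zero_le _
  | succ i ih =>
    have hle := ih (by omega)
    have hstep := he ⟨i, by omega⟩ ⟨i + 1, hi⟩ (Fin.mk_lt_mk.2 i.lt_succ_self)
    simp only at hle ⊢
    omega

lemma IsTwoSeparated.injective {e : Fin r → ℕ} (he : IsTwoSeparated e) :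
    Function.Injective e :=
  fun _ _ hij => he.eq_of_pair (Or.inl rfl) (Or.inl hij)

lemma IsTwoSeparated.strictMono_sub {e : Fin (r + 1) → ℕ} (he : IsTwoSeparated e) :
    StrictMono fun i => e i - (i : ℕ) := by
  refine Fin.strictMono_iff_lt_succ.2 fun i => ?_
  have hstep := he i.castSucc i.succ Fin.castSucc_lt_succ
  have hle := he.le i.castSucc
  simp only [Fin.val_castSucc, Fin.val_succ] at hle ⊢
  omega

/- The rearrangement inequality for `i ↦ i` and `b`. -/
lemma sum_perm_add_sq_lt {b : Fin r → ℕ} (hb : StrictMono b) {s : Equiv.Perm (Fin r)}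
    (hs : s ≠ 1) : ∑ i, ((s i + b i : ℕ) : ℤ) ^ 2 < ∑ i, ((i + b i : ℕ) : ℤ) ^ 2 := by
  have hmono : Monovary (fun i : Fin r => ((i : ℕ) : ℤ)) fun i => (b i : ℤ) :=
    fun i j hij => Int.ofNat_le.2 (hb.lt_iff_lt.1 (Int.ofNat_lt.1 hij)).le
  have hmul : ∑ i, ((s i : ℕ) : ℤ) * b i < ∑ i : Fin r, ((i : ℕ) : ℤ) * b i := by
    refine hmono.sum_comp_perm_mul_lt_sum_mul_iff.2 fun h => hs ?_
    have hsmono : StrictMono s := fun i j hij =>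
      lt_of_le_of_ne (Fin.le_def.2 (Int.ofNat_le.1 (h (Int.ofNat_lt.2 (hb hij)))))
        fun heq => hij.ne (s.injective heq)
    exact Equiv.ext fun i => congrFun hsmono.eq_id i
  have hsq : ∑ i, ((s i : ℕ) : ℤ) ^ 2 = ∑ i : Fin r, ((i : ℕ) : ℤ) ^ 2 :=
    Equiv.sum_comp s fun i : Fin r => ((i : ℕ) : ℤ) ^ 2
  simp only [Nat.cast_add, add_sq, Finset.sum_add_distrib, mul_assoc, ← Finset.mul_sum]
  linarith

lemma prod_sub_seqMinor_mem_weightedDegreeLE {e : Fin (r + 1) → ℕ} (he : IsTwoSeparated e) :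
    ∏ i, paddedVar K N (e i) - seqMinor (paddedVar K N) (fun i => e i - (i : ℕ)) ∈
      weightedDegreeLE (squareWeight N) ((∑ i, (e i : ℤ) ^ 2) - 1) := by
  classical
  have hei (i : Fin (r + 1)) : (i : ℕ) + (e i - (i : ℕ)) = e i := Nat.add_sub_cancel' (he.le i)
  rw [seqMinor, det_apply,
    ← Finset.add_sum_erase _ _ (Finset.mem_univ (1 : Equiv.Perm (Fin (r + 1))))]
  simp only [Equiv.Perm.sign_one, one_smul, Equiv.Perm.one_apply, of_apply, hei]
  rw [sub_add_cancel_left, neg_mem_iff]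
  refine Submodule.sum_mem _ fun s hs => ?_
  have hlt := sum_perm_add_sq_lt he.strictMono_sub (Finset.mem_erase.1 hs).1
  simp only [hei] at hlt
  have hprod : ∏ i, paddedVar K N ((s i : ℕ) + (e i - (i : ℕ))) ∈
      weightedDegreeLE (squareWeight N) ((∑ i, (e i : ℤ) ^ 2) - 1) :=
    weightedDegreeLE_mono (Int.le_sub_one_of_lt hlt)
      (prod_mem_weightedDegreeLE _ fun i _ => paddedVar_mem_weightedDegreeLE N _)
  rcases Int.units_eq_one_or (Equiv.Perm.sign s) with hsign | hsign <;> rw [hsign]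
  · rwa [one_smul]
  · rwa [Units.neg_smul, one_smul, neg_mem_iff]

lemma exists_isTwoSeparated_mem_support {f : MvPolynomial (Fin N) K} (hf : genSeqMap K r N f = 0)
    {m : Fin N →₀ ℕ} (hm : coeff m f ≠ 0)
    (hfm : f ∈ weightedDegreeLE (squareWeight N) (Finsupp.weight (squareWeight N) m)) :
    ∃ e : Fin (r + 1) → Fin N, IsTwoSeparated (fun i => (e i : ℕ)) ∧ ∀ i, e i ∈ m.support := by
  classical
  rcases exists_subset_pairUnion_or_exists_mem r 0 (m.support.image Fin.val) (by simp) with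
    ⟨c, hc, -, hcover⟩ | ⟨e, he, hmem⟩
  · have hweight : Finsupp.weight (fun j : ℕ => (j : ℤ) ^ 2) (m.mapDomain Fin.val) =
        Finsupp.weight (squareWeight N) m := by
      simp [Finsupp.weight_apply, Finsupp.sum_mapDomain_index, add_mul, squareWeight]
    refine absurd (subset_trans (Finset.coe_subset.2 Finsupp.mapDomain_support) hcover)
      (not_subset_pairUnion hc (f := rename Fin.val f) ?_ ?_ ?_)
    · rwa [aeval_rename]
    · rwa [coeff_rename_mapDomain _ Fin.val_injective]
    · rw [hweight, rename_eq_aeval]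
      exact aeval_mem_weightedDegreeLE (fun i => X_mem_weightedDegreeLE le_rfl) hfm
  · have hlift (i) : ∃ j : Fin N, j ∈ m.support ∧ (j : ℕ) = e i := Finset.mem_image.1 (hmem i)
    choose e' hmem' heq using hlift
    exact ⟨e', by simpa only [heq] using he, hmem'⟩

lemma sum_single_one_le_of_mem_support {ι σ : Type*} [Fintype ι] {e : ι → σ}
    (he : Function.Injective e) {m : σ →₀ ℕ} (hm : ∀ i, e i ∈ m.support) :
    ∑ i, Finsupp.single (e i) 1 ≤ m := by
  calc ∑ i, Finsupp.single (e i) 1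
      = ∑ x ∈ Finset.univ.map ⟨e, he⟩, Finsupp.single x 1 := by
        rw [Finset.sum_map, Function.Embedding.coeFn_mk]
    _ ≤ ∑ x ∈ m.support, Finsupp.single x 1 :=
        Finset.sum_le_sum_of_subset fun x hx => by
          obtain ⟨i, -, rfl⟩ := Finset.mem_map.1 hx
          exact hm i
    _ ≤ ∑ x ∈ m.support, Finsupp.single x (m x) :=
        Finset.sum_le_sum fun x hx => Finsupp.single_le_single.2
          (Nat.one_le_iff_ne_zero.2 (Finsupp.mem_support_iff.1 hx))
    _ = m := m.sum_single

lemma exists_mem_hankelIdeal_monomial_sub_mem (hN : N = n + r) {e : Fin (r + 1) → Fin N}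
    (he : IsTwoSeparated fun i => (e i : ℕ)) {m : Fin N →₀ ℕ} (hm : ∀ i, e i ∈ m.support) (c : K) :
    ∃ P ∈ hankelIdeal K r n N, monomial m c - P ∈
      weightedDegreeLE (squareWeight N) (Finsupp.weight (squareWeight N) m - 1) := by
  set E : Fin N →₀ ℕ := ∑ i, Finsupp.single (e i) 1
  have hE : m - E + E = m := tsub_add_cancel_of_le
    (sum_single_one_le_of_mem_support (fun i j hij => he.injective (congrArg Fin.val hij)) hm)
  have hprod : ∏ i, paddedVar K N (e i) = monomial E 1 := by
    rw [monomial_sum_one]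
    exact Finset.prod_congr rfl fun i _ => dif_pos (e i).2
  have hweight : Finsupp.weight (squareWeight N) (m - E) + ∑ i, ((e i : ℕ) : ℤ) ^ 2 =
      Finsupp.weight (squareWeight N) m := by
    conv_rhs => rw [← hE, map_add, map_sum]
    simp [Finsupp.weight_single, squareWeight]
  refine ⟨monomial (m - E) c * seqMinor (paddedVar K N) fun i => (e i : ℕ) - (i : ℕ),
    Ideal.mul_mem_left _ _ (Ideal.subset_span ⟨fun i => ⟨(e i : ℕ) - (i : ℕ), ?_⟩, rfl⟩), ?_⟩
  · have hlast := he.strictMono_sub.monotone (Fin.le_last i)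
    have hle := he.le (Fin.last r)
    have := (e (Fin.last r)).2
    simp only [Fin.val_last] at hlast hle
    omega
  · have hfactor : monomial m c = monomial (m - E) c * ∏ i, paddedVar K N (e i) := by
      rw [hprod, monomial_mul, hE, mul_one]
    rw [hfactor, ← mul_sub]
    exact mul_mem_weightedDegreeLE (monomial_mem_weightedDegreeLE _ _ _)
      (prod_sub_seqMinor_mem_weightedDegreeLE he) (by linarith)

lemma sub_sum_monomial_mem_weightedDegreeLE {σ : Type*} {w : σ → ℤ} {k : ℤ}
    {f : MvPolynomial σ K} (hf : f ∈ weightedDegreeLE w k) :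
    f - ∑ m ∈ f.support with Finsupp.weight w m = k, monomial m (coeff m f) ∈
      weightedDegreeLE w (k - 1) := by
  classical
  conv in f - _ => enter [1]; rw [f.as_sum]
  rw [← Finset.sum_filter_add_sum_filter_not f.support fun m => Finsupp.weight w m = k,
    add_sub_cancel_left]
  refine Submodule.sum_mem _ fun m hm =>
    weightedDegreeLE_mono ?_ (monomial_mem_weightedDegreeLE w m _)
  obtain ⟨hmf, hmk⟩ := Finset.mem_filter.1 hm
  have hle := mem_weightedDegreeLE.1 hf m (mem_support_iff.1 hmf)
  omega

lemma mem_hankelIdeal_of_mem_weightedDegreeLE (hN : N = n + r) (k : ℕ)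
    {f : MvPolynomial (Fin N) K} (hf : genSeqMap K r N f = 0)
    (hk : f ∈ weightedDegreeLE (squareWeight N) (k - 1)) : f ∈ hankelIdeal K r n N := by
  induction k generalizing f with
  | zero =>
    have hzero : f = 0 := by
      by_contra hne
      obtain ⟨m, hm⟩ := ne_zero_iff.1 hne
      have hle := mem_weightedDegreeLE.1 hk m hm
      have hnonneg := weight_nonneg (w := squareWeight N) (fun i => sq_nonneg _) m
      push_cast at hle
      omega
    exact hzero ▸ zero_mem _
  | succ k ih =>
    rw [Nat.cast_succ, add_sub_cancel_right] at hk
    have hred (m : Fin N →₀ ℕ) : ∃ P ∈ hankelIdeal K r n N,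
        m ∈ f.support.filter (fun m => Finsupp.weight (squareWeight N) m = k) →
          monomial m (coeff m f) - P ∈ weightedDegreeLE (squareWeight N) (k - 1) := by
      by_cases hm : m ∈ f.support.filter fun m => Finsupp.weight (squareWeight N) m = k
      · obtain ⟨hmf, hmk⟩ := Finset.mem_filter.1 hm
        rw [← hmk] at hk
        obtain ⟨e, he, hmem⟩ := exists_isTwoSeparated_mem_support hf (mem_support_iff.1 hmf) hk
        obtain ⟨P, hP, hdeg⟩ := exists_mem_hankelIdeal_monomial_sub_mem hN he hmem (coeff m f)
        exact ⟨P, hP, fun _ => hmk ▸ hdeg⟩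
      · exact ⟨0, zero_mem _, fun h => absurd h hm⟩
    choose P hP hdeg using hred
    set T := f.support.filter fun m => Finsupp.weight (squareWeight N) m = k
    have hsum : ∑ m ∈ T, P m ∈ hankelIdeal K r n N := Ideal.sum_mem _ fun m _ => hP m
    rw [← (hankelIdeal K r n N).sub_mem_iff_left hsum]
    refine ih ?_ ?_
    · rw [map_sub, hf, (hankelIdeal_le_ker hN hsum : genSeqMap K r N _ = 0), sub_zero]
    · rw [← sub_add_sub_cancel _ (∑ m ∈ T, monomial m (coeff m f)), ← Finset.sum_sub_distrib]
      exact add_mem (sub_sum_monomial_mem_weightedDegreeLE hk) (Submodule.sum_mem _ hdeg)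

theorem hankelIdeal_eq_ker (hN : N = n + r) :
    hankelIdeal K r n N = RingHom.ker (genSeqMap K r N) := by
  refine le_antisymm (hankelIdeal_le_ker hN) fun f hf => ?_
  obtain ⟨j, hj⟩ := exists_mem_weightedDegreeLE_natCast (squareWeight N) f
  exact mem_hankelIdeal_of_mem_weightedDegreeLE hN (j + 1) hf
    (by rwa [Nat.cast_succ, add_sub_cancel_right])

end Kernel

section ExpandTrace

variable {K τ : Type*} [CommRing K]

open Classical in
/-- The trace operator of the free extension `expand q`: it sends the monomial with exponent vector
`q • m + (q - 1, …, q - 1)` to the one with exponent vector `m`, and every monomial not of this form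
to zero. -/
noncomputable def expandTrace (q : ℕ) : MvPolynomial τ K →ₗ[K] MvPolynomial τ K :=
  (basisMonomials τ K).constr K fun m =>
    if ∀ i, m i % q = q - 1 then monomial (m.mapRange (· / q) (Nat.zero_div q)) 1 else 0

open Classical in
lemma expandTrace_monomial (q : ℕ) (m : τ →₀ ℕ) (c : K) :
    expandTrace q (monomial m c) =
      if ∀ i, m i % q = q - 1 then monomial (m.mapRange (· / q) (Nat.zero_div q)) c else 0 := by
  have hc : monomial m c = c • basisMonomials τ K m := by
    rw [coe_basisMonomials, smul_monomial, smul_eq_mul, mul_one]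
  rw [hc, map_smul, expandTrace, Module.Basis.constr_basis, smul_ite, smul_monomial, smul_eq_mul,
    mul_one, smul_zero]

lemma expandTrace_expand_mul {q : ℕ} (hq : 0 < q) (g f : MvPolynomial τ K) :
    expandTrace q (expand q g * f) = g * expandTrace q f := by
  classical
  induction g using MvPolynomial.induction_on' with
  | add a b ha hb => rw [map_add, add_mul, map_add, ha, hb, add_mul]
  | monomial m a =>
    induction f using MvPolynomial.induction_on' with
    | add c d hc hd => rw [mul_add, map_add, hc, hd, map_add, mul_add]
    | monomial m' b =>
      rw [expand_monomial, monomial_mul, expandTrace_monomial, expandTrace_monomial, mul_ite,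
        mul_zero, monomial_mul]
      have hiff : (∀ i, (q • m + m') i % q = q - 1) ↔ ∀ i, m' i % q = q - 1 := by simp
      have hdiv : (q • m + m').mapRange (· / q) (Nat.zero_div q) =
          m + m'.mapRange (· / q) (Nat.zero_div q) := by
        ext i
        simp [Nat.mul_add_div hq]
      rw [hdiv]
      simp only [hiff]

lemma mul_mod_add_div_eq {q m k : ℕ} (hq : 0 < q) :
    m % q = q - 1 ∧ m / q = k ↔ m = q * k + (q - 1) := by
  rw [and_comm, Nat.div_mod_unique hq]
  omega

variable [Fintype τ]

/-- The exponent vector all of whose entries are `k`. -/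
noncomputable def constExponent (τ : Type*) [Fintype τ] (k : ℕ) : τ →₀ ℕ :=
  Finsupp.equivFunOnFinite.symm fun _ => k

lemma constExponent_apply (k : ℕ) (i : τ) : constExponent τ k i = k := rfl

lemma coeff_expandTrace {q : ℕ} (hq : 0 < q) (m : τ →₀ ℕ) (f : MvPolynomial τ K) :
    coeff m (expandTrace q f) = coeff (q • m + constExponent τ (q - 1)) f := by
  classical
  induction f using MvPolynomial.induction_on' with
  | add c d hc hd => rw [map_add, coeff_add, hc, hd, coeff_add]
  | monomial m' b =>
    have hiff : (∀ i, m' i % q = q - 1) ∧ m'.mapRange (· / q) (Nat.zero_div q) = m ↔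
        m' = q • m + constExponent τ (q - 1) := by
      simp only [Finsupp.ext_iff, ← forall_and]
      exact forall_congr' fun i => mul_mod_add_div_eq hq
    rw [expandTrace_monomial, coeff_monomial, apply_ite (coeff m), coeff_monomial, coeff_zero,
      ← ite_and]
    simp only [hiff]

/-- The monomial with exponent vector `b`, for `b` in the box `[0, q) ^ τ`. These monomials form a
basis of the polynomial ring over the image of `expand q`. -/
noncomputable def boxMonomial (K : Type*) [CommRing K] {q : ℕ} (b : τ → Fin q) :
    MvPolynomial τ K :=
  monomial (Finsupp.equivFunOnFinite.symm fun i => (b i : ℕ)) 1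

/-- The box monomial complementary to `boxMonomial K b`; up to the order of the indices these form
the basis dual to `boxMonomial` with respect to `expandTrace q`. -/
noncomputable def dualBoxMonomial (K : Type*) [CommRing K] {q : ℕ} (b : τ → Fin q) :
    MvPolynomial τ K :=
  boxMonomial K fun i => (b i).rev

lemma rev_add_mod_eq_iff {q : ℕ} (b : Fin q) (m : ℕ) :
    (b.rev + m) % q = q - 1 ↔ m % q = b := by
  have hb := b.2
  rw [Fin.val_rev]
  refine ⟨fun h => ?_, fun h => ((mul_mod_add_div_eq (k := m / q) b.pos).mpr ?_).1⟩
  · have hm := (mul_mod_add_div_eq b.pos).mp ⟨h, rfl⟩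
    generalize (q - (b + 1) + m) / q = k at hm
    rw [show m = q * k + b by omega, Nat.mul_add_mod, Nat.mod_eq_of_lt hb]
  · have := Nat.div_add_mod m q
    omega

lemma rev_add_div_eq {q : ℕ} {b : Fin q} {m : ℕ} (h : m % q = b) : (b.rev + m) / q = m / q := by
  refine ((mul_mod_add_div_eq b.pos).mpr ?_).2
  have := Nat.div_add_mod m q
  have := b.2
  rw [Fin.val_rev]
  omega

open Classical in
lemma expandTrace_dualBoxMonomial_mul_monomial {q : ℕ} (b : τ → Fin q) (m : τ →₀ ℕ) (c : K) :
    expandTrace q (dualBoxMonomial K b * monomial m c) =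
      if ∀ i, m i % q = b i then monomial (m.mapRange (· / q) (Nat.zero_div q)) c else 0 := by
  rw [dualBoxMonomial, boxMonomial, monomial_mul, expandTrace_monomial, one_mul]
  simp only [Finsupp.add_apply, Finsupp.equivFunOnFinite_symm_apply_apply, rev_add_mod_eq_iff]
  refine ite_congr rfl (fun h => congrArg (fun s => monomial s c) ?_) fun _ => rfl
  ext i
  exact rev_add_div_eq (h i)

lemma eq_sum_expand_expandTrace_mul_boxMonomial [DecidableEq τ] {q : ℕ} (hq : 0 < q)
    (f : MvPolynomial τ K) :
    f = ∑ b : τ → Fin q, expand q (expandTrace q (dualBoxMonomial K b * f)) * boxMonomial K b := by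
  induction f using MvPolynomial.induction_on' with
  | add c d hc hd =>
    conv_lhs => rw [hc, hd]
    simp only [mul_add, map_add, add_mul, Finset.sum_add_distrib]
  | monomial m a =>
    rw [Finset.sum_eq_single fun i => (⟨m i % q, Nat.mod_lt _ hq⟩ : Fin q)]
    · rw [expandTrace_dualBoxMonomial_mul_monomial, if_pos fun _ => rfl, expand_monomial,
        boxMonomial, monomial_mul, mul_one]
      refine congrArg (fun s => monomial s a) (Finsupp.ext fun i => ?_)
      simp [Nat.div_add_mod]
    · intro b _ hb
      rw [expandTrace_dualBoxMonomial_mul_monomial, if_neg, map_zero, zero_mul]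
      exact fun h => hb (funext fun i => Fin.ext (h i).symm)
    · simp

/-- The element `g` for which the functional `f ↦ expandTrace q (g * f)` takes the prescribed
value `α b` on the box monomial `b`. -/
noncomputable def dualCombination [DecidableEq τ] {q : ℕ}
    (α : (τ → Fin q) → MvPolynomial τ K) : MvPolynomial τ K :=
  ∑ b, expand q (α b) * dualBoxMonomial K b

lemma expandTrace_dualCombination_mul [DecidableEq τ] {q : ℕ} (hq : 0 < q)
    (α : (τ → Fin q) → MvPolynomial τ K) (f : MvPolynomial τ K) :
    expandTrace q (dualCombination α * f) =
      ∑ b, α b * expandTrace q (dualBoxMonomial K b * f) := by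
  simp only [dualCombination, Finset.sum_mul, map_sum, mul_assoc, expandTrace_expand_mul hq]

lemma mem_map_expand_iff {τ : Type*} [Finite τ] {q : ℕ} (hq : 0 < q) {I : Ideal (MvPolynomial τ K)}
    {f : MvPolynomial τ K} :
    f ∈ I.map (expand q) ↔ ∀ a, expandTrace q (a * f) ∈ I := by
  classical
  have := Fintype.ofFinite τ
  refine ⟨fun hf => ?_, fun hf => ?_⟩
  · induction hf using Submodule.span_induction with
    | zero => simp
    | add u v _ _ hu hv => exact fun a => by simpa [mul_add] using I.add_mem (hu a) (hv a)
    | smul c u _ hu => exact fun a => by simpa [mul_assoc] using hu (a * c)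
    | mem u hu =>
      obtain ⟨g, hg, rfl⟩ := hu
      intro a
      rw [mul_comm, expandTrace_expand_mul hq]
      exact I.mul_mem_right _ hg
  · rw [eq_sum_expand_expandTrace_mul_boxMonomial hq f]
    exact Ideal.sum_mem _ fun b _ => Ideal.mul_mem_right _ _ (Ideal.mem_map_of_mem _ (hf _))

end ExpandTrace

section FrobeniusSubring

variable {K : Type*} [CommRing K] (τ : Type*) (p e : ℕ)

/-- The subring of the polynomials whose `p ^ e`-th power is obtained by raising every variable to
the power `p ^ e`, i.e. those with coefficients fixed by the `e`-th iterate of Frobenius. -/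
noncomputable def expandSubring (K : Type*) [CommRing K] [ExpChar K p] :
    Subring (MvPolynomial τ K) :=
  RingHom.eqLocus (iterateFrobenius (MvPolynomial τ K) p e) (expand (p ^ e)).toRingHom

variable {τ p e} [ExpChar K p]

lemma mem_expandSubring {f : MvPolynomial τ K} :
    f ∈ expandSubring τ p e K ↔ f ^ p ^ e = expand (p ^ e) f := Iff.rfl

lemma X_mem_expandSubring (i : τ) : X i ∈ expandSubring τ p e K := by
  rw [mem_expandSubring, expand_X]

lemma frobeniusPower_eq_map_iterateFrobenius {R : Type*} [CommRing R] (p e : ℕ) [ExpChar R p]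
    (I : Ideal R) : frobeniusPower (p ^ e) I = I.map (iterateFrobenius R p e) := rfl

lemma frobeniusPower_span_eq_map_expand {S : Set (MvPolynomial τ K)}
    (hS : S ⊆ expandSubring τ p e K) :
    frobeniusPower (p ^ e) (Ideal.span S) = (Ideal.span S).map (expand (p ^ e)) := by
  rw [frobeniusPower_eq_map_iterateFrobenius, Ideal.map_span, Ideal.map_span]
  exact congrArg Ideal.span (Set.image_congr fun f hf => hS hf)

lemma seqMinor_mem {B : Type*} [CommRing B] {S : Subring B} {r : ℕ} {x : ℕ → B} {b : Fin r → ℕ}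
    (hx : ∀ i k : Fin r, x (i + b k) ∈ S) : seqMinor x b ∈ S := by
  rw [seqMinor, det_apply]
  refine sum_mem fun s _ => ?_
  rw [Units.smul_def]
  exact zsmul_mem (prod_mem fun i _ => hx _ _) _

lemma genSeq_mem_expandSubring {r : ℕ} (j : ℕ) :
    genSeq K r j ∈ expandSubring (Fin r ⊕ Fin r) p e K :=
  genSeq_mem (fun _ => X_mem_expandSubring _) (fun _ _ => mul_mem (X_mem_expandSubring _)) j

lemma paddedVar_mem_expandSubring (N j : ℕ) :
    paddedVar K N j ∈ expandSubring (Fin N) p e K := by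
  unfold paddedVar
  split_ifs
  · exact X_mem_expandSubring _
  · exact zero_mem _

lemma genSeqMap_expand {r N : ℕ} (f : MvPolynomial (Fin N) K) :
    genSeqMap K r N (expand (p ^ e) f) = expand (p ^ e) (genSeqMap K r N f) := by
  have hcomp : (genSeqMap K r N).comp (expand (p ^ e)) =
      (expand (p ^ e)).comp (genSeqMap K r N) := by
    ext1 i
    simp only [AlgHom.comp_apply, expand_X, genSeqMap, map_pow, aeval_X]
    exact genSeq_mem_expandSubring _
  exact DFunLike.congr_fun hcomp f

lemma frobeniusPower_hankelIdeal (r n N : ℕ) :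
    frobeniusPower (p ^ e) (hankelIdeal K r n N) =
      (hankelIdeal K r n N).map (expand (p ^ e)) := by
  refine frobeniusPower_span_eq_map_expand ?_
  rintro _ ⟨g, rfl⟩
  exact seqMinor_mem fun _ _ => paddedVar_mem_expandSubring N _

lemma mem_idealOfVars_iff {f : MvPolynomial τ K} :
    f ∈ idealOfVars τ K ↔ constantCoeff f = 0 := by
  have := mem_pow_idealOfVars_iff' 1 f
  simpa [Nat.lt_one_iff, Finsupp.degree_eq_zero_iff, constantCoeff_eq] using this

lemma mem_frobeniusPower_idealOfVars_iff [Finite τ] {f : MvPolynomial τ K} :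
    f ∈ frobeniusPower (p ^ e) (idealOfVars τ K) ↔
      ∀ a, constantCoeff (expandTrace (p ^ e) (a * f)) = 0 := by
  have hX : Set.range X ⊆ (expandSubring τ p e K : Set (MvPolynomial τ K)) := by
    rintro _ ⟨i, rfl⟩
    exact X_mem_expandSubring i
  rw [idealOfVars, frobeniusPower_span_eq_map_expand hX, mem_map_expand_iff (expChar_pow_pos K p e)]
  exact forall_congr' fun a => mem_idealOfVars_iff

end FrobeniusSubring

section ExtremalCoefficient

lemma hankelDet_succ_of_tail {B : Type*} [CommRing B] {r : ℕ} {a : Fin r → B} {x : ℕ → B}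
    (hx : (LinearRecurrence.mk r a).IsSolution fun j => x (j + 1)) :
    hankelDet (r + 1) x 0 = (-1) ^ r * (x r - ∑ i, a i * x i) * hankelDet r x 1 := by
  set M : Matrix (Fin (r + 1)) (Fin (r + 1)) B := of fun i j => x (i + (j + 0)) with hM
  set c : Fin (r + 1) → B := Fin.snoc (fun i => -a i) 1
  have hrow : ∑ i, c i • M i = Pi.single 0 (x r - ∑ i, a i * x i) := by
    funext j
    rw [Finset.sum_apply, Fin.sum_univ_castSucc]
    refine Fin.cases ?_ (fun j => ?_) j
    · simp [c, hM, ← sub_eq_neg_add]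
    · have hj : x (r + (j + 1)) = ∑ i : Fin r, a i * x (i + (j + 1)) := by
        simpa only [add_assoc, add_comm, add_left_comm] using hx j
      simp [c, hM, hj]
  have hsub : (M.submatrix (Fin.last r).succAbove (Fin.succAbove 0)).det = hankelDet r x 1 := by
    rw [Fin.succAbove_last, Fin.succAbove_zero]
    rfl
  have hdet := det_updateRow_sum M (Fin.last r) c
  rw [hrow, ← mul_one (x r - _), ← smul_eq_mul, Pi.single_smul, det_updateRow_smul,
    ← adjugate_apply, adjugate_fin_succ_eq_det_submatrix, hsub, Fin.val_last, Fin.val_zero,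
    add_zero, show c (Fin.last r) = 1 from Fin.snoc_last _ _, one_smul] at hdet
  rw [hankelDet, seqMinor, ← hM, ← hdet]
  ring

variable {K : Type*} [CommRing K] {r : ℕ}

lemma modFirstCoeff_monomial (u : Fin (r + 1) ⊕ Fin (r + 1) →₀ ℕ) (c : K) :
    modFirstCoeff K r (monomial u c) = Polynomial.C (0 ^ u (Sum.inl 0)) *
      Polynomial.monomial (u (Sum.inr 0))
        (monomial (Finsupp.equivFunOnFinite.symm fun s => u (Sum.map Fin.succ Fin.succ s)) c) := by
  rw [modFirstCoeff, aeval_monomial, Finsupp.prod_fintype _ _ fun _ => pow_zero _,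
    monomial_eq, Finsupp.prod_fintype _ _ fun _ => pow_zero _]
  simp only [Fintype.prod_sum_type, Fin.prod_univ_succ, Sum.elim_inl, Sum.elim_inr, Fin.cons_zero,
    Fin.cons_succ, Finsupp.equivFunOnFinite_symm_apply_apply, Sum.map_inl, Sum.map_inr,
    ← Polynomial.C_mul_X_pow_eq_monomial, map_mul, map_prod, map_pow, map_zero,
    show (algebraMap K (Polynomial (RecurrenceRing K r))) c = Polynomial.C (C c) from rfl]
  ring

lemma coeff_constExponent_coeffVar_zero_pow_mul (k : ℕ) (f : RecurrenceRing K (r + 1)) :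
    coeff (constExponent _ k) (coeffVar K (r + 1) 0 ^ k * f) =
      coeff (constExponent _ k) ((modFirstCoeff K r f).coeff k) := by
  classical
  induction f using MvPolynomial.induction_on' with
  | add f g hf hg => simp only [mul_add, map_add, coeff_add, hf, hg, Polynomial.coeff_add]
  | monomial u c =>
    have hiff : Finsupp.single (Sum.inl 0) k + u = constExponent _ k ↔
        u (Sum.inl 0) = 0 ∧ u (Sum.inr 0) = k ∧
          (Finsupp.equivFunOnFinite.symm fun s => u (Sum.map Fin.succ Fin.succ s)) =
            constExponent _ k := by
      simp only [Finsupp.ext_iff, Sum.forall, Fin.forall_fin_succ, constExponent_apply]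
      simp
      tauto
    rw [modFirstCoeff_monomial, coeffVar, X_pow_eq_monomial, monomial_mul, one_mul, coeff_monomial,
      Polynomial.coeff_C_mul, Polynomial.coeff_monomial]
    simp only [hiff]
    by_cases h0 : u (Sum.inl 0) = 0 <;> by_cases hk : u (Sum.inr 0) = k <;>
      simp [h0, hk, coeff_monomial]

lemma modFirstCoeff_hankelDet (K : Type*) [CommRing K] (r : ℕ) :
    modFirstCoeff K r (hankelDet (r + 1) (genSeq K (r + 1)) 0) =
      (-1) ^ r * (modFirstCoeff K r (genSeq K (r + 1) r) -
        ∑ i, Polynomial.C (coeffVar K r i) * modFirstCoeff K r (genSeq K (r + 1) i)) *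
      Polynomial.C (hankelDet r (genSeq K r) 0) := by
  have hmap := map_seqMinor (modFirstCoeff K r).toRingHom (genSeq K (r + 1))
    fun j : Fin (r + 1) => j + 0
  have htail : hankelDet r (fun j => modFirstCoeff K r (genSeq K (r + 1) j)) 1 =
      Polynomial.C (hankelDet r (genSeq K r) 0) := by
    rw [hankelDet, hankelDet, map_seqMinor]
    unfold seqMinor
    simp only [← add_assoc, modFirstCoeff_genSeq_succ, add_zero]
  rw [← htail]
  refine hmap.trans (hankelDet_succ_of_tail (a := fun i => Polynomial.C (coeffVar K r i))
    fun j => ?_)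
  change modFirstCoeff K r (genSeq K (r + 1) (j + r + 1)) =
    ∑ i : Fin r, Polynomial.C (coeffVar K r i) * modFirstCoeff K r (genSeq K (r + 1) (j + i + 1))
  simp only [modFirstCoeff_genSeq_succ, ← Polynomial.C_mul, ← map_sum]
  exact congrArg Polynomial.C (genSeq_isSolution K r j)

lemma exists_modFirstCoeff_hankelDet_eq (K : Type*) [CommRing K] (r : ℕ) :
    ∃ v, modFirstCoeff K (r + 1) (hankelDet (r + 2) (genSeq K (r + 2)) 0) = Polynomial.C
      ((-1) ^ r * (coeffVar K (r + 1) 0 * hankelDet (r + 1) (genSeq K (r + 1)) 0)) *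
        Polynomial.X + Polynomial.C v := by
  refine ⟨(-1) ^ (r + 1) * (genSeq K (r + 1) r - ∑ i : Fin r,
    coeffVar K (r + 1) i.succ * genSeq K (r + 1) i) * hankelDet (r + 1) (genSeq K (r + 1)) 0, ?_⟩
  rw [modFirstCoeff_hankelDet, Fin.sum_univ_succ]
  simp only [Fin.val_zero, Fin.val_succ, modFirstCoeff_genSeq_zero, modFirstCoeff_genSeq_succ,
    Polynomial.C_mul, Polynomial.C_sub, Polynomial.C_pow, Polynomial.C_neg, Polynomial.C_1,
    map_sum]
  ring

theorem isUnit_coeff_coeffVar_zero_mul_hankelDet_pow (K : Type*) [CommRing K] (r k : ℕ) :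
    IsUnit (coeff (constExponent _ k)
      (coeffVar K (r + 1) 0 ^ k * hankelDet (r + 1) (genSeq K (r + 1)) 0 ^ k)) := by
  rw [coeff_constExponent_coeffVar_zero_pow_mul, map_pow]
  induction r with
  | zero =>
    have hX : modFirstCoeff K 0 (hankelDet (0 + 1) (genSeq K (0 + 1)) 0) = Polynomial.X := by
      rw [← modFirstCoeff_genSeq_zero]
      simp [hankelDet, seqMinor]
    have hzero : constExponent (Fin 0 ⊕ Fin 0) k = 0 := Subsingleton.elim _ _
    simp [hX, hzero]
  | succ r ih =>
    obtain ⟨v, hv⟩ := exists_modFirstCoeff_hankelDet_eq K r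
    have hpow := Polynomial.coeff_pow_of_natDegree_le (m := k)
      (hv.symm ▸ Polynomial.natDegree_linear_le)
    rw [mul_one, hv, Polynomial.coeff_add, Polynomial.coeff_C_mul, Polynomial.coeff_X_one,
      mul_one, Polynomial.coeff_C_of_ne_zero one_ne_zero, add_zero, ← hv] at hpow
    have hsign : (((-1 : RecurrenceRing K (r + 1)) ^ r) ^ k) = C (((-1 : K) ^ r) ^ k) := by simp
    rw [hpow, mul_pow, mul_pow, hsign, coeff_C_mul, coeff_constExponent_coeffVar_zero_pow_mul,
      map_pow]
    exact ((isUnit_one.neg.pow r).pow k).mul ih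

end ExtremalCoefficient

section GenSeqShift

lemma add_pow_sub_pow_mem_weightedDegreeLE {σ R : Type*} [CommRing R] {w : σ → ℤ} {i j : ℤ}
    {x y : MvPolynomial σ R} (hij : j ≤ i) (hx : x ∈ weightedDegreeLE w i)
    (hy : y ∈ weightedDegreeLE w j) (c : ℕ) :
    (x + y) ^ c - x ^ c ∈ weightedDegreeLE w ((c - 1) * i + j) := by
  induction c with
  | zero => simp
  | succ c ih =>
    have hsplit : (x + y) ^ (c + 1) - x ^ (c + 1) =
        (x + y) * ((x + y) ^ c - x ^ c) + y * x ^ c := by ring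
    rw [hsplit]
    refine add_mem (mul_mem_weightedDegreeLE (add_mem hx (weightedDegreeLE_mono hij hy)) ih ?_)
      (mul_mem_weightedDegreeLE hy (pow_mem_weightedDegreeLE hx c) ?_) <;>
    · push_cast
      linarith

lemma prod_mem_weightedDegreeLE_zero {σ R ι : Type*} [CommRing R] {w : σ → ℤ} (s : Finset ι)
    {f : ι → MvPolynomial σ R} (hf : ∀ i ∈ s, f i ∈ weightedDegreeLE w 0) :
    ∏ i ∈ s, f i ∈ weightedDegreeLE w 0 := by
  have := prod_mem_weightedDegreeLE s (j := fun _ => 0) hf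
  rwa [Finset.sum_const_zero] at this

lemma expandTrace_mem_weightedDegreeLE {σ K : Type*} [Fintype σ] [CommRing K] {q : ℕ}
    (hq : 0 < q) {w : σ → ℤ} {i j : ℤ} {f : MvPolynomial σ K} (hf : f ∈ weightedDegreeLE w j)
    (hj : j < q * (i + 1) + (q - 1) * ∑ i, w i) : expandTrace q f ∈ weightedDegreeLE w i := by
  refine mem_weightedDegreeLE.mpr fun m hm => ?_
  rw [coeff_expandTrace hq] at hm
  have hle := mem_weightedDegreeLE.mp hf _ hm
  have hconst : Finsupp.weight w (constExponent σ (q - 1)) = (q - 1) * ∑ i, w i := by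
    simp only [weight_eq_sum, constExponent_apply, Nat.cast_pred hq, Finset.mul_sum]
  rw [map_add, map_nsmul, hconst, nsmul_eq_mul] at hle
  exact Int.lt_add_one_iff.mp (lt_of_mul_lt_mul_left (by linarith) (Int.natCast_nonneg q))

lemma expandTrace_eq_zero_of_mem_weightedDegreeLE {σ K : Type*} [Fintype σ] [CommRing K] {q : ℕ}
    (hq : 0 < q) {w : σ → ℤ} (hw : 0 ≤ w) {j : ℤ} {f : MvPolynomial σ K}
    (hf : f ∈ weightedDegreeLE w j) (hj : j < (q - 1) * ∑ i, w i) : expandTrace q f = 0 := by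
  have hneg := expandTrace_mem_weightedDegreeLE (i := -1) hq hf (by simpa using hj)
  ext m
  by_contra hm
  have := mem_weightedDegreeLE.mp hneg m hm
  have := weight_nonneg hw m
  omega

lemma expandTrace_mul_add_pow {σ K : Type*} [Fintype σ] [CommRing K] {q c : ℕ} (hq : 0 < q)
    {w : σ → ℤ} (hw : 0 ≤ w) (hsum : ∑ i, w i = 1) {f x y : MvPolynomial σ K}
    (hf : f ∈ weightedDegreeLE w 0) (hx : x ∈ weightedDegreeLE w 1)
    (hy : y ∈ weightedDegreeLE w 0) (hc : c < q) :
    expandTrace q (f * (x + y) ^ c) = if c = q - 1 then expandTrace q (f * x ^ c) else 0 := by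
  split_ifs with hcq
  · rw [← sub_eq_zero, ← map_sub, ← mul_sub]
    refine expandTrace_eq_zero_of_mem_weightedDegreeLE hq hw (mul_mem_weightedDegreeLE hf
      (add_pow_sub_pow_mem_weightedDegreeLE zero_le_one hx hy c) le_rfl) ?_
    rw [hsum]
    omega
  · refine expandTrace_eq_zero_of_mem_weightedDegreeLE hq hw (mul_mem_weightedDegreeLE hf
      (pow_mem_weightedDegreeLE (add_mem hx (weightedDegreeLE_mono zero_le_one hy)) c) le_rfl) ?_
    rw [hsum]
    omega

lemma boxMonomial_eq_prod {τ K : Type*} [Fintype τ] [CommRing K] {q : ℕ} (b : τ → Fin q) :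
    boxMonomial K b = ∏ i, X i ^ (b i : ℕ) := by
  rw [boxMonomial, monomial_eq, Finsupp.prod_fintype _ _ fun _ => pow_zero _, C_1, one_mul]
  rfl

open Classical in
lemma expandTrace_boxMonomial {τ K : Type*} [Fintype τ] [CommRing K] {q : ℕ} (b : τ → Fin q) :
    expandTrace q (boxMonomial K b) = if ∀ i, (b i : ℕ) = q - 1 then 1 else 0 := by
  simp only [boxMonomial, expandTrace_monomial, Finsupp.equivFunOnFinite_symm_apply_apply,
    Nat.mod_eq_of_lt (b _).2]
  refine if_congr Iff.rfl ?_ rfl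
  rw [← C_1, ← monomial_zero']
  refine congrArg (fun s => monomial s _) (Finsupp.ext fun i => ?_)
  exact Nat.div_eq_of_lt (b i).2

variable (K : Type*) [CommRing K] (r : ℕ)

/-- The endomorphism of the recurrence ring that fixes the coefficients of the recurrence and shifts
the generic sequence by `m`. -/
noncomputable def genSeqShift (m : ℕ) : RecurrenceRing K r →ₐ[K] RecurrenceRing K r :=
  aeval (Sum.elim (coeffVar K r) fun i => genSeq K r (m + i))

variable {K r}

lemma genSeqShift_coeffVar (m : ℕ) (i : Fin r) :
    genSeqShift K r m (coeffVar K r i) = coeffVar K r i := by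
  rw [genSeqShift, coeffVar, aeval_X, Sum.elim_inl, coeffVar]

lemma genSeqShift_X_inr (m : ℕ) (i : Fin r) :
    genSeqShift K r m (X (Sum.inr i)) = genSeq K r (m + i) := by
  rw [genSeqShift, aeval_X, Sum.elim_inr]

lemma genSeqShift_genSeq (m j : ℕ) : genSeqShift K r m (genSeq K r j) = genSeq K r (m + j) := by
  refine map_genSeq (genSeqShift K r m).toRingHom (y := fun j => genSeq K r (m + j)) (fun j => ?_)
    (genSeqShift_X_inr m) j
  simpa [genSeqShift_coeffVar, add_assoc] using genSeq_isSolution K r (m + j)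

lemma genSeqShift_add (m k : ℕ) (f : RecurrenceRing K r) :
    genSeqShift K r (m + k) f = genSeqShift K r m (genSeqShift K r k f) := by
  have hcomp : genSeqShift K r (m + k) = (genSeqShift K r m).comp (genSeqShift K r k) := by
    apply algHom_ext
    rintro (i | i)
    · change genSeqShift K r (m + k) (coeffVar K r i) =
        genSeqShift K r m (genSeqShift K r k (coeffVar K r i))
      simp only [genSeqShift_coeffVar]
    · rw [AlgHom.comp_apply, genSeqShift_X_inr, genSeqShift_X_inr, genSeqShift_genSeq, add_assoc]
  exact DFunLike.congr_fun hcomp f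

lemma genSeqShift_zero (f : RecurrenceRing K r) : genSeqShift K r 0 f = f := by
  have hid : genSeqShift K r 0 = AlgHom.id K _ := by
    apply algHom_ext
    rintro (i | i)
    · exact genSeqShift_coeffVar 0 i
    · rw [genSeqShift_X_inr, zero_add, genSeq_of_lt, AlgHom.id_apply]
  exact DFunLike.congr_fun hid f

lemma genSeqShift_expand {p : ℕ} [ExpChar K p] (e m : ℕ) (f : RecurrenceRing K r) :
    genSeqShift K r m (expand (p ^ e) f) = expand (p ^ e) (genSeqShift K r m f) := by
  have hcomp : (genSeqShift K r m).comp (expand (p ^ e)) =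
      (expand (p ^ e)).comp (genSeqShift K r m) := by
    apply algHom_ext
    rintro (i | i)
    · simp only [AlgHom.comp_apply, expand_X, genSeqShift, map_pow, aeval_X, Sum.elim_inl]
      exact X_mem_expandSubring _
    · simp only [AlgHom.comp_apply, expand_X, genSeqShift, map_pow, aeval_X, Sum.elim_inr]
      exact genSeq_mem_expandSubring _
  exact DFunLike.congr_fun hcomp f

/-- The weight whose degree is the degree in the first initial value of the sequence. -/
def initWeight (r : ℕ) : Fin (r + 1) ⊕ Fin (r + 1) → ℤ := Pi.single (Sum.inr 0) 1

lemma X_mem_weightedDegreeLE_initWeight {s : Fin (r + 1) ⊕ Fin (r + 1)} (hs : s ≠ Sum.inr 0) :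
    (X s : RecurrenceRing K (r + 1)) ∈ weightedDegreeLE (initWeight r) 0 :=
  X_mem_weightedDegreeLE (Pi.single_eq_of_ne hs 1 : initWeight r s = 0).le

lemma X_pow_mem_weightedDegreeLE_initWeight {s : Fin (r + 1) ⊕ Fin (r + 1)} (hs : s ≠ Sum.inr 0)
    (c : ℕ) : (X s : RecurrenceRing K (r + 1)) ^ c ∈ weightedDegreeLE (initWeight r) 0 := by
  simpa only [mul_zero] using pow_mem_weightedDegreeLE (X_mem_weightedDegreeLE_initWeight hs) c

lemma genSeq_succ_eq (K : Type*) [CommRing K] (r : ℕ) :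
    genSeq K (r + 1) (r + 1) = coeffVar K (r + 1) 0 * X (Sum.inr 0) +
      ∑ i : Fin r, coeffVar K (r + 1) i.succ * X (Sum.inr i.succ) := by
  have hrec := genSeq_isSolution K (r + 1) 0
  rw [zero_add] at hrec
  simp only [hrec, Fin.sum_univ_succ, zero_add, genSeq_of_lt]

lemma exists_genSeqShift_boxMonomial_eq {q : ℕ} (b : Fin (r + 1) ⊕ Fin (r + 1) → Fin q) :
    ∃ W ∈ weightedDegreeLE (initWeight r) 0, ∃ y ∈ weightedDegreeLE (initWeight r) 0,
      boxMonomial K b = W * X (Sum.inr 0) ^ (b (Sum.inr 0) : ℕ) ∧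
      genSeqShift K (r + 1) 1
          (boxMonomial K (b ∘ Equiv.sumCongr (Equiv.refl _) (finRotate (r + 1)))) =
        W * (coeffVar K (r + 1) 0 * X (Sum.inr 0) + y) ^ (b (Sum.inr 0) : ℕ) := by
  refine ⟨(∏ i, X (Sum.inl i) ^ (b (Sum.inl i) : ℕ)) *
      ∏ i : Fin r, X (Sum.inr i.succ) ^ (b (Sum.inr i.succ) : ℕ), ?_,
    ∑ i : Fin r, coeffVar K (r + 1) i.succ * X (Sum.inr i.succ), ?_, ?_, ?_⟩
  · exact mul_mem_weightedDegreeLE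
      (prod_mem_weightedDegreeLE_zero _ fun i _ =>
        X_pow_mem_weightedDegreeLE_initWeight Sum.inl_ne_inr _)
      (prod_mem_weightedDegreeLE_zero _ fun i _ =>
        X_pow_mem_weightedDegreeLE_initWeight (by simp) _) (add_zero 0).le
  · exact sum_mem fun i _ => mul_mem_weightedDegreeLE
      (X_mem_weightedDegreeLE_initWeight Sum.inl_ne_inr)
      (X_mem_weightedDegreeLE_initWeight (by simp)) (add_zero 0).le
  · rw [boxMonomial_eq_prod, Fintype.prod_sum_type, Fin.prod_univ_succ (n := r)
      (fun i => X (Sum.inr i) ^ (b (Sum.inr i) : ℕ))]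
    ring
  · have hlast : genSeqShift K (r + 1) 1 (X (Sum.inr (Fin.last r))) =
        coeffVar K (r + 1) 0 * X (Sum.inr 0) +
          ∑ i : Fin r, coeffVar K (r + 1) i.succ * X (Sum.inr i.succ) := by
      rw [genSeqShift_X_inr, Fin.val_last, add_comm 1, genSeq_succ_eq]
    have hcast (i : Fin r) : genSeqShift K (r + 1) 1 (X (Sum.inr i.castSucc)) =
        X (Sum.inr i.succ) := by
      rw [genSeqShift_X_inr, ← genSeq_of_lt, Fin.val_castSucc, Fin.val_succ, Nat.add_comm i.val]
    rw [boxMonomial_eq_prod, map_prod, Fintype.prod_sum_type, Fin.prod_univ_castSucc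
      (n := r) (fun i => genSeqShift K (r + 1) 1 (X (Sum.inr i) ^
        ((b ∘ Equiv.sumCongr (Equiv.refl _) (finRotate (r + 1))) (Sum.inr i) : ℕ)))]
    simp only [map_pow, hlast, hcast, Function.comp_apply, Equiv.sumCongr_apply, Sum.map_inl,
      Sum.map_inr, Equiv.refl_apply, finRotate_apply, Fin.last_add_one,
      Fin.coeSucc_eq_succ, ← mul_assoc]
    congr! 4 with i
    exact genSeqShift_coeffVar 1 i

lemma expandTrace_coeffVar_zero_mul_genSeqShift_one_boxMonomial {q : ℕ}
    (b : Fin (r + 1) ⊕ Fin (r + 1) → Fin q) :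
    expandTrace q (coeffVar K (r + 1) 0 * genSeqShift K (r + 1) 1 (boxMonomial K b)) =
      coeffVar K (r + 1) 0 * expandTrace q (boxMonomial K b) := by
  classical
  set ρ : Equiv.Perm (Fin (r + 1) ⊕ Fin (r + 1)) :=
    Equiv.sumCongr (Equiv.refl _) (finRotate (r + 1))
  obtain ⟨b, rfl⟩ : ∃ b', b = b' ∘ ρ := ⟨b ∘ ρ.symm, by simp [Function.comp_assoc]⟩
  set a := coeffVar K (r + 1) 0
  have hq : 0 < q := (b (Sum.inl 0)).pos
  obtain ⟨W, hW, y, hy, hbox, hshift⟩ := exists_genSeqShift_boxMonomial_eq (K := K) b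
  set c : ℕ := ↑(b (Sum.inr 0))
  have ha : a ∈ weightedDegreeLE (initWeight r) 0 := X_mem_weightedDegreeLE_initWeight (by simp)
  have hx : a * X (Sum.inr 0) ∈ weightedDegreeLE (initWeight r) 1 :=
    mul_mem_weightedDegreeLE (j := 1) ha (X_mem_weightedDegreeLE (by simp [initWeight])) (by simp)
  rw [hshift, ← mul_assoc, expandTrace_mul_add_pow hq (Pi.single_nonneg.mpr zero_le_one)
    (by simp) (mul_mem_weightedDegreeLE ha hW (add_zero 0).le) hx hy (show c < q from (b _).2)]
  by_cases hcq : c = q - 1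
  · have hfactor : a * W * (a * X (Sum.inr 0)) ^ c = expand q a * boxMonomial K b := by
      have ha_pow : expand q a = a * a ^ (q - 1) := by
        rw [← pow_succ', Nat.sub_add_cancel hq]
        exact expand_X q _
      rw [hbox, ha_pow, hcq]
      ring
    have hiff : (∀ i, ((b ∘ ρ) i : ℕ) = q - 1) ↔ ∀ i, (b i : ℕ) = q - 1 :=
      ρ.forall_congr_right (q := fun i => (b i : ℕ) = q - 1)
    simp only [if_pos hcq, hfactor, expandTrace_expand_mul hq, expandTrace_boxMonomial, hiff]
  · have hne : ¬ ∀ i, ((b ∘ ρ) i : ℕ) = q - 1 := fun h => hcq (by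
      simpa [c, ρ] using h (Sum.inr (Fin.last r)))
    rw [if_neg hcq, expandTrace_boxMonomial, if_neg hne, mul_zero]

lemma expandTrace_coeffVar_zero_mul_genSeqShift_one {p : ℕ} [ExpChar K p] (e : ℕ)
    (f : RecurrenceRing K (r + 1)) :
    expandTrace (p ^ e) (coeffVar K (r + 1) 0 * genSeqShift K (r + 1) 1 f) =
      coeffVar K (r + 1) 0 * genSeqShift K (r + 1) 1 (expandTrace (p ^ e) f) := by
  classical
  have hq : 0 < p ^ e := pow_pos (expChar_pos K p) e
  rw [eq_sum_expand_expandTrace_mul_boxMonomial hq f]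
  simp only [map_sum, Finset.mul_sum]
  refine Finset.sum_congr rfl fun b _ => ?_
  rw [map_mul (genSeqShift K (r + 1) 1), genSeqShift_expand, expandTrace_expand_mul hq,
    map_mul (genSeqShift K (r + 1) 1), mul_left_comm, expandTrace_expand_mul hq,
    expandTrace_coeffVar_zero_mul_genSeqShift_one_boxMonomial, expandTrace_boxMonomial,
    mul_left_comm]
  split_ifs <;> simp

theorem expandTrace_coeffVar_zero_pow_mul_genSeqShift {p : ℕ} [ExpChar K p] (e m : ℕ)
    (f : RecurrenceRing K (r + 1)) :
    expandTrace (p ^ e) (coeffVar K (r + 1) 0 ^ m * genSeqShift K (r + 1) m f) =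
      coeffVar K (r + 1) 0 ^ m * genSeqShift K (r + 1) m (expandTrace (p ^ e) f) := by
  induction m generalizing f with
  | zero => simp only [pow_zero, one_mul, genSeqShift_zero]
  | succ m ih =>
    have hsplit : coeffVar K (r + 1) 0 ^ (m + 1) * genSeqShift K (r + 1) (m + 1) f =
        coeffVar K (r + 1) 0 ^ m * genSeqShift K (r + 1) m
          (coeffVar K (r + 1) 0 * genSeqShift K (r + 1) 1 f) := by
      rw [map_mul, genSeqShift_coeffVar, genSeqShift_add, pow_succ, mul_assoc]
    rw [hsplit, ih, expandTrace_coeffVar_zero_mul_genSeqShift_one, map_mul, genSeqShift_coeffVar,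
      genSeqShift_add, pow_succ, mul_assoc]

end GenSeqShift

section ShiftDegree

/-- The weight whose degree is the degree in the coefficients of the recurrence. -/
def coeffWeight (r : ℕ) : Fin r ⊕ Fin r → ℤ := Sum.elim 1 0

variable {K : Type*} [CommRing K] {r n : ℕ} {i j k : ℤ} {y z : RecurrenceRing K (r + 1)}

lemma coeffVar_mem_coeffWeight (i : Fin r) :
    coeffVar K r i ∈ weightedDegreeLE (coeffWeight r) 1 :=
  X_mem_weightedDegreeLE le_rfl

lemma exists_coeffVar_zero_pow_mul_eq_of_le {k₁ k₂ : ℕ} (hk : k₁ ≤ k₂)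
    {f : RecurrenceRing K (r + 1)}
    (hf : coeffVar K (r + 1) 0 ^ k₁ * z = genSeqShift K (r + 1) n f)
    (hdeg : f ∈ weightedDegreeLE (coeffWeight (r + 1)) (k₁ + j)) :
    ∃ g ∈ weightedDegreeLE (coeffWeight (r + 1)) (k₂ + j),
      coeffVar K (r + 1) 0 ^ k₂ * z = genSeqShift K (r + 1) n g := by
  obtain ⟨k, rfl⟩ := Nat.exists_eq_add_of_le' hk
  refine ⟨coeffVar K (r + 1) 0 ^ k * f,
    mul_mem_weightedDegreeLE (pow_mem_weightedDegreeLE (coeffVar_mem_coeffWeight 0) k) hdeg ?_, ?_⟩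
  · push_cast
    linarith
  · rw [map_mul, map_pow, genSeqShift_coeffVar, ← hf, pow_add, mul_assoc]

/-- The elements of degree at most `j` in the coefficients of the recurrence when these coefficients
and the terms `n, …, n + r` of the generic sequence are used as coordinates. As the earlier terms
are obtained by running the recurrence backwards, the coefficient with index `0`, which has degree
one, has to be inverted. -/
noncomputable def shiftDegreeLE (n : ℕ) (j : ℤ) : Submodule K (RecurrenceRing K (r + 1)) where
  carrier := {z | ∃ k : ℕ, ∃ f ∈ weightedDegreeLE (coeffWeight (r + 1)) (k + j),
    coeffVar K (r + 1) 0 ^ k * z = genSeqShift K (r + 1) n f}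
  zero_mem' := ⟨0, 0, zero_mem _, by simp⟩
  add_mem' := by
    rintro y z ⟨k₁, f, hf, hy⟩ ⟨k₂, g, hg, hz⟩
    obtain ⟨f', hf', hy'⟩ := exists_coeffVar_zero_pow_mul_eq_of_le (le_max_left k₁ k₂) hy hf
    obtain ⟨g', hg', hz'⟩ := exists_coeffVar_zero_pow_mul_eq_of_le (le_max_right k₁ k₂) hz hg
    exact ⟨max k₁ k₂, f' + g', add_mem hf' hg', by rw [mul_add, hy', hz', map_add]⟩
  smul_mem' := by
    rintro c z ⟨k, f, hf, hz⟩
    exact ⟨k, c • f, Submodule.smul_mem _ c hf, by rw [mul_smul_comm, hz, map_smul]⟩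

lemma genSeqShift_mem_shiftDegreeLE {f : RecurrenceRing K (r + 1)}
    (hf : f ∈ weightedDegreeLE (coeffWeight (r + 1)) j) :
    genSeqShift K (r + 1) n f ∈ shiftDegreeLE n j :=
  ⟨0, f, by simpa using hf, by simp⟩

lemma mul_mem_shiftDegreeLE (hy : y ∈ shiftDegreeLE n i) (hz : z ∈ shiftDegreeLE n j)
    (h : i + j ≤ k) : y * z ∈ shiftDegreeLE n k := by
  obtain ⟨k₁, f, hf, hy⟩ := hy
  obtain ⟨k₂, g, hg, hz⟩ := hz
  refine ⟨k₁ + k₂, f * g, mul_mem_weightedDegreeLE hf hg ?_, ?_⟩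
  · push_cast
    linarith
  · rw [map_mul, ← hy, ← hz]
    ring

lemma shiftDegreeLE_mono (h : i ≤ j) :
    shiftDegreeLE (K := K) (r := r) n i ≤ shiftDegreeLE n j := by
  rintro z ⟨k, f, hf, hz⟩
  exact ⟨k, f, weightedDegreeLE_mono (by linarith) hf, hz⟩

lemma mem_shiftDegreeLE_of_coeffVar_zero_pow_mul_mem (k : ℕ)
    (hz : coeffVar K (r + 1) 0 ^ k * z ∈ shiftDegreeLE n (j + k)) : z ∈ shiftDegreeLE n j := by
  obtain ⟨l, f, hf, hz⟩ := hz
  refine ⟨l + k, f, weightedDegreeLE_mono ?_ hf, by rw [← hz, pow_add, mul_assoc]⟩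
  push_cast
  linarith

lemma one_mem_shiftDegreeLE : (1 : RecurrenceRing K (r + 1)) ∈ shiftDegreeLE n 0 := by
  simpa only [map_one] using genSeqShift_mem_shiftDegreeLE (one_mem_weightedDegreeLE le_rfl)

lemma pow_mem_shiftDegreeLE (hz : z ∈ shiftDegreeLE n j) (k : ℕ) :
    z ^ k ∈ shiftDegreeLE n (k * j) := by
  induction k with
  | zero => simpa only [pow_zero, Nat.cast_zero, zero_mul] using one_mem_shiftDegreeLE
  | succ k ih =>
    rw [pow_succ]
    exact mul_mem_shiftDegreeLE ih hz (by push_cast; linarith)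

lemma coeffVar_mem_shiftDegreeLE (i : Fin (r + 1)) :
    coeffVar K (r + 1) i ∈ shiftDegreeLE n 1 := by
  simpa only [genSeqShift_coeffVar] using
    genSeqShift_mem_shiftDegreeLE (n := n) (coeffVar_mem_coeffWeight (K := K) i)

lemma genSeq_mem_shiftDegreeLE {j : ℕ} (hj : j ≤ n + r) :
    genSeq K (r + 1) j ∈ shiftDegreeLE n 0 := by
  induction hm : n + r - j using Nat.strong_induction_on generalizing j with
  | _ m ih =>
    by_cases hnj : n ≤ j
    · obtain ⟨i, rfl⟩ := Nat.exists_eq_add_of_le hnj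
      rw [← genSeqShift_X_inr n (⟨i, by omega⟩ : Fin (r + 1))]
      exact genSeqShift_mem_shiftDegreeLE (X_mem_weightedDegreeLE le_rfl)
    · have hrec : coeffVar K (r + 1) 0 ^ 1 * genSeq K (r + 1) j = genSeq K (r + 1) (j + (r + 1)) -
          ∑ i : Fin r, coeffVar K (r + 1) i.succ * genSeq K (r + 1) (j + i.succ) := by
        rw [genSeq_isSolution K (r + 1) j]
        simp [Fin.sum_univ_succ]
      refine mem_shiftDegreeLE_of_coeffVar_zero_pow_mul_mem 1 ?_
      rw [hrec]
      refine sub_mem (shiftDegreeLE_mono zero_le_one (ih _ ?_ ?_ rfl)) (sum_mem fun i _ =>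
        mul_mem_shiftDegreeLE (coeffVar_mem_shiftDegreeLE i.succ) (ih _ ?_ ?_ rfl) le_rfl)
      all_goals
        try rw [Fin.val_succ]
        omega

lemma genSeqMap_mem_shiftDegreeLE {N : ℕ} (hN : N ≤ n + r + 1) (f : MvPolynomial (Fin N) K) :
    genSeqMap K (r + 1) N f ∈ shiftDegreeLE n 0 := by
  induction f using MvPolynomial.induction_on with
  | C c =>
    rw [← algebraMap_eq, AlgHom.commutes, Algebra.algebraMap_eq_smul_one]
    exact Submodule.smul_mem _ c one_mem_shiftDegreeLE
  | add f g hf hg =>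
    rw [map_add]
    exact add_mem hf hg
  | mul_X f i hf =>
    rw [map_mul]
    refine mul_mem_shiftDegreeLE hf (j := 0) ?_ (zero_add 0).le
    rw [genSeqMap, aeval_X]
    exact genSeq_mem_shiftDegreeLE (by omega)

lemma hankelDet_mem_shiftDegreeLE (r h : ℕ) :
    hankelDet (r + 1) (genSeq K (r + 1)) 0 ∈ shiftDegreeLE (h + (r + 1)) (-(h + 1)) := by
  have hdeg : hankelDet (r + 1) (genSeq K (r + 1)) (h + 1) ∈ shiftDegreeLE (h + (r + 1)) 0 := by
    rw [hankelDet, ← genSeqMap_seqMinor (N := h + (r + 1) + r + 1) fun i k => by omega]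
    exact genSeqMap_mem_shiftDegreeLE le_rfl _
  rw [hankelDet_eq (genSeq_isSolution K (r + 1)), mul_pow, mul_assoc, ← pow_mul] at hdeg
  refine mem_shiftDegreeLE_of_coeffVar_zero_pow_mul_mem (h + 1) ?_
  rw [Nat.cast_add_one, neg_add_cancel]
  rcases neg_one_pow_eq_or (RecurrenceRing K (r + 1)) (r * (h + 1)) with hsign | hsign
  · rwa [hsign, one_mul] at hdeg
  · rwa [hsign, neg_one_mul, neg_mem_iff] at hdeg

lemma genSeqShift_mem_lastRootWeight {N : ℕ} (hN : n + r < N)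
    {f : RecurrenceRing K (r + 1)} (hf : f ∈ weightedDegreeLE (coeffWeight (r + 1)) j) :
    genSeqShift K (r + 1) n f ∈ rootDegreeLE (lastRootWeight (r + 1) N) j := by
  have hcomp : (rootParam K (r + 1)).comp (genSeqShift K (r + 1) n) =
      aeval fun s => rootParam K (r + 1) (genSeqShift K (r + 1) n (X s)) :=
    algHom_ext fun s => by rw [aeval_X, AlgHom.comp_apply]
  rw [mem_rootDegreeLE, ← AlgHom.comp_apply, hcomp]
  refine aeval_mem_weightedDegreeLE (fun s => ?_) hf
  rcases s with i | i
  · have hmem := coeffVar_mem_lastRootWeight (K := K) (N := N) i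
    rw [← genSeqShift_coeffVar n i, coeffVar, mem_rootDegreeLE] at hmem
    exact hmem
  · rw [genSeqShift_X_inr]
    exact genSeq_mem_lastRootWeight (by omega)

theorem expandTrace_mem_lastRootWeight [IsDomain K] {p : ℕ} [ExpChar K p] (e : ℕ) {N : ℕ}
    (hN : n + r < N) (hz : z ∈ shiftDegreeLE n i)
    (hij : i + (n - (r + 1)) * ((p ^ e : ℕ) - 1) < (p ^ e : ℕ) * (j + 1)) :
    expandTrace (p ^ e) z ∈ rootDegreeLE (lastRootWeight (r + 1) N) j := by
  obtain ⟨k, f₀, hf₀, hz₀⟩ := hz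
  have hq : 0 < p ^ e := expChar_pow_pos K p e
  have hexp : expand (p ^ e) (coeffVar K (r + 1) 0) = coeffVar K (r + 1) 0 ^ p ^ e := expand_X _ _
  have htrace := expandTrace_coeffVar_zero_pow_mul_genSeqShift (K := K) (r := r) (p := p) e n
  generalize p ^ e = q at *
  have hle : k + n ≤ q * (k + n) := Nat.le_mul_of_pos_left _ hq
  obtain ⟨f, hf, hz⟩ := exists_coeffVar_zero_pow_mul_eq_of_le
    (show k ≤ q * (k + n) - n by omega) hz₀ hf₀
  have hfactor : coeffVar K (r + 1) 0 ^ (k + n) * expandTrace q z =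
      coeffVar K (r + 1) 0 ^ n * genSeqShift K (r + 1) n (expandTrace q f) := by
    rw [← htrace, ← hz, ← expandTrace_expand_mul hq, map_pow, hexp, ← pow_mul, ← mul_assoc,
      ← pow_add, Nat.add_sub_cancel' (by omega)]
  have hdeg : expandTrace q f ∈ weightedDegreeLE (coeffWeight (r + 1)) (k + j) := by
    refine expandTrace_mem_weightedDegreeLE hq hf ?_
    have hsum : ∑ s, coeffWeight (r + 1) s = r + 1 := by simp [coeffWeight]
    rw [hsum, Nat.cast_sub (by omega)]
    push_cast
    linarith
  refine mem_rootDegreeLE_of_mul_mem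
    (pow_notMem_rootDegreeLE coeffVar_zero_notMem_lastRootWeight (k + n)) ?_
  rw [hfactor]
  refine mul_mem_rootDegreeLE (pow_mem_rootDegreeLE (coeffVar_mem_lastRootWeight 0) n)
    (genSeqShift_mem_lastRootWeight hN hdeg) ?_
  push_cast
  linarith

end ShiftDegree

section Image

variable {K : Type*} [CommRing K] {r N : ℕ}

lemma genSeqMap_mem_lastRootWeight (f : MvPolynomial (Fin N) K) :
    genSeqMap K r N f ∈ rootDegreeLE (lastRootWeight r N) 0 := by
  rw [mem_rootDegreeLE, genSeqMap, comp_aeval_apply]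
  refine aeval_mem_weightedDegreeLE (w := 0) (fun j => genSeq_mem_lastRootWeight j.2) ?_
  rw [mem_weightedDegreeLE]
  intro m _
  rw [weight_eq_sum]
  simp

lemma mem_range_genSeqMap_iff [IsDomain K] {h : ℕ} (hN : N = 2 * r + h)
    {f : RecurrenceRing K r} :
    f ∈ (genSeqMap K r N).range ↔ f ∈ rootDegreeLE (lastRootWeight r N) 0 := by
  refine ⟨?_, fun hf => ?_⟩
  · rintro ⟨a, rfl⟩
    exact genSeqMap_mem_lastRootWeight a
  · subst hN
    refine Algebra.adjoin_le ?_ (mem_adjoin_genSeq K hf)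
    rintro _ ⟨j, hj, rfl⟩
    exact ⟨paddedVar K _ j, genSeqMap_paddedVar hj⟩

lemma constantCoeff_aeval_of_eq_zero {σ τ : Type*} {g : σ → MvPolynomial τ K}
    (hg : ∀ i, constantCoeff (g i) = 0) (f : MvPolynomial σ K) :
    constantCoeff (aeval g f) = constantCoeff f := by
  have hcomp : constantCoeff.comp (aeval g).toRingHom = constantCoeff := by
    ext i
    · simp
    · simpa using hg i
  exact DFunLike.congr_fun hcomp f

lemma constantCoeff_genSeqMap (f : MvPolynomial (Fin N) K) :
    constantCoeff (genSeqMap K r N f) = constantCoeff f :=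
  constantCoeff_aeval_of_eq_zero (fun j : Fin N => genSeq_mem (S := RingHom.ker constantCoeff)
    (fun _ => constantCoeff_X K _) (fun _ _ => Ideal.mul_mem_left _ _) j) f

end Image

section LowerBound

variable {K : Type*} [CommRing K] {p : ℕ} [ExpChar K p] {e r n N : ℕ}

/- Fedder's criterion. -/
lemma mem_frobeniusPower_hankelIdeal_colon_iff {f : MvPolynomial (Fin N) K} :
    f ∈ (frobeniusPower (p ^ e) (hankelIdeal K r n N)).colon (hankelIdeal K r n N : Set _) ↔
      ∀ a ∈ hankelIdeal K r n N, expandTrace (p ^ e) (f * a) ∈ hankelIdeal K r n N := by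
  simp only [Submodule.mem_colon, frobeniusPower_hankelIdeal, SetLike.mem_coe, smul_eq_mul,
    mem_map_expand_iff (expChar_pow_pos K p e)]
  refine ⟨fun h a ha => by simpa using h a ha 1, fun h a ha b => ?_⟩
  rw [mul_left_comm]
  exact h _ (Ideal.mul_mem_left _ b ha)

lemma exists_genSeqMap_expandTrace_mul_eq {G : RecurrenceRing K r}
    (hG : ∀ a, expandTrace (p ^ e) (G * genSeqMap K r N a) ∈ (genSeqMap K r N).range) :
    ∃ f, ∀ a, genSeqMap K r N (expandTrace (p ^ e) (f * a)) =
      expandTrace (p ^ e) (G * genSeqMap K r N a) := by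
  have hq := expChar_pow_pos K p e
  choose g hg using hG
  refine ⟨dualCombination fun b : Fin N → Fin (p ^ e) => g (boxMonomial K b), fun a => ?_⟩
  conv_rhs => rw [eq_sum_expand_expandTrace_mul_boxMonomial hq a]
  rw [expandTrace_dualCombination_mul hq, map_sum, map_sum, Finset.mul_sum, map_sum]
  refine Finset.sum_congr rfl fun b _ => ?_
  rw [map_mul (genSeqMap K r N), map_mul (genSeqMap K r N), genSeqMap_expand, mul_left_comm,
    expandTrace_expand_mul hq, mul_comm]
  exact congrArg _ (hg _)

lemma seqMinor_mem_pow {B : Type*} [CommRing B] {I : Ideal B} {s : ℕ} {x : ℕ → B}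
    {b : Fin s → ℕ} (hx : ∀ i k : Fin s, x (i + b k) ∈ I) : seqMinor x b ∈ I ^ s := by
  rw [seqMinor, det_apply]
  refine sum_mem fun σ _ => ?_
  rw [Units.smul_def]
  refine zsmul_mem ?_ _
  simpa using Ideal.prod_mem_prod (s := Finset.univ) (I := fun _ : Fin s => I)
    fun i _ => hx (σ i) i

lemma paddedVar_mem_idealOfVars (N j : ℕ) : paddedVar K N j ∈ idealOfVars (Fin N) K := by
  unfold paddedVar
  split_ifs
  · exact Ideal.subset_span ⟨_, rfl⟩
  · exact zero_mem _

lemma exists_genSeqMap_eq_hankelDet_pow_mul {h : ℕ} (hN : N = 2 * (r + 1) + h) {k m : ℕ}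
    (hm : m ≤ k * (h + 1)) :
    ∃ z ∈ idealOfVars (Fin N) K ^ ((r + 1) * k), genSeqMap K (r + 1) N z =
      hankelDet (r + 1) (genSeq K (r + 1)) 0 ^ k * coeffVar K (r + 1) 0 ^ m := by
  induction k generalizing m with
  | zero => exact ⟨1, by simp, by simp [Nat.le_zero.mp (hm.trans_eq (zero_mul _))]⟩
  | succ k ih =>
    obtain ⟨l, d, rfl, hl, hd⟩ : ∃ l d, m = l + d ∧ l ≤ k * (h + 1) ∧ d ≤ h + 1 :=
      ⟨m - min m (h + 1), min m (h + 1), by omega, by rw [add_one_mul] at hm; omega, by omega⟩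
    obtain ⟨z, hz, hmap⟩ := ih hl
    refine ⟨z * ((-1) ^ r) ^ d * hankelDet (r + 1) (paddedVar K N) d, ?_, ?_⟩
    · rw [mul_add_one, pow_add]
      exact Ideal.mul_mem_mul (Ideal.mul_mem_right _ _ hz)
        (seqMinor_mem_pow fun _ _ => paddedVar_mem_idealOfVars N _)
    · have hdet : genSeqMap K (r + 1) N (hankelDet (r + 1) (paddedVar K N) d) =
          ((-1) ^ r * coeffVar K (r + 1) 0) ^ d * hankelDet (r + 1) (genSeq K (r + 1)) 0 :=
        (genSeqMap_seqMinor fun i k => by omega).trans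
          (hankelDet_eq (genSeq_isSolution K (r + 1)) d)
      have hsign : (((-1) ^ r) ^ d * ((-1) ^ r) ^ d : RecurrenceRing K (r + 1)) = 1 := by
        rw [← mul_pow, ← mul_pow]
        simp
      rw [map_mul, map_mul, hdet, hmap]
      simp only [map_pow, map_neg, map_one, mul_pow]
      linear_combination (hankelDet (r + 1) (genSeq K (r + 1)) 0 ^ (k + 1) *
        coeffVar K (r + 1) 0 ^ (l + d)) * hsign

lemma expandTrace_hankelDet_pow_mul_mem_range [IsDomain K] {h k b : ℕ}
    (hN : N = 2 * (r + 1) + h) (hk : k ≤ p ^ e - 1) (hb : b + (h + 1) * k ≤ 2 * (p ^ e - 1))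
    (a : MvPolynomial (Fin N) K) :
    expandTrace (p ^ e) (hankelDet (r + 1) (genSeq K (r + 1)) 0 ^ (p ^ e - 1 - k) *
      coeffVar K (r + 1) 0 ^ b * genSeqMap K (r + 1) N a) ∈ (genSeqMap K (r + 1) N).range := by
  rw [mem_range_genSeqMap_iff hN]
  have hq := expChar_pow_pos K p e
  refine expandTrace_mem_lastRootWeight (n := h + (r + 1)) e (by omega)
    (mul_mem_shiftDegreeLE (mul_mem_shiftDegreeLE
      (pow_mem_shiftDegreeLE (hankelDet_mem_shiftDegreeLE r h) (p ^ e - 1 - k))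
      (pow_mem_shiftDegreeLE (coeffVar_mem_shiftDegreeLE 0) b) le_rfl)
      (genSeqMap_mem_shiftDegreeLE (by omega) a) le_rfl) ?_
  generalize p ^ e = q at *
  obtain ⟨s, rfl⟩ : ∃ s, q = s + 1 := ⟨q - 1, by omega⟩
  rw [Nat.add_sub_cancel] at *
  push_cast [Nat.cast_sub hk]
  zify at hb
  linarith

/- The witness is `f * z`, where `f` represents the functional `expandTrace q (D ^ (q - 1 - k) *
a₀ ^ b * ·)` and `z` lifts `D ^ k * a₀ ^ (q - 1 - b)`: it is detected by the coefficient of the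
vector `(q - 1, …, q - 1)` in `D ^ (q - 1) * a₀ ^ (q - 1)`. -/
theorem not_colon_mul_pow_le_frobeniusPower [IsDomain K] {h k : ℕ} (hN : N = 2 * (r + 1) + h)
    (hn : n = h + (r + 1)) (hkq : k ≤ p ^ e - 1)
    (hk : (h + 1) * k ≤ 2 * (p ^ e - 1)) :
    ¬ (frobeniusPower (p ^ e) (hankelIdeal K (r + 1) n N)).colon
        (hankelIdeal K (r + 1) n N : Set _) * idealOfVars (Fin N) K ^ ((r + 1) * k) ≤
      frobeniusPower (p ^ e) (idealOfVars (Fin N) K) := by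
  intro hle
  obtain ⟨b, b', hbb', hb, hb'⟩ : ∃ b b', b + b' = p ^ e - 1 ∧
      b + (h + 1) * k ≤ 2 * (p ^ e - 1) ∧ b' ≤ k * (h + 1) :=
    ⟨p ^ e - 1 - k * (h + 1), min (p ^ e - 1) (k * (h + 1)), by omega,
      by rw [mul_comm k]; omega, by omega⟩
  obtain ⟨f, hf⟩ := exists_genSeqMap_expandTrace_mul_eq
    (expandTrace_hankelDet_pow_mul_mem_range (K := K) hN hkq hb)
  have hcolon : f ∈ (frobeniusPower (p ^ e) (hankelIdeal K (r + 1) n N)).colon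
      (hankelIdeal K (r + 1) n N : Set _) := by
    rw [mem_frobeniusPower_hankelIdeal_colon_iff, hankelIdeal_eq_ker (by omega)]
    intro a ha
    rw [RingHom.mem_ker] at ha ⊢
    exact (hf a).trans (by rw [ha, mul_zero, map_zero])
  obtain ⟨z, hz, hmap⟩ := exists_genSeqMap_eq_hankelDet_pow_mul (K := K) hN hb'
  have hzero := mem_frobeniusPower_idealOfVars_iff.mp (hle (Ideal.mul_mem_mul hcolon hz)) 1
  rw [one_mul, ← constantCoeff_genSeqMap (r := r + 1), hf, hmap, constantCoeff_eq,
    coeff_expandTrace (expChar_pow_pos K p e), smul_zero, zero_add] at hzero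
  have hunit := isUnit_coeff_coeffVar_zero_mul_hankelDet_pow K r (p ^ e - 1)
  refine hunit.ne_zero (Eq.trans (congrArg _ ?_) hzero)
  have hD := pow_mul_pow_sub (hankelDet (r + 1) (genSeq K (r + 1)) 0) hkq
  have ha := pow_add (coeffVar K (r + 1) 0) b b'
  rw [← hD, ← hbb', ha]
  ring

end LowerBound

section Expand

variable {K : Type*} [CommRing K] {p e r N : ℕ}

lemma expand_mem_weightedDegreeLE {σ : Type*} {w : σ → ℤ} {j : ℤ} {f : MvPolynomial σ K} (q : ℕ)
    (hf : f ∈ weightedDegreeLE w j) : expand q f ∈ weightedDegreeLE w (q * j) := by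
  refine aeval_mem_weightedDegreeLE (w := fun i => q * w i)
    (fun i => pow_mem_weightedDegreeLE (X_mem_weightedDegreeLE le_rfl) q) ?_
  rw [mem_weightedDegreeLE] at hf ⊢
  intro m hm
  refine le_of_eq_of_le ?_ (mul_le_mul_of_nonneg_left (hf m hm) (Int.natCast_nonneg q))
  rw [weight_eq_sum_support, weight_eq_sum_support, Finset.mul_sum]
  exact Finset.sum_congr rfl fun i _ => mul_left_comm _ _ _

lemma constantCoeff_rootParam (f : RecurrenceRing K r) :
    constantCoeff (rootParam K r f) = constantCoeff f := by
  refine constantCoeff_aeval_of_eq_zero (Sum.rec (fun i => ?_) fun j => ?_) f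
  · have hne : (i : ℕ) ≠ r := i.2.ne
    rw [Sum.elim_inl, map_rootCoeff]
    simp [rootCoeff, Polynomial.coeff_X_pow, hne]
  · simp

lemma notMem_rootDegreeLE_of_constantCoeff_ne_zero {w : Fin r ⊕ Fin r → ℤ}
    {f : RecurrenceRing K r} (hf : constantCoeff f ≠ 0) : f ∉ rootDegreeLE w (0 - 1) := by
  intro hmem
  rw [← constantCoeff_rootParam, constantCoeff_eq] at hf
  have := mem_weightedDegreeLE.mp hmem 0 hf
  rw [map_zero] at this
  omega

variable [ExpChar K p]

lemma rootCoeff_mem_expandSubring {σ : Type*} {s : Fin r → MvPolynomial σ K}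
    (hs : ∀ k, s k ∈ expandSubring σ p e K) (i : Fin r) :
    rootCoeff s i ∈ expandSubring σ p e K := by
  change iterateFrobenius (MvPolynomial σ K) p e _ = (expand (p ^ e)).toRingHom _
  rw [map_rootCoeff, map_rootCoeff]
  exact congrArg (rootCoeff · i) (funext hs)

lemma rootParam_expand (f : RecurrenceRing K r) :
    rootParam K r (expand (p ^ e) f) = expand (p ^ e) (rootParam K r f) := by
  have hcomp : (rootParam K r).comp (expand (p ^ e)) =
      (expand (p ^ e)).comp (rootParam K r) := by
    ext1 (i | j)
    · rw [AlgHom.comp_apply, AlgHom.comp_apply, expand_X, map_pow]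
      rw [← coeffVar, rootParam_coeffVar]
      exact rootCoeff_mem_expandSubring (fun _ => X_mem_expandSubring _) i
    · rw [AlgHom.comp_apply, AlgHom.comp_apply, expand_X, map_pow, ← genSeq_of_lt,
        rootParam_genSeq]
      exact Subring.sum_mem _ fun k _ => Subring.mul_mem _ (X_mem_expandSubring _)
        (Subring.pow_mem _ (X_mem_expandSubring _) _)
  exact DFunLike.congr_fun hcomp f

lemma expand_mem_rootDegreeLE {w : Fin r ⊕ Fin r → ℤ} {j : ℤ} {f : RecurrenceRing K r}
    (hf : f ∈ rootDegreeLE w j) :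
    expand (p ^ e) f ∈ rootDegreeLE w ((p ^ e : ℕ) * j) := by
  rw [mem_rootDegreeLE, rootParam_expand]
  exact expand_mem_weightedDegreeLE _ hf

lemma map_iterateFrobenius_notMem_rootDegreeLE [IsDomain K] {w : Fin r ⊕ Fin r → ℤ} {j : ℤ}
    {f : RecurrenceRing K r} (hf : f ∉ rootDegreeLE w (j - 1)) :
    MvPolynomial.map (iterateFrobenius K p e) f ∉ rootDegreeLE w (j - 1) := by
  intro hmem
  have hpow := expand_mem_rootDegreeLE (p := p) (e := e) hmem
  rw [← map_expand, map_iterateFrobenius_expand] at hpow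
  have hq := expChar_pow_pos K p e
  refine pow_notMem_rootDegreeLE hf (p ^ e) (rootDegreeLE_mono ?_ hpow)
  rw [mul_sub_one]
  omega

lemma expand_hankelDet_pow (k : ℕ) :
    expand (p ^ e) (hankelDet r (genSeq K r) 0 ^ k) = hankelDet r (genSeq K r) 0 ^ (p ^ e * k) := by
  rw [map_pow, pow_mul]
  exact congrArg (· ^ k) (seqMinor_mem fun _ _ => genSeq_mem_expandSubring _ :
    hankelDet r (genSeq K r) 0 ∈ expandSubring _ p e K).symm

end Expand

section Representation

variable {K : Type*} [CommRing K] {p : ℕ} [ExpChar K p] {e r n N h : ℕ}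

lemma hankelDet_pow_mem_lastRootWeight (hN : N = 2 * (r + 1) + h) (M : ℕ) :
    hankelDet (r + 1) (genSeq K (r + 1)) 0 ^ M ∈
      rootDegreeLE (lastRootWeight (r + 1) N) (M * -(h + 1)) :=
  pow_mem_rootDegreeLE (hN ▸ hankelDet_mem_lastRootWeight r h) M

lemma exists_hankelDet_pow_mul_mem_range [IsDomain K] {ι : Type*} [Finite ι]
    (hN : N = 2 * (r + 1) + h) (z : ι → RecurrenceRing K (r + 1)) :
    ∃ M, ∀ i, hankelDet (r + 1) (genSeq K (r + 1)) 0 ^ M * z i ∈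
      (genSeqMap K (r + 1) N).range := by
  choose j hj using fun i =>
    exists_mem_weightedDegreeLE_natCast (lastRootWeight (r + 1) N) (rootParam K (r + 1) (z i))
  obtain ⟨M, hM⟩ := (Set.finite_range j).bddAbove
  refine ⟨M, fun i => (mem_range_genSeqMap_iff hN).mpr <|
    mul_mem_rootDegreeLE (hankelDet_pow_mem_lastRootWeight hN M)
      (mem_rootDegreeLE.mpr (hj i)) ?_⟩
  have hle : (j i : ℤ) ≤ M := Int.ofNat_le.mpr (hM ⟨i, rfl⟩)
  nlinarith [mul_nonneg (Int.natCast_nonneg M) (Int.natCast_nonneg h)]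

lemma exists_expand_hankelDet_pow_mul_mem_range [IsDomain K] {ι : Type*} [Finite ι]
    (hN : N = 2 * (r + 1) + h) (z : ι → RecurrenceRing K (r + 1)) :
    ∃ M, ∀ i, expand (p ^ e) (hankelDet (r + 1) (genSeq K (r + 1)) 0 ^ M) * z i ∈
      (genSeqMap K (r + 1) N).range := by
  obtain ⟨M, hM⟩ := exists_hankelDet_pow_mul_mem_range hN z
  refine ⟨M, fun i => ?_⟩
  obtain ⟨s, hs⟩ : ∃ s, p ^ e = s + 1 :=
    ⟨_, (Nat.sub_add_cancel (expChar_pow_pos K p e)).symm⟩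
  rw [expand_hankelDet_pow, hs, add_one_mul, pow_add, mul_assoc]
  refine mul_mem ((mem_range_genSeqMap_iff hN).mpr ?_) (hM i)
  refine rootDegreeLE_mono ?_ (hankelDet_pow_mem_lastRootWeight hN _)
  exact mul_nonpos_of_nonneg_of_nonpos (by positivity) (by omega)

lemma genSeqMap_expandTrace_mul_eq_of_eq {f a b : MvPolynomial (Fin N) K} (hN : N = n + r)
    (hf : f ∈ (frobeniusPower (p ^ e) (hankelIdeal K r n N)).colon (hankelIdeal K r n N : Set _))
    (hab : genSeqMap K r N a = genSeqMap K r N b) :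
    genSeqMap K r N (expandTrace (p ^ e) (f * a)) =
      genSeqMap K r N (expandTrace (p ^ e) (f * b)) := by
  rw [mem_frobeniusPower_hankelIdeal_colon_iff, hankelIdeal_eq_ker hN] at hf
  have hker := hf (a - b) (by rw [RingHom.mem_ker, map_sub, hab, sub_self])
  rwa [RingHom.mem_ker, mul_sub, map_sub, map_sub, sub_eq_zero] at hker

lemma expandTrace_mul_pow_mul_pow (G : RecurrenceRing K (r + 1)) (a b : ℕ) :
    expandTrace (p ^ e) (G * (G ^ (p ^ e - 1) * (coeffVar K (r + 1) 0 ^ (p ^ e - 1 + p ^ e * a) *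
      hankelDet (r + 1) (genSeq K (r + 1)) 0 ^ (p ^ e - 1 + p ^ e * b)))) =
    MvPolynomial.map (iterateFrobenius K p e) G * (coeffVar K (r + 1) 0 ^ a *
      hankelDet (r + 1) (genSeq K (r + 1)) 0 ^ b) *
      expandTrace (p ^ e) (coeffVar K (r + 1) 0 ^ (p ^ e - 1) *
        hankelDet (r + 1) (genSeq K (r + 1)) 0 ^ (p ^ e - 1)) := by
  have hq := expChar_pow_pos K p e
  rw [← expandTrace_expand_mul hq, map_mul (expand (p ^ e)), map_mul (expand (p ^ e)),
    expand_hankelDet_pow, map_pow, coeffVar, expand_X, ← pow_mul, ← map_expand,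
    map_iterateFrobenius_expand, ← mul_pow_sub_one hq.ne' G]
  congr 1
  ring

variable [IsDomain K]

/- After inverting the Hankel determinant, the parametrized ring contains the whole recurrence
ring, whose box monomials then determine the functional. -/
lemma exists_expandTrace_mul_eq_hankelDet_pow_mul {f : MvPolynomial (Fin N) K}
    (hN : N = 2 * (r + 1) + h) (hn : n = h + (r + 1))
    (hf : f ∈ (frobeniusPower (p ^ e) (hankelIdeal K (r + 1) n N)).colon
      (hankelIdeal K (r + 1) n N : Set _)) :
    ∃ M G, ∀ a, expandTrace (p ^ e) (G * genSeqMap K (r + 1) N a) =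
      hankelDet (r + 1) (genSeq K (r + 1)) 0 ^ M *
        genSeqMap K (r + 1) N (expandTrace (p ^ e) (f * a)) := by
  have hq := expChar_pow_pos K p e
  set D := hankelDet (r + 1) (genSeq K (r + 1)) 0
  have hD : genSeqMap K (r + 1) N (hankelDet (r + 1) (paddedVar K N) 0) = D :=
    genSeqMap_seqMinor fun i k => by omega
  obtain ⟨M, hM⟩ := exists_expand_hankelDet_pow_mul_mem_range (p := p) (e := e) hN
    fun b : Fin (r + 1) ⊕ Fin (r + 1) → Fin (p ^ e) => boxMonomial K b
  choose β hβ using hM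
  replace hβ b : genSeqMap K (r + 1) N (β b) = _ := hβ b
  refine ⟨M, dualCombination fun b => genSeqMap K (r + 1) N (expandTrace (p ^ e) (f * β b)),
    fun a => ?_⟩
  obtain ⟨m, hm⟩ := exists_hankelDet_pow_mul_mem_range hN
    fun b : Fin (r + 1) ⊕ Fin (r + 1) → Fin (p ^ e) =>
      expandTrace (p ^ e) (dualBoxMonomial K b * genSeqMap K (r + 1) N a)
  choose γ hγ using hm
  replace hγ b : genSeqMap K (r + 1) N (γ b) = _ := hγ b
  have hlift : genSeqMap K (r + 1) N (∑ b, expand (p ^ e) (γ b) * β b) =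
      genSeqMap K (r + 1) N
        (expand (p ^ e) (hankelDet (r + 1) (paddedVar K N) 0 ^ (m + M)) * a) := by
    rw [map_mul (genSeqMap K (r + 1) N), genSeqMap_expand, map_pow (genSeqMap K (r + 1) N), hD,
      pow_add, map_mul (expand (p ^ e)), map_sum,
      eq_sum_expand_expandTrace_mul_boxMonomial hq (genSeqMap K (r + 1) N a), Finset.mul_sum]
    refine Finset.sum_congr rfl fun b _ => ?_
    rw [map_mul (genSeqMap K (r + 1) N), genSeqMap_expand, hγ b,
      hβ b, map_mul (expand (p ^ e)), mul_mul_mul_comm]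
  have hΦ := genSeqMap_expandTrace_mul_eq_of_eq (by omega) hf hlift
  rw [Finset.mul_sum, map_sum, map_sum, mul_left_comm, expandTrace_expand_mul hq,
    map_mul (genSeqMap K (r + 1) N), map_pow (genSeqMap K (r + 1) N), hD, pow_add, mul_assoc] at hΦ
  rw [expandTrace_dualCombination_mul hq]
  refine mul_left_cancel₀ (pow_ne_zero m (hankelDet_ne_zero (K := K) (r + 1))) (Eq.trans ?_ hΦ)
  rw [Finset.mul_sum]
  refine Finset.sum_congr rfl fun b _ => ?_
  rw [mul_left_comm f, expandTrace_expand_mul hq, map_mul (genSeqMap K (r + 1) N), hγ b,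
    mul_left_comm, mul_comm]

lemma exists_natCast_sub_mul_eq (c : ℕ) (x : ℤ) :
    ∃ a b : ℕ, (a : ℤ) - (c + 1) * b = x := by
  have hnonneg : 0 ≤ x + (c + 1) * x.natAbs := by
    nlinarith [neg_abs_le x, Int.natCast_natAbs x, mul_nonneg (Int.natCast_nonneg c) (abs_nonneg x)]
  exact ⟨(x + (c + 1) * x.natAbs).toNat, x.natAbs, by rw [Int.toNat_of_nonneg hnonneg]; ring⟩

lemma expandTrace_coeffVar_zero_mul_hankelDet_pow_notMem (w : Fin (r + 1) ⊕ Fin (r + 1) → ℤ) :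
    expandTrace (p ^ e) (coeffVar K (r + 1) 0 ^ (p ^ e - 1) *
      hankelDet (r + 1) (genSeq K (r + 1)) 0 ^ (p ^ e - 1)) ∉ rootDegreeLE w (0 - 1) := by
  refine notMem_rootDegreeLE_of_constantCoeff_ne_zero ?_
  rw [constantCoeff_eq, coeff_expandTrace (expChar_pow_pos K p e), smul_zero, zero_add]
  exact (isUnit_coeff_coeffVar_zero_mul_hankelDet_pow K r (p ^ e - 1)).ne_zero

/- If the top degree `g` of `G` were too large, then `y = G ^ (q - 1) * a₀ ^ (q - 1 + q * a) *
D ^ (q - 1 + q * b)`, for suitable `a` and `b`, would have degree at most zero while the trace of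
`G * y` has degree more than `j`. -/
lemma mem_rootDegreeLE_of_expandTrace_mul_mem (hN : N = 2 * (r + 1) + h)
    {G : RecurrenceRing K (r + 1)} {j : ℤ}
    (hG : ∀ y ∈ rootDegreeLE (lastRootWeight (r + 1) N) 0,
      expandTrace (p ^ e) (G * y) ∈ rootDegreeLE (lastRootWeight (r + 1) N) j) :
    G ∈ rootDegreeLE (lastRootWeight (r + 1) N)
      ((p ^ e : ℕ) * j - (h - 1) * ((p ^ e - 1 : ℕ) : ℤ)) := by
  by_contra hmem
  have hG0 : G ≠ 0 := fun h0 => hmem (h0 ▸ zero_mem _)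
  obtain ⟨g, hg, hg'⟩ := exists_mem_rootDegreeLE_notMem_pred (lastRootWeight (r + 1) N) hG0
  have hlt : (p ^ e : ℕ) * j - (h - 1) * ((p ^ e - 1 : ℕ) : ℤ) < g :=
    lt_of_not_ge fun hle => hmem (rootDegreeLE_mono hle hg)
  obtain ⟨a, b, hab⟩ := exists_natCast_sub_mul_eq h (j + 1 - g)
  have hq : ((p ^ e : ℕ) : ℤ) = (p ^ e - 1 : ℕ) + 1 := by
    have := expChar_pow_pos K p e
    omega
  have hy := hG _ <| mul_mem_rootDegreeLE (k := 0) (pow_mem_rootDegreeLE hg (p ^ e - 1))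
    (mul_mem_rootDegreeLE
      (pow_mem_rootDegreeLE (coeffVar_mem_lastRootWeight 0) (p ^ e - 1 + p ^ e * a))
      (hankelDet_pow_mem_lastRootWeight hN (p ^ e - 1 + p ^ e * b)) le_rfl) <| by
    push_cast only [Nat.cast_add, Nat.cast_mul, hq] at hlt ⊢
    have := congrArg (((p ^ e - 1 : ℕ) + 1 : ℤ) * ·) hab
    linarith
  rw [expandTrace_mul_pow_mul_pow] at hy
  refine mul_notMem_rootDegreeLE (mul_notMem_rootDegreeLE
    (map_iterateFrobenius_notMem_rootDegreeLE hg') (mul_notMem_rootDegreeLE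
      (pow_notMem_rootDegreeLE coeffVar_zero_notMem_lastRootWeight a)
      (pow_notMem_rootDegreeLE (hN ▸ hankelDet_notMem_lastRootWeight r h) b)))
    (expandTrace_coeffVar_zero_mul_hankelDet_pow_notMem _) (rootDegreeLE_mono ?_ hy)
  linarith

lemma hankelDet_pow_dvd (hN : N = 2 * (r + 1) + h) {G : RecurrenceRing K (r + 1)} {j : ℤ} {s : ℕ}
    (hG : G ∈ rootDegreeLE (lastRootWeight (r + 1) N) j) (hj : j + (h + 1) * s ≤ h) :
    hankelDet (r + 1) (genSeq K (r + 1)) 0 ^ s ∣ G := by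
  induction s generalizing G j with
  | zero => exact one_dvd _
  | succ s ih =>
    push_cast at hj
    obtain ⟨G', rfl⟩ := hankelDet_dvd (rootDegreeLE_mono (j := -1) (by nlinarith) hG)
    rw [pow_succ']
    refine mul_dvd_mul_left _ (ih (j := j + (h + 1)) ?_ (by linarith))
    exact mem_rootDegreeLE_of_mul_mem (hN ▸ hankelDet_notMem_lastRootWeight r h)
      (rootDegreeLE_mono (by linarith) hG)

lemma exists_expandTrace_hankelDet_pow_mul_eq {f : MvPolynomial (Fin N) K} {k : ℕ}
    (hN : N = 2 * (r + 1) + h) (hn : n = h + (r + 1)) (hkq : k ≤ p ^ e - 1)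
    (hk : 2 * (p ^ e - 1) < (h + 1) * (k + 1))
    (hf : f ∈ (frobeniusPower (p ^ e) (hankelIdeal K (r + 1) n N)).colon
      (hankelIdeal K (r + 1) n N : Set _)) :
    ∃ G, ∀ a, genSeqMap K (r + 1) N (expandTrace (p ^ e) (f * a)) =
      expandTrace (p ^ e) (hankelDet (r + 1) (genSeq K (r + 1)) 0 ^ (p ^ e - 1 - k) * G *
        genSeqMap K (r + 1) N a) := by
  have hq := expChar_pow_pos K p e
  obtain ⟨M, G, hG⟩ := exists_expandTrace_mul_eq_hankelDet_pow_mul hN hn hf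
  have hdeg := mem_rootDegreeLE_of_expandTrace_mul_mem (p := p) (e := e) hN (G := G)
    (j := M * -(h + 1)) fun y hy => by
      obtain ⟨a, rfl⟩ := (mem_range_genSeqMap_iff hN).mpr hy
      exact hG a ▸ mul_mem_rootDegreeLE (hankelDet_pow_mem_lastRootWeight hN M)
        (genSeqMap_mem_lastRootWeight _) (add_zero _).le
  obtain ⟨G', rfl⟩ := hankelDet_pow_dvd hN (s := p ^ e * M + (p ^ e - 1 - k)) hdeg <| by
    generalize p ^ e = q at *
    obtain ⟨s, rfl⟩ : ∃ s, q = s + 1 := ⟨q - 1, by omega⟩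
    rw [Nat.add_sub_cancel] at *
    zify at hk
    push_cast [Nat.cast_sub hkq]
    linarith
  refine ⟨G', fun a => mul_left_cancel₀ (pow_ne_zero M (hankelDet_ne_zero (K := K) (r + 1))) ?_⟩
  rw [← hG, ← expandTrace_expand_mul hq, expand_hankelDet_pow, pow_add]
  simp only [mul_assoc]

end Representation

section UpperBound

variable {K : Type*} [CommRing K] {p : ℕ} [ExpChar K p] {e r n N h : ℕ}

lemma genSeq_mem_weightedDegreeLE_neg_ampWeight (j : ℕ) :
    genSeq K r j ∈ weightedDegreeLE (-ampWeight r) (-1) :=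
  genSeq_mem (fun i => X_mem_weightedDegreeLE (by simp [ampWeight]))
    (fun i _ hx => mul_mem_weightedDegreeLE
      (X_mem_weightedDegreeLE (j := 0) (by simp [ampWeight])) hx (by simp)) j

lemma hankelDet_mem_weightedDegreeLE_neg_ampWeight (r : ℕ) :
    hankelDet r (genSeq K r) 0 ∈ weightedDegreeLE (-ampWeight r) (r * -1) :=
  det_mem_weightedDegreeLE fun _ _ => genSeq_mem_weightedDegreeLE_neg_ampWeight _

lemma genSeqMap_mem_weightedDegreeLE_neg_ampWeight {f : MvPolynomial (Fin N) K} {k : ℕ}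
    (hf : f ∈ idealOfVars (Fin N) K ^ k) :
    genSeqMap K r N f ∈ weightedDegreeLE (-ampWeight r) (-k) := by
  refine aeval_mem_weightedDegreeLE (w := fun _ => -1)
    (fun j => genSeq_mem_weightedDegreeLE_neg_ampWeight j) (mem_weightedDegreeLE.mpr ?_)
  intro m hm
  have hle : k ≤ m.degree := by
    by_contra! hlt
    exact hm ((mem_pow_idealOfVars_iff' k f).mp hf m hlt)
  rw [weight_eq_sum, ← Finset.sum_mul, mul_neg_one, ← Nat.cast_sum, neg_le_neg_iff, Nat.cast_le]
  rwa [Finsupp.degree_eq_sum] at hle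

lemma mem_weightedDegreeLE_neg_ampWeight_zero (f : RecurrenceRing K r) :
    f ∈ weightedDegreeLE (-ampWeight r) 0 := by
  rw [mem_weightedDegreeLE]
  intro m _
  rw [weight_eq_sum]
  refine Finset.sum_nonpos fun i _ =>
    mul_nonpos_of_nonneg_of_nonpos (Int.natCast_nonneg _) (neg_nonpos.mpr ?_)
  cases i <;> simp [ampWeight]

theorem colon_mul_pow_le_frobeniusPower [IsDomain K] {k : ℕ} (hN : N = 2 * (r + 1) + h)
    (hn : n = h + (r + 1)) (hkq : k ≤ p ^ e - 1) (hk : 2 * (p ^ e - 1) < (h + 1) * (k + 1)) :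
    (frobeniusPower (p ^ e) (hankelIdeal K (r + 1) n N)).colon
        (hankelIdeal K (r + 1) n N : Set _) * idealOfVars (Fin N) K ^ ((r + 1) * k + 1) ≤
      frobeniusPower (p ^ e) (idealOfVars (Fin N) K) := by
  refine Ideal.mul_le.mpr fun f hf z hz => mem_frobeniusPower_idealOfVars_iff.mpr fun a => ?_
  obtain ⟨G, hG⟩ := exists_expandTrace_hankelDet_pow_mul_eq hN hn hkq hk hf
  rw [mul_left_comm, ← constantCoeff_genSeqMap (r := r + 1), hG, constantCoeff_eq,
    coeff_expandTrace (expChar_pow_pos K p e), smul_zero, zero_add]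
  by_contra hne
  have hdeg := mem_weightedDegreeLE.mp (mul_mem_weightedDegreeLE (mul_mem_weightedDegreeLE
    (pow_mem_weightedDegreeLE (hankelDet_mem_weightedDegreeLE_neg_ampWeight (r + 1)) _)
    (mem_weightedDegreeLE_neg_ampWeight_zero G) le_rfl)
    (genSeqMap_mem_weightedDegreeLE_neg_ampWeight (Ideal.mul_mem_left _ a hz)) le_rfl) _ hne
  rw [weight_eq_sum, Fintype.sum_sum_type] at hdeg
  simp only [constExponent_apply, ampWeight, Pi.neg_apply, Sum.elim_inl, Sum.elim_inr,
    Pi.zero_apply, Pi.one_apply, neg_zero, mul_zero, Finset.sum_const, Finset.card_univ,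
    Fintype.card_fin, nsmul_eq_mul, zero_add, add_zero] at hdeg
  push_cast [Nat.cast_sub hkq] at hdeg
  linarith

end UpperBound

lemma tendsto_natCast_mul_sub_one_div_div (c d : ℕ) {q : ℕ → ℕ} (hq : Tendsto q atTop atTop) :
    Tendsto (fun e => ((c * (q e - 1) / d : ℕ) : ℝ) / q e) atTop (nhds (c / d)) := by
  have hsub : Tendsto (fun e => ((q e - 1 : ℕ) : ℝ)) atTop atTop :=
    tendsto_natCast_atTop_atTop.comp ((tendsto_sub_atTop_nat 1).comp hq)
  have hfloor := (tendsto_nat_floor_mul_div_atTop (a := (c / d : ℝ)) (by positivity)).comp hsub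
  have hratio : Tendsto (fun e => ((q e - 1 : ℕ) : ℝ) / q e) atTop (nhds 1) := by
    refine (tendsto_congr' ?_).mpr (sub_zero (1 : ℝ) ▸ tendsto_const_nhds.sub
      (tendsto_inv_atTop_zero.comp (tendsto_natCast_atTop_atTop.comp hq)))
    filter_upwards [hq.eventually_gt_atTop 0] with e he
    rw [Function.comp_apply, Function.comp_apply, Nat.cast_pred he]
    field_simp
  refine (mul_one (c / d : ℝ) ▸ hfloor.mul hratio).congr' ?_
  filter_upwards [hq.eventually_gt_atTop 1] with e he
  have hne : ((q e - 1 : ℕ) : ℝ) ≠ 0 := Nat.cast_ne_zero.mpr (by omega)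
  rw [Function.comp_apply, div_mul_div_cancel₀ hne, div_mul_eq_mul_div, ← Nat.cast_mul,
    Nat.floor_div_eq_div]

lemma span_det_submatrix_eq_hankelIdeal {K : Type*} [CommRing K] {r n N : ℕ} (hN : n + r ≤ N)
    {H : Matrix (Fin (r + 1)) (Fin n) (MvPolynomial (Fin N) K)}
    (hH : ∀ a b, H a b = X ⟨a + b, by omega⟩) :
    Ideal.span (Set.range fun g : Fin (r + 1) → Fin n => (H.submatrix id g).det) =
      hankelIdeal K r n N := by
  refine congrArg (fun s => Ideal.span (Set.range s)) (funext fun g => congrArg det ?_)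
  ext1 a b
  have hlt : (a + g b : ℕ) < N := by omega
  rw [submatrix_apply, hH, of_apply, paddedVar, dif_pos hlt]
  rfl

end Hankel

theorem hankel_fpt_maximal_ideal_general (K : Type*) [CommRing K] [IsDomain K] (p t n : ℕ)
    [CharP K p] (hp : p.Prime) (ht : 2 ≤ t) (htn : t ≤ n)
    (H : Matrix (Fin t) (Fin n) (MvPolynomial (Fin (n + t - 1)) K))
    (hH : ∀ (a : Fin t) (b : Fin n) (hab : (a : ℕ) + (b : ℕ) < n + t - 1), H a b = X ⟨a + b, hab⟩)
    (I : Ideal (MvPolynomial (Fin (n + t - 1)) K))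
    (hI : I = Ideal.span (Set.range fun g : Fin t → Fin n => (H.submatrix id g).det))
    (m : Ideal (MvPolynomial (Fin (n + t - 1)) K))
    (hm : m = Ideal.span (Set.range X))
    (ν : ℕ → ℕ) (hν : ∀ e, ν e = (t - 1) * (2 * (p ^ e - 1) / (n - t + 2))) :
    (∀ e : ℕ,
      ¬ (Submodule.colon (frobeniusPower (p ^ e) I) I * m ^ (ν e)
          ≤ frobeniusPower (p ^ e) m) ∧
      Submodule.colon (frobeniusPower (p ^ e) I) I * m ^ (ν e + 1)
          ≤ frobeniusPower (p ^ e) m) ∧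
    Tendsto (fun e : ℕ => (ν e : ℝ) / (p ^ e : ℝ)) atTop
      (nhds ((2 * ((t : ℝ) - 1)) / ((n : ℝ) - (t : ℝ) + 2))) := by
  obtain ⟨r, rfl⟩ := Nat.exists_eq_add_of_le' ht
  obtain ⟨h, rfl⟩ := Nat.exists_eq_add_of_le htn
  have : ExpChar K p := ExpChar.prime hp
  have hN : r + 2 + h + (r + 2) - 1 = 2 * (r + 1) + (h + 1) := by omega
  have hn : r + 2 + h = h + 1 + (r + 1) := by omega
  have hd : r + 2 + h - (r + 2) + 2 = h + 1 + 1 := by omega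
  obtain rfl := hI.trans (Hankel.span_det_submatrix_eq_hankelIdeal (by omega) fun a b => hH a b _)
  obtain rfl := hm
  simp only [hd, Nat.add_succ_sub_one] at hν
  have hkq e : 2 * (p ^ e - 1) / (h + 1 + 1) ≤ p ^ e - 1 :=
    Nat.div_le_of_le_mul (Nat.mul_le_mul_right _ (by omega))
  refine ⟨fun e => ⟨?_, ?_⟩, ?_⟩
  · rw [hν]
    exact Hankel.not_colon_mul_pow_le_frobeniusPower hN hn (hkq e) (Nat.mul_div_le _ _)
  · rw [hν]
    exact Hankel.colon_mul_pow_le_frobeniusPower hN hn (hkq e)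
      (Nat.lt_mul_div_succ _ (Nat.succ_pos _))
  · convert (Hankel.tendsto_natCast_mul_sub_one_div_div 2 (h + 1 + 1)
      (tendsto_pow_atTop_atTop_of_one_lt hp.one_lt)).const_mul ((r + 1 : ℕ) : ℝ) using 2 with e
    · rw [hν, Nat.cast_mul, mul_div_assoc, Nat.cast_pow]
    · push_cast
      ring

/-- The `F`-pure threshold of the homogeneous maximal ideal of the `t×n` Hankel determinantal
ring `R` equals `2(t-1)/(n-t+2)`; more precisely, for each `q = p^e` one has
`ν_e(m_R) = (t-1)·⌊2(q-1)/(n-t+2)⌋`, where `ν_e(m_R)` is the largest `r` with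
`(I^{[q]} :_A I)·J^r ⊄ m_A^{[q]}` (here `J = m_A` is the preimage of `m_R`). -/
theorem hankel_fpt_maximal_ideal (F : Type*) [Field F] (p t n : ℕ) [CharP F p]
    (hp : p.Prime) (ht : 2 ≤ t) (htn : t ≤ n)
    (H : Matrix (Fin t) (Fin n) (MvPolynomial (Fin (n + t - 1)) F))
    (hH : ∀ a b, H a b = X ⟨(a : ℕ) + (b : ℕ), by have := a.2; have := b.2; omega⟩)
    (I : Ideal (MvPolynomial (Fin (n + t - 1)) F))
    (hI : I = Ideal.span (Set.range fun g : Fin t → Fin n => (H.submatrix id g).det))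
    (m : Ideal (MvPolynomial (Fin (n + t - 1)) F))
    (hm : m = Ideal.span (Set.range X))
    (ν : ℕ → ℕ) (hν : ∀ e, ν e = (t - 1) * (2 * (p ^ e - 1) / (n - t + 2))) :
    (∀ e : ℕ,
      ¬ (Submodule.colon (frobeniusPower (p ^ e) I) I * m ^ (ν e)
          ≤ frobeniusPower (p ^ e) m) ∧
      Submodule.colon (frobeniusPower (p ^ e) I) I * m ^ (ν e + 1)
          ≤ frobeniusPower (p ^ e) m) ∧
    Tendsto (fun e : ℕ => (ν e : ℝ) / (p ^ e : ℝ)) atTop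
      (nhds ((2 * ((t : ℝ) - 1)) / ((n : ℝ) - (t : ℝ) + 2))) := by
  exact hankel_fpt_maximal_ideal_general F p t n hp ht htn H (fun a b _ => hH a b) I hI m hm ν hν
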